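/- arXiv:1702.00914 — 2 statements merged into one kernel-verified Lean document; each statement's English description precedes it below -/
import Mathlib

section
/- Let G be a finite simple graph that is 2K2-free and has maximum degree Δ(G) ≥ 5. Then the chromatic number of G satisfies χ(G) ≤ max{Δ(G) − 1, ω(G)}, where ω(G) is the clique number of G. -/
/-- A simple graph is `2K2`-free if it has no four distinct vertices `a b c d` with
`ab` and `cd` edges and none of `ac, ad, bc, bd` an edge. -/
def TwoK2Free {V : Type*} (G : SimpleGraph V) : Prop :=
  ¬ ∃ a b c d : V, a ≠ b ∧ a ≠ c ∧ a ≠ d ∧ b ≠ c ∧ b ≠ d ∧ c ≠ d ∧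
      G.Adj a b ∧ G.Adj c d ∧ ¬ G.Adj a c ∧ ¬ G.Adj a d ∧ ¬ G.Adj b c ∧ ¬ G.Adj b d

open Classical in
/-- Four independent sets covering all vertices give a 4-colouring. -/
lemma colorable_four_of_cover {V : Type*} (G : SimpleGraph V) (I0 I1 I2 I3 : Set V)
    (h0 : ∀ x ∈ I0, ∀ y ∈ I0, ¬ G.Adj x y) (h1 : ∀ x ∈ I1, ∀ y ∈ I1, ¬ G.Adj x y)
    (h2 : ∀ x ∈ I2, ∀ y ∈ I2, ¬ G.Adj x y) (h3 : ∀ x ∈ I3, ∀ y ∈ I3, ¬ G.Adj x y)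
    (hc : ∀ x, x ∈ I0 ∨ x ∈ I1 ∨ x ∈ I2 ∨ x ∈ I3) : G.Colorable 4 := by
  refine ⟨SimpleGraph.Coloring.mk
    (fun x => if x ∈ I0 then (0 : Fin 4) else if x ∈ I1 then 1 else if x ∈ I2 then 2 else 3) ?_⟩
  intro x y hxy
  have hx := hc x
  have hy := hc y
  have a0 := h0 x
  have a1 := h1 x
  have a2 := h2 x
  have a3 := h3 x
  split_ifs <;> first | decide | (intro _; grind)

/-- A `2K2`-free, triangle-free and `C5`-free set of vertices is bipartite. -/
lemma bipartite_of_no_triangle_no_c5 {V : Type*} (G : SimpleGraph V)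
    (h2 : ∀ a b c d, G.Adj a b → G.Adj c d →
      G.Adj a c ∨ G.Adj a d ∨ G.Adj b c ∨ G.Adj b d) (W : Set V)
    (htri : ¬ ∃ a ∈ W, ∃ b ∈ W, ∃ c ∈ W, G.Adj a b ∧ G.Adj b c ∧ G.Adj a c)
    (hc5 : ¬ ∃ c : Fin 5 → V, (∀ i, c i ∈ W) ∧ (∀ i, G.Adj (c i) (c (i + 1))) ∧
      ∀ i, ¬ G.Adj (c i) (c (i + 2))) :
    ∃ I J : Set V, (∀ x ∈ I, ∀ y ∈ I, ¬ G.Adj x y) ∧ (∀ x ∈ J, ∀ y ∈ J, ¬ G.Adj x y) ∧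
      (∀ x, x ∈ W → x ∈ I ∨ x ∈ J) ∧ (∀ x ∈ I, x ∈ W) ∧ (∀ x ∈ J, x ∈ W) := by
  by_cases he : ∃ u ∈ W, ∃ v ∈ W, G.Adj u v
  · obtain ⟨u, hu, v, hv, huv⟩ := he
    have hn5 : ∀ p y q, p ∈ W → y ∈ W → q ∈ W → G.Adj u p → G.Adj p y → G.Adj y q → G.Adj q v →
        G.Adj u y ∨ G.Adj v y := by
      intro p y q hp hy hq h1 h2 h3 h4
      by_contra hcon
      push Not at hcon
      apply hc5
      have e1 : ¬ G.Adj u q := fun h => htri ⟨u, hu, q, hq, v, hv, h, h4, huv⟩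
      have e2 : ¬ G.Adj p q := fun h => htri ⟨p, hp, y, hy, q, hq, h2, h3, h⟩
      have e3 : ¬ G.Adj p v := fun h => htri ⟨u, hu, p, hp, v, hv, h1, h, huv⟩
      refine ⟨![u, p, y, q, v], ?_, ?_, ?_⟩
      · intro i; fin_cases i <;> simp_all
      · intro i; fin_cases i <;> simp_all [G.adj_comm]
      · intro i; fin_cases i <;> simp_all [G.adj_comm]
    have htri' : ∀ a b c, a ∈ W → b ∈ W → c ∈ W → G.Adj a b → G.Adj b c → ¬ G.Adj a c :=
      fun a b c ha hb hc h1 h2 h3 => htri ⟨a, ha, b, hb, c, hc, h1, h2, h3⟩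
    refine ⟨{x | x ∈ W ∧ (G.Adj u x ∨ (¬ G.Adj v x ∧ ∀ p ∈ W, G.Adj u p → ¬ G.Adj p x))},
      {x | x ∈ W ∧ ¬ (G.Adj u x ∨ (¬ G.Adj v x ∧ ∀ p ∈ W, G.Adj u p → ¬ G.Adj p x))}, ?_, ?_, ?_,
      fun x hx => hx.1, fun x hx => hx.1⟩
    · rintro x ⟨hx, hx'⟩ y ⟨hy, hy'⟩ hxy
      have := htri' u x y hu hx hy
      have := h2 u v x y huv hxy
      have := G.adj_comm x y
      grind
    · rintro x ⟨hx, hx'⟩ y ⟨hy, hy'⟩ hxy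
      have := htri' v x y hv hx hy
      have := h2 u v x y huv hxy
      have hs := G.adj_comm
      push Not at hx' hy'
      by_cases h1 : G.Adj v x
      · by_cases h3 : G.Adj v y
        · grind
        · obtain ⟨p, hp, hp1, hp2⟩ := hy'.2 h3
          have := hn5 p y x hp hy hx hp1 hp2 hxy.symm h1.symm
          grind
      · by_cases h3 : G.Adj v y
        · obtain ⟨p, hp, hp1, hp2⟩ := hx'.2 h1
          have := hn5 p x y hp hx hy hp1 hp2 hxy h3.symm
          grind
        · grind
    · intro x hx
      by_cases h : (G.Adj u x ∨ (¬ G.Adj v x ∧ ∀ p ∈ W, G.Adj u p → ¬ G.Adj p x))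
      · exact Or.inl ⟨hx, h⟩
      · exact Or.inr ⟨hx, h⟩
  · refine ⟨W, ∅, ?_, by simp, fun x hx => Or.inl hx, fun x hx => hx, by simp⟩
    intro x hx y hy h
    exact he ⟨x, hx, y, hy, h⟩

open Classical in
/-- `K4`-free case: a triangle among the non-neighbours of a vertex of degree at least 4. -/
lemma colorable_of_triangle {V : Type*} (G : SimpleGraph V)
    (h2 : ∀ a b c d, G.Adj a b → G.Adj c d →
      G.Adj a c ∨ G.Adj a d ∨ G.Adj b c ∨ G.Adj b d)
    (hD : ∀ v (s : Finset V), (∀ x ∈ s, G.Adj v x) → s.card ≤ 5)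
    (hK : ∀ a b c d, G.Adj a b → G.Adj a c → G.Adj a d → G.Adj b c → G.Adj b d → ¬ G.Adj c d)
    (v a b c : V) (U : Finset V) (hU : ∀ x, x ∈ U ↔ G.Adj v x) (hU4 : 4 ≤ U.card)
    (hva : ¬ G.Adj v a) (hvb : ¬ G.Adj v b) (hvc : ¬ G.Adj v c)
    (hab : G.Adj a b) (hbc : G.Adj b c) (hac : G.Adj a c) : G.Colorable 4 := by
  have hs := G.adj_comm
  have hcov : ∀ p q u, ¬ G.Adj v p → ¬ G.Adj v q → G.Adj p q → u ∈ U → G.Adj p u ∨ G.Adj q u := by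
    intro p q u hp hq hpq hu
    have := h2 v u p q ((hU u).1 hu) hpq
    grind
  have hab' := fun u => hcov a b u hva hvb hab
  have hbc' := fun u => hcov b c u hvb hvc hbc
  have hac' := fun u => hcov a c u hva hvc hac
  -- counting
  have hsum : 2 * U.card ≤ (U.filter (G.Adj a)).card + (U.filter (G.Adj b)).card
      + (U.filter (G.Adj c)).card := by
    simp only [Finset.card_filter]
    rw [← Finset.sum_add_distrib, ← Finset.sum_add_distrib, mul_comm, ← smul_eq_mul]
    apply Finset.card_nsmul_le_sum
    intro u hu
    have := hab' u hu
    have := hbc' u hu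
    have := hac' u hu
    split_ifs <;> simp_all
  have hcnt2 : ∀ p q r, ¬ G.Adj v q → ¬ G.Adj v r → G.Adj p q → G.Adj p r → q ≠ r →
      (U.filter (G.Adj p)).card ≤ 3 := by
    intro p q r hq hr hpq hpr hqr
    have := hD p (insert q (insert r (U.filter (G.Adj p)))) (by
      intro x hx; simp at hx; grind)
    rw [Finset.card_insert_of_notMem (by simp; grind),
      Finset.card_insert_of_notMem (by simp; grind)] at this
    omega
  have hcnt3 : ∀ p q r y, ¬ G.Adj v q → ¬ G.Adj v r → ¬ G.Adj v y → G.Adj p q → G.Adj p r → q ≠ r →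
      G.Adj p y → y ≠ q → y ≠ r → (U.filter (G.Adj p)).card ≤ 2 := by
    intro p q r y hq hr hy hpq hpr hqr hpy hyq hyr
    have := hD p (insert y (insert q (insert r (U.filter (G.Adj p))))) (by
      intro x hx; simp at hx; grind)
    rw [Finset.card_insert_of_notMem (by simp; grind), Finset.card_insert_of_notMem (by simp; grind),
      Finset.card_insert_of_notMem (by simp; grind)] at this
    omega
  have na := hcnt2 a b c hvb hvc hab hac hbc.ne
  have nb := hcnt2 b a c hva hvc hab.symm hbc hac.ne
  have nc := hcnt2 c a b hva hvb hac.symm hbc.symm hab.ne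
  have na3 := fun y hy => hcnt3 a b c y hvb hvc hy hab hac hbc.ne
  have nb3 := fun y hy => hcnt3 b a c y hva hvc hy hab.symm hbc hac.ne
  have nc3 := fun y hy => hcnt3 c a b y hva hvb hy hac.symm hbc.symm hab.ne
  refine colorable_four_of_cover G {x | x = a ∨ (x ∈ U ∧ ¬ G.Adj a x)}
    {x | x = b ∨ (x ∈ U ∧ ¬ G.Adj b x)} {x | x = c ∨ (x ∈ U ∧ ¬ G.Adj c x)}
    {x | x ∉ U ∧ x ≠ a ∧ x ≠ b ∧ x ≠ c} ?_ ?_ ?_ ?_ ?_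
  · rintro x (rfl | ⟨hx, hx'⟩) y (rfl | ⟨hy, hy'⟩) hxy
    · simp at hxy
    · grind
    · grind
    · have := hK b c x y; grind
  · rintro x (rfl | ⟨hx, hx'⟩) y (rfl | ⟨hy, hy'⟩) hxy
    · simp at hxy
    · grind
    · grind
    · have := hK a c x y; grind
  · rintro x (rfl | ⟨hx, hx'⟩) y (rfl | ⟨hy, hy'⟩) hxy
    · simp at hxy
    · grind
    · grind
    · have := hK a b x y; grind
  · rintro x ⟨hxU, hxa, hxb, hxc⟩ y ⟨hyU, hya, hyb, hyc⟩ hxy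
    rw [hU] at hxU hyU
    have k1 := h2 a b x y hab hxy
    have k2 := h2 b c x y hbc hxy
    have k3 := h2 a c x y hac hxy
    have ax := na3 x hxU
    have bx := nb3 x hxU
    have cx := nc3 x hxU
    have ay := na3 y hyU
    have hby := nb3 y hyU
    have cy := nc3 y hyU
    by_cases A : G.Adj a x ∨ G.Adj a y <;> by_cases B : G.Adj b x ∨ G.Adj b y <;>
      by_cases C : G.Adj c x ∨ G.Adj c y
    all_goals grind
  · intro x
    have := hab' x
    have := hbc' x
    have := hac' x
    have := hK a b c x
    by_cases hx : x ∈ U <;> simp only [Set.mem_ofPred_eq] <;> grind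
lemma fin5_cover (s : Finset (Fin 5)) : (∀ i, i ∈ s ∨ i + 1 ∈ s) → 3 ≤ s.card := by
  revert s; decide

lemma fin5_cover_three (s : Finset (Fin 5)) : (∀ i, i ∈ s ∨ i + 1 ∈ s) → s.card ≤ 3 →
    ∃ i, ∀ k, k ∈ s ↔ k = i ∨ k = i + 2 ∨ k = i + 3 := by
  revert s; decide

lemma fin5_typ (s : Finset (Fin 5)) : (∀ k, ¬ (k ∈ s ∧ k + 1 ∈ s)) →
    (∀ k ∈ s, k + 2 ∈ s ∨ k + 3 ∈ s) → (∀ k, k ∉ s) ∨ ∃ i, ∀ k, k ∈ s ↔ k = i + 1 ∨ k = i + 4 := by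
  revert s; decide

lemma fin5_choose : ∀ i1 i2 i3 i4 : Fin 5, i1 ≠ i2 → i3 ≠ i4 →
    ∃ j, ((j = i1 + 1 ∨ j = i1 + 4) ∨ (j = i2 + 1 ∨ j = i2 + 4)) ∧
      ((j = i3 + 1 ∨ j = i3 + 4) ∨ (j = i4 + 1 ∨ j = i4 + 4)) := by
  decide

/-- The adjacency pattern of an induced 5-cycle. -/
lemma c5_adj_iff {V : Type*} (G : SimpleGraph V) (c : Fin 5 → V)
    (hc1 : ∀ i, G.Adj (c i) (c (i + 1))) (hc2 : ∀ i, ¬ G.Adj (c i) (c (i + 2))) (i k : Fin 5) :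
    G.Adj (c i) (c k) ↔ k = i + 1 ∨ k = i + 4 := by
  have h1 := hc1 i
  have h2 := hc2 i
  have h3 := (hc2 (i + 3))
  have h4 := (hc1 (i + 4))
  have e3 : i + 3 + 2 = i := by clear * -; revert i; decide
  have e4 : i + 4 + 1 = i := by clear * -; revert i; decide
  rw [e3, G.adj_comm] at h3
  rw [e4, G.adj_comm] at h4
  have h0 : k = i ∨ k = i + 1 ∨ k = i + 2 ∨ k = i + 3 ∨ k = i + 4 := by clear * -; revert i k; decide
  have e : i ≠ i + 1 ∧ i ≠ i + 4 ∧ i + 2 ≠ i + 1 ∧ i + 2 ≠ i + 4 ∧ i + 3 ≠ i + 1 ∧ i + 3 ≠ i + 4 := by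
    clear * -; revert i; decide
  rcases h0 with rfl | rfl | rfl | rfl | rfl <;> simp_all

lemma c5_injective {V : Type*} (G : SimpleGraph V) (c : Fin 5 → V)
    (hc1 : ∀ i, G.Adj (c i) (c (i + 1))) (hc2 : ∀ i, ¬ G.Adj (c i) (c (i + 2))) :
    Function.Injective c := by
  intro i j hij
  have h1 := fun k => c5_adj_iff G c hc1 hc2 i k
  have h2 := fun k => c5_adj_iff G c hc1 hc2 j k
  have : ∀ k, (k = i + 1 ∨ k = i + 4) ↔ (k = j + 1 ∨ k = j + 4) := by
    intro k; rw [← h1, ← h2, hij]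
  clear h1 h2 hij hc1 hc2
  revert i j; decide

open Classical in
/-- `K4`-free case: an induced 5-cycle among the non-neighbours of `v`. -/
lemma colorable_of_c5 {V : Type*} (G : SimpleGraph V)
    (h2 : ∀ a b c d, G.Adj a b → G.Adj c d →
      G.Adj a c ∨ G.Adj a d ∨ G.Adj b c ∨ G.Adj b d)
    (hD : ∀ v (s : Finset V), (∀ x ∈ s, G.Adj v x) → s.card ≤ 5)
    (hK : ∀ a b c d, G.Adj a b → G.Adj a c → G.Adj a d → G.Adj b c → G.Adj b d → ¬ G.Adj c d)
    (v : V)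
    (htri : ∀ a b c, ¬ G.Adj v a → ¬ G.Adj v b → ¬ G.Adj v c → G.Adj a b → G.Adj b c → ¬ G.Adj a c)
    (c : Fin 5 → V) (hcv : ∀ i, ¬ G.Adj v (c i))
    (hc1 : ∀ i, G.Adj (c i) (c (i + 1))) (hc2 : ∀ i, ¬ G.Adj (c i) (c (i + 2))) :
    G.Colorable 4 := by
  have hs := G.adj_comm
  have hcc := c5_adj_iff G c hc1 hc2
  have hinj := c5_injective G c hc1 hc2
  -- neighbours of `v` cover the cycle
  have hcov : ∀ u, G.Adj v u → ∀ i, G.Adj u (c i) ∨ G.Adj u (c (i + 1)) := by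
    intro u hu i
    have := h2 v u (c i) (c (i + 1)) hu (hc1 i)
    have := hcv i
    have := hcv (i + 1)
    grind
  have hcov3 : ∀ u, G.Adj v u → 3 ≤ (Finset.univ.filter (fun i => G.Adj u (c i))).card := by
    intro u hu
    apply fin5_cover
    intro i; simpa using hcov u hu i
  -- at most one extra neighbour
  have hextra : ∀ u x y, G.Adj v u → G.Adj u x → G.Adj u y → x ≠ v → y ≠ v →
      (∀ i, x ≠ c i) → (∀ i, y ≠ c i) → x = y := by
    intro u x y hu hx hy hxv hyv hxc hyc
    by_contra hxy
    have := hD u (insert v (insert x (insert y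
      ((Finset.univ.filter (fun i => G.Adj u (c i))).image c)))) (by
      intro z hz; simp at hz; grind)
    rw [Finset.card_insert_of_notMem, Finset.card_insert_of_notMem, Finset.card_insert_of_notMem,
      Finset.card_image_of_injective _ hinj] at this
    · have := hcov3 u hu
      omega
    · simp; grind
    · simp; grind
    · have := hcc
      simp only [Finset.mem_insert, Finset.mem_image, Finset.mem_filter, Finset.mem_univ, true_and]
      rintro (h | h | ⟨i, hi, h⟩)
      · grind
      · grind
      · apply hcv (i + 1); rw [← h]; exact hc1 i
  have hcenter : ∀ u x, G.Adj v u → G.Adj u x → x ≠ v → (∀ i, x ≠ c i) →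
      ∃ i, ∀ k, G.Adj u (c k) ↔ k = i ∨ k = i + 2 ∨ k = i + 3 := by
    intro u x hu hx hxv hxc
    have := hD u (insert v (insert x
      ((Finset.univ.filter (fun i => G.Adj u (c i))).image c))) (by
      intro z hz; simp at hz; grind)
    rw [Finset.card_insert_of_notMem, Finset.card_insert_of_notMem,
      Finset.card_image_of_injective _ hinj] at this
    · obtain ⟨i, hi⟩ := fin5_cover_three (Finset.univ.filter (fun i => G.Adj u (c i)))
        (by intro i; simpa using hcov u hu i) (by omega)
      exact ⟨i, by simpa using hi⟩
    · simp; grind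
    · simp only [Finset.mem_insert, Finset.mem_image, Finset.mem_filter, Finset.mem_univ, true_and]
      rintro (h | ⟨i, hi, h⟩)
      · grind
      · apply hcv (i + 1); rw [← h]; exact hc1 i
  -- types of non-neighbours of `v`
  have htyp : ∀ w, ¬ G.Adj v w → (∀ k, ¬ G.Adj w (c k)) ∨
      ∃ i, ∀ k, G.Adj w (c k) ↔ k = i + 1 ∨ k = i + 4 := by
    intro w hw
    have := fin5_typ (Finset.univ.filter (fun i => G.Adj w (c i))) (by
      intro k hk
      simp at hk
      exact htri w (c k) (c (k + 1)) hw (hcv _) (hcv _) hk.1 (hc1 k) hk.2) (by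
      intro k hk
      simp at hk ⊢
      have h := h2 w (c k) (c (k + 2)) (c (k + 3)) hk (by
        have := hc1 (k + 2)
        have e : k + 2 + 1 = k + 3 := by clear * -; revert k; decide
        rwa [e] at this)
      have e : ∀ k : Fin 5, k + 2 ≠ k + 1 ∧ k + 2 ≠ k + 4 ∧ k + 3 ≠ k + 1 ∧ k + 3 ≠ k + 4 := by
        decide
      have := e k
      grind)
    simpa using this
  have hiso : ∀ w x, ¬ G.Adj v w → ¬ G.Adj v x → G.Adj w x → ¬ ∀ k, ¬ G.Adj w (c k) := by
    intro w x hw hx hwx h0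
    have hx' : ∀ i, G.Adj x (c i) ∨ G.Adj x (c (i + 1)) := by
      intro i
      have := h2 w x (c i) (c (i + 1)) hwx (hc1 i)
      grind
    rcases htyp x hx with h | ⟨i, hi⟩
    · have := hx' 0; grind
    · have := hx' (i + 2)
      rw [hi, hi] at this
      revert this
      clear * -
      revert i; decide
  have hadjtyp : ∀ w x i j, ¬ G.Adj v w → ¬ G.Adj v x → G.Adj w x →
      (∀ k, G.Adj w (c k) ↔ k = i + 1 ∨ k = i + 4) →
      (∀ k, G.Adj x (c k) ↔ k = j + 1 ∨ k = j + 4) → j = i + 1 ∨ j = i + 4 := by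
    intro w x i j hw hx hwx hi hj
    have : ∀ k, ¬ ((k = i + 1 ∨ k = i + 4) ∧ (k = j + 1 ∨ k = j + 4)) := by
      intro k
      rw [← hi, ← hj]
      rintro ⟨h1, h3⟩
      exact htri w x (c k) hw hx (hcv k) hwx h3 h1
    revert this
    clear * -
    revert i j; decide
  -- the colouring
  have main : ∀ (P : Set V) (j : Fin 5), (∀ x ∈ P, G.Adj v x) → (∀ x ∈ P, ∀ y ∈ P, ¬ G.Adj x y) →
      (∀ x y, G.Adj v x → G.Adj v y → x ∉ P → y ∉ P → ¬ G.Adj x y) →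
      (∀ x ∈ P, ∀ w, ¬ G.Adj v w → (∀ k, G.Adj w (c k) ↔ k = j + 1 ∨ k = j + 4) → ¬ G.Adj x w) →
      G.Colorable 4 := by
    intro P j hPU hP hQ hPj
    refine colorable_four_of_cover G
      {x | x ∈ P ∨ (¬ G.Adj v x ∧ ∀ k, G.Adj x (c k) ↔ k = j + 1 ∨ k = j + 4)}
      {x | G.Adj v x ∧ x ∉ P}
      {x | ¬ G.Adj v x ∧ ∃ i, (i = j + 1 ∨ i = j + 3) ∧ ∀ k, G.Adj x (c k) ↔ k = i + 1 ∨ k = i + 4}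
      {x | ¬ G.Adj v x ∧ ((∀ k, ¬ G.Adj x (c k)) ∨
        ∃ i, (i = j + 2 ∨ i = j + 4) ∧ ∀ k, G.Adj x (c k) ↔ k = i + 1 ∨ k = i + 4)} ?_ ?_ ?_ ?_ ?_
    · rintro x (hx | ⟨hx, hx'⟩) y (hy | ⟨hy, hy'⟩) hxy
      · exact hP x hx y hy hxy
      · exact hPj x hx y hy hy' hxy
      · exact hPj y hy x hx hx' hxy.symm
      · have := hadjtyp x y j j hx hy hxy hx' hy'
        revert this; clear * -; revert j; decide
    · rintro x ⟨hx, hx'⟩ y ⟨hy, hy'⟩ hxy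
      exact hQ x y hx hy hx' hy' hxy
    · rintro x ⟨hx, i, hi, hx'⟩ y ⟨hy, l, hl, hy'⟩ hxy
      have := hadjtyp x y i l hx hy hxy hx' hy'
      revert this hi hl; clear * -; revert j i l; decide
    · rintro x ⟨hx, h0 | ⟨i, hi, hx'⟩⟩ y ⟨hy, h0' | ⟨l, hl, hy'⟩⟩ hxy
      · exact hiso x y hx hy hxy h0
      · exact hiso x y hx hy hxy h0
      · exact hiso y x hy hx hxy.symm h0'
      · have := hadjtyp x y i l hx hy hxy hx' hy'
        revert this hi hl; clear * -; revert j i l; decide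
    · intro x
      by_cases hx : G.Adj v x
      · by_cases hxP : x ∈ P
        · exact Or.inl (Or.inl hxP)
        · exact Or.inr (Or.inl ⟨hx, hxP⟩)
      · rcases htyp x hx with h0 | ⟨i, hi⟩
        · exact Or.inr (Or.inr (Or.inr ⟨hx, Or.inl h0⟩))
        · have : i = j ∨ (i = j + 1 ∨ i = j + 3) ∨ (i = j + 2 ∨ i = j + 4) := by
            clear * -; revert i j; decide
          rcases this with rfl | h | h
          · exact Or.inl (Or.inr ⟨hx, hi⟩)
          · exact Or.inr (Or.inr (Or.inl ⟨hx, i, h, hi⟩))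
          · exact Or.inr (Or.inr (Or.inr ⟨hx, Or.inr ⟨i, h, hi⟩⟩))
  have hvc : ∀ u, G.Adj v u → ∀ i, u ≠ c i := by
    rintro u hu i rfl; exact hcv i hu
  have hmatch : ∀ u x y, G.Adj v u → G.Adj v x → G.Adj v y → G.Adj u x → G.Adj u y → x = y := by
    intro u x y hu hx hy hux huy
    exact hextra u x y hu hux huy hx.ne' hy.ne' (hvc x hx) (hvc y hy)
  -- a matched vertex missing `c j` is anticomplete to type `j`
  have hanti : ∀ u x j w, G.Adj v u → G.Adj v x → G.Adj u x → ¬ G.Adj u (c j) → ¬ G.Adj v w →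
      (∀ k, G.Adj w (c k) ↔ k = j + 1 ∨ k = j + 4) → ¬ G.Adj u w := by
    intro u x j w hu hx hux huj hw hwj huw
    by_cases hwc : ∃ k, w = c k
    · obtain ⟨k, rfl⟩ := hwc
      have : ∀ l, (l = k + 1 ∨ l = k + 4) ↔ (l = j + 1 ∨ l = j + 4) := by
        intro l; rw [← hcc, hwj]
      have : k = j := by revert this; clear * -; revert k j; decide
      subst this
      exact huj huw
    · push Not at hwc
      have hwv : w ≠ v := by
        rintro rfl
        exact hcv (j + 1) ((hwj _).2 (Or.inl rfl))
      have := hextra u x w hu hux huw hx.ne' hwv (hvc x hx) hwc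
      subst this
      exact hw hx
  by_cases he : ∃ u1 u2, G.Adj v u1 ∧ G.Adj v u2 ∧ G.Adj u1 u2
  swap
  · exact main ∅ 0 (by simp) (by simp) (fun x y hx hy _ _ hxy => he ⟨x, y, hx, hy, hxy⟩) (by simp)
  obtain ⟨u1, u2, hu1, hu2, h12⟩ := he
  have hcent2 : ∀ x y, G.Adj v x → G.Adj v y → G.Adj x y → ∃ i1 i2, i1 ≠ i2 ∧
      (∀ k, G.Adj x (c k) ↔ k = i1 ∨ k = i1 + 2 ∨ k = i1 + 3) ∧
      (∀ k, G.Adj y (c k) ↔ k = i2 ∨ k = i2 + 2 ∨ k = i2 + 3) := by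
    intro x y hx hy hxy
    obtain ⟨i1, hi1⟩ := hcenter x y hx hxy hy.ne' (hvc y hy)
    obtain ⟨i2, hi2⟩ := hcenter y x hy hxy.symm hx.ne' (hvc x hx)
    refine ⟨i1, i2, ?_, hi1, hi2⟩
    rintro rfl
    have e : i1 + 2 + 1 = i1 + 3 := by clear * -; revert i1; decide
    have hh := hc1 (i1 + 2)
    rw [e] at hh
    exact hK x y (c (i1 + 2)) (c (i1 + 3)) hxy ((hi1 _).2 (by simp)) ((hi1 _).2 (by simp))
      ((hi2 _).2 (by simp)) ((hi2 _).2 (by simp)) hh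
  have hmiss : ∀ x i j, (∀ k, G.Adj x (c k) ↔ k = i ∨ k = i + 2 ∨ k = i + 3) →
      (j = i + 1 ∨ j = i + 4) → ¬ G.Adj x (c j) := by
    intro x i j hi hj
    rw [hi]
    revert hj; clear * -; revert i j; decide
  by_cases he2 : ∃ u3 u4, G.Adj v u3 ∧ G.Adj v u4 ∧ G.Adj u3 u4 ∧ u3 ≠ u1 ∧ u3 ≠ u2 ∧ u4 ≠ u1 ∧ u4 ≠ u2
  swap
  · obtain ⟨i1, i2, -, hi1, hi2⟩ := hcent2 u1 u2 hu1 hu2 h12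
    have hj := hmiss u1 i1 (i1 + 1) hi1 (Or.inl rfl)
    refine main {u1} (i1 + 1) (by simpa using hu1) (by simp) ?_ ?_
    · intro x y hx hy hxP hyP hxy
      simp at hxP hyP
      have m1 := hmatch u2 u1 x hu2 hu1 hx h12.symm
      have m2 := hmatch u2 u1 y hu2 hu1 hy h12.symm
      apply he2
      refine ⟨x, y, hx, hy, hxy, hxP, ?_, hyP, ?_⟩
      · rintro rfl; exact hyP (m2 hxy).symm
      · rintro rfl; exact hxP (m1 hxy.symm).symm
    · intro x hx w hw hwj
      simp at hx
      subst hx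
      exact hanti x u2 _ w hu1 hu2 h12 hj hw hwj
  obtain ⟨u3, u4, hu3, hu4, h34, n31, n32, n41, n42⟩ := he2
  have fin : ∀ p p' q q' j, G.Adj v p → G.Adj v p' → G.Adj v q → G.Adj v q' → G.Adj p p' →
      G.Adj q q' → q ≠ p → q ≠ p' → q' ≠ p → q' ≠ p' → ¬ G.Adj p (c j) → ¬ G.Adj q (c j) →
      G.Colorable 4 := by
    intro p p' q q' j hp hp' hq hq' hpp hqq n1 n2 n3 n4 hpj hqj
    refine main {p, q} j ?_ ?_ ?_ ?_
    · rintro x (rfl | rfl) <;> assumption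
    · have : ¬ G.Adj p q := fun h => n2 (hmatch p q p' hp hq hp' h hpp)
      have : ¬ G.Adj q p := fun h => this h.symm
      rintro x (rfl | rfl) y (rfl | rfl) <;> first | assumption | exact G.irrefl
    · intro x y hx hy hxP hyP hxy
      simp at hxP hyP
      have m1 := hmatch p' p x hp' hp hx hpp.symm
      have m2 := hmatch p' p y hp' hp hy hpp.symm
      have m3 := hmatch q' q x hq' hq hx hqq.symm
      have m4 := hmatch q' q y hq' hq hy hqq.symm
      have a1 : x ≠ p' := by rintro rfl; exact hyP.1 (m2 hxy).symm
      have a2 : y ≠ p' := by rintro rfl; exact hxP.1 (m1 hxy.symm).symm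
      have a3 : x ≠ q' := by rintro rfl; exact hyP.2 (m4 hxy).symm
      have a4 : y ≠ q' := by rintro rfl; exact hxP.2 (m3 hxy.symm).symm
      have hcard := hD v {x, y, p, p', q, q'} (by
        intro z hz; simp at hz; grind)
      have := hxy.ne
      have := hpp.ne
      have := hqq.ne
      rw [Finset.card_insert_of_notMem (by simp; grind), Finset.card_insert_of_notMem (by simp; grind),
        Finset.card_insert_of_notMem (by simp; grind), Finset.card_insert_of_notMem (by simp; grind),
        Finset.card_pair (by assumption)] at hcard
      omega
    · rintro x (rfl | rfl) w hw hwj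
      · exact hanti x p' _ w hp hp' hpp hpj hw hwj
      · exact hanti x q' _ w hq hq' hqq hqj hw hwj
  obtain ⟨i1, i2, hi12, hi1, hi2⟩ := hcent2 u1 u2 hu1 hu2 h12
  obtain ⟨i3, i4, hi34, hi3, hi4⟩ := hcent2 u3 u4 hu3 hu4 h34
  obtain ⟨j, hA | hA, hB | hB⟩ := fin5_choose i1 i2 i3 i4 hi12 hi34
  · exact fin u1 u2 u3 u4 j hu1 hu2 hu3 hu4 h12 h34 n31 n32 n41 n42 (hmiss _ _ _ hi1 hA)
      (hmiss _ _ _ hi3 hB)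
  · exact fin u1 u2 u4 u3 j hu1 hu2 hu4 hu3 h12 h34.symm n41 n42 n31 n32 (hmiss _ _ _ hi1 hA)
      (hmiss _ _ _ hi4 hB)
  · exact fin u2 u1 u3 u4 j hu2 hu1 hu3 hu4 h12.symm h34 n32 n31 n42 n41 (hmiss _ _ _ hi2 hA)
      (hmiss _ _ _ hi3 hB)
  · exact fin u2 u1 u4 u3 j hu2 hu1 hu4 hu3 h12.symm h34.symm n42 n41 n32 n31 (hmiss _ _ _ hi2 hA)
      (hmiss _ _ _ hi4 hB)
lemma fin5_four_cycle : ∀ a b d e : Fin 5, a ≠ b → (a = d + 1 ∨ a = d + 4) → (b = d + 1 ∨ b = d + 4) →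
    (a = e + 1 ∨ a = e + 4) → (b = e + 1 ∨ b = e + 4) → d = e := by
  decide

lemma fin5_common : ∀ i a : Fin 5, (a = i + 1 ∨ a = i + 4) → ∃ b : Fin 5, (b = i + 1 ∨ b = i + 4) ∧
    b ≠ a ∧ ¬ (b = a + 1 ∨ b = a + 4) ∧ ∀ k : Fin 5, (k = i + 1 ∨ k = i + 4) → k = a ∨ k = b := by
  decide

open Classical in
/-- A `2K2`-free graph of maximum degree at most 5 cannot be locally `C5`. -/
lemma not_locally_c5 {V : Type*} (G : SimpleGraph V)
    (h2 : ∀ a b c d, G.Adj a b → G.Adj c d →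
      G.Adj a c ∨ G.Adj a d ∨ G.Adj b c ∨ G.Adj b d)
    (hD : ∀ v (s : Finset V), (∀ x ∈ s, G.Adj v x) → s.card ≤ 5)
    (v : V)
    (hloc : ∀ v, ∃ c : Fin 5 → V, (∀ i, G.Adj v (c i)) ∧ (∀ i, G.Adj (c i) (c (i + 1))) ∧
      ∀ i, ¬ G.Adj (c i) (c (i + 2))) : False := by
  have hs := G.adj_comm
  have hall : ∀ v (c : Fin 5 → V), (∀ i, G.Adj v (c i)) → (∀ i, G.Adj (c i) (c (i + 1))) →
      (∀ i, ¬ G.Adj (c i) (c (i + 2))) → ∀ x, G.Adj v x → ∃ i, x = c i := by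
    intro v c hv h1 h3 x hx
    by_contra hcon
    push Not at hcon
    have := hD v (insert x (Finset.univ.image c)) (by
      intro z hz; simp at hz; grind)
    rw [Finset.card_insert_of_notMem (by simp; grind),
      Finset.card_image_of_injective _ (c5_injective G c h1 h3)] at this
    simp at this
  -- common neighbours of an edge
  have hcom : ∀ x y v, G.Adj x y → G.Adj x v → G.Adj y v → ∃ p, G.Adj x p ∧ G.Adj y p ∧ p ≠ v ∧
      ¬ G.Adj v p ∧ ∀ z, G.Adj x z → G.Adj y z → z = v ∨ z = p := by
    intro x y v hxy hxv hyv
    obtain ⟨c, hc0, hc1, hc2⟩ := hloc x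
    have hcc := c5_adj_iff G c hc1 hc2
    have hinj := c5_injective G c hc1 hc2
    have hA := hall x c hc0 hc1 hc2
    obtain ⟨i, rfl⟩ := hA y hxy
    obtain ⟨a, rfl⟩ := hA v hxv
    obtain ⟨b, hb1, hb2, hb3, hb4⟩ := fin5_common i a ((hcc i a).1 hyv)
    refine ⟨c b, hc0 b, (hcc i b).2 hb1, fun h => hb2 (hinj h), fun h => hb3 ((hcc a b).1 h), ?_⟩
    intro z hz hz'
    obtain ⟨k, rfl⟩ := hA z hz
    rcases hb4 k ((hcc i k).1 hz') with rfl | rfl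
    · exact Or.inl rfl
    · exact Or.inr rfl
  have hfour : ∀ x v p s t, G.Adj x v → G.Adj x p → G.Adj x s → G.Adj x t → s ≠ t → G.Adj v s →
      G.Adj v t → G.Adj p s → G.Adj p t → v = p := by
    intro x v p s t hv hp hs' ht hst h1 h3 h4 h5
    obtain ⟨c, hc0, hc1, hc2⟩ := hloc x
    have hcc := c5_adj_iff G c hc1 hc2
    have hA := hall x c hc0 hc1 hc2
    obtain ⟨d, rfl⟩ := hA v hv
    obtain ⟨e, rfl⟩ := hA p hp
    obtain ⟨a, rfl⟩ := hA s hs'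
    obtain ⟨b, rfl⟩ := hA t ht
    rw [fin5_four_cycle a b d e (fun h => hst (by rw [h])) ((hcc _ _).1 h1) ((hcc _ _).1 h3)
      ((hcc _ _).1 h4) ((hcc _ _).1 h5)]
  obtain ⟨c, hc0, hc1, hc2⟩ := hloc v
  have hcc := c5_adj_iff G c hc1 hc2
  have hinj := c5_injective G c hc1 hc2
  choose p hp1 hp2 hpv hpv' hpu using fun i =>
    hcom (c i) (c (i + 1)) v (hc1 i) (hc0 i).symm (hc0 _).symm
  have e1 : ∀ i : Fin 5, i + 1 + 1 = i + 2 := by decide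
  have e2 : ∀ i : Fin 5, i + 2 + 1 = i + 3 := by decide
  have e3 : ∀ i : Fin 5, i ≠ i + 2 := by decide
  have e4 : ∀ i : Fin 5, i + 4 + 1 = i := by decide
  -- `p i` is not adjacent to `c (i + 2)`
  have hp3 : ∀ i, ¬ G.Adj (p i) (c (i + 2)) := by
    intro i h
    apply hpv i
    refine (hfour (c (i + 1)) v (p i) (c i) (c (i + 2)) (hc0 _).symm (hp2 i) (hc1 i).symm ?_ ?_
      (hc0 _) (hc0 _) (hp1 i).symm h).symm
    · have := hc1 (i + 1); rwa [e1] at this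
    · exact fun h => e3 i (hinj h)
  have hp4 : ∀ i, ¬ G.Adj (p i) (c (i + 4)) := by
    intro i h
    apply hpv i
    have h4 := hc1 (i + 4)
    rw [e4] at h4
    refine (hfour (c i) v (p i) (c (i + 4)) (c (i + 1)) (hc0 _).symm (hp1 i) h4.symm (hc1 i) ?_
      (hc0 _) (hc0 _) h (hp2 i).symm).symm
    intro h
    have := hinj h
    revert this; clear * -; revert i; decide
  have hp5 : ∀ i, G.Adj (p i) (c (i + 3)) := by
    intro i
    have h1 := hc1 (i + 2)
    rw [e2] at h1
    have h3 := h2 (p i) (c i) (c (i + 2)) (c (i + 3)) (hp1 i).symm h1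
    rw [hcc, hcc] at h3
    have h4 := hp3 i
    have h5 : ¬ (i + 2 = i + 1 ∨ i + 2 = i + 4) ∧ ¬ (i + 3 = i + 1 ∨ i + 3 = i + 4) := by
      clear * -; revert i; decide
    tauto
  have q1 := hp1 3
  have q2 : G.Adj (p 2) (c 3) := (hp2 2).symm
  have q3 : G.Adj (p 0) (c 3) := hp5 0
  have n1 : p 0 ≠ p 2 := by intro h; apply hp3 0; rw [h]; exact (hp1 2).symm
  have n2 : p 0 ≠ p 3 := by intro h; apply hp4 0; rw [h]; exact (hp2 3).symm
  have n3 : p 2 ≠ p 3 := by intro h; apply hp3 2; rw [h]; exact (hp2 3).symm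
  have m2 : ∀ i, v ≠ c i := fun i => (hc0 i).ne
  have m3 : ∀ i j, p i ≠ c j := fun i j h => hpv' i (h ▸ hc0 j)
  have c34 : G.Adj (c 3) (c 4) := hc1 3
  have c23 : G.Adj (c 3) (c 2) := (hc1 2).symm
  have c24 : c 2 ≠ c 4 := fun h => absurd (hinj h) (by decide)
  have hcard := hD (c 3) {v, p 0, p 2, p 3, c 2, c 4} (by
    have := (hc0 3).symm
    intro z hz; simp at hz; grind)
  rw [Finset.card_insert_of_notMem (by simp; grind), Finset.card_insert_of_notMem (by simp; grind),
    Finset.card_insert_of_notMem (by simp; grind), Finset.card_insert_of_notMem (by simp; grind),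
    Finset.card_pair c24] at hcard
  omega

open Classical in
lemma colorable_of_K4_free {V : Type*} [Fintype V] (G : SimpleGraph V)
    (h2 : ∀ a b c d, G.Adj a b → G.Adj c d →
      G.Adj a c ∨ G.Adj a d ∨ G.Adj b c ∨ G.Adj b d)
    (hD : ∀ v (s : Finset V), (∀ x ∈ s, G.Adj v x) → s.card ≤ 5)
    (hd : ∀ v, 4 ≤ (Finset.univ.filter (G.Adj v)).card)
    (hK : ∀ a b c d, G.Adj a b → G.Adj a c → G.Adj a d → G.Adj b c → G.Adj b d → ¬ G.Adj c d) :
    G.Colorable 4 := by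
  by_contra hcol
  have hloc : ∀ v, ∃ c : Fin 5 → V, (∀ i, G.Adj v (c i)) ∧ (∀ i, G.Adj (c i) (c (i + 1))) ∧
      ∀ i, ¬ G.Adj (c i) (c (i + 2)) := by
    intro v
    by_contra hno
    have htri : ∀ a b c, ¬ G.Adj v a → ¬ G.Adj v b → ¬ G.Adj v c → G.Adj a b → G.Adj b c →
        ¬ G.Adj a c := fun a b c ha hb hc h1 h3 h4 =>
      hcol (colorable_of_triangle G h2 hD hK v a b c (Finset.univ.filter (G.Adj v)) (by simp) (hd v)
        ha hb hc h1 h3 h4)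
    obtain ⟨I, J, hI, hJ, hIJ, -, -⟩ := bipartite_of_no_triangle_no_c5 G h2 {x | G.Adj v x}
      (by
        rintro ⟨a, ha, b, hb, c, hc, h1, h3, h4⟩
        exact hK v a b c ha hb hc h1 h4 h3) hno
    obtain ⟨I', J', hI', hJ', hIJ', -, -⟩ := bipartite_of_no_triangle_no_c5 G h2 {x | ¬ G.Adj v x}
      (by
        rintro ⟨a, ha, b, hb, c, hc, h1, h3, h4⟩
        exact htri a b c ha hb hc h1 h3 h4)
      (by
        rintro ⟨c, hc, h1, h3⟩
        exact hcol (colorable_of_c5 G h2 hD hK v htri c hc h1 h3))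
    refine hcol (colorable_four_of_cover G I J I' J' hI hJ hI' hJ' ?_)
    intro x
    by_cases hx : G.Adj v x
    · rcases hIJ x hx with h | h <;> simp [h]
    · rcases hIJ' x hx with h | h <;> simp [h]
  rcases isEmpty_or_nonempty V with h | ⟨⟨v⟩⟩
  · exact hcol (colorable_four_of_cover G ∅ ∅ ∅ ∅ (by simp) (by simp) (by simp) (by simp)
      (fun x => h.elim x))
  · exact not_locally_c5 G h2 hD v hloc
open Classical in
/-- The case where the graph contains a `K4`. -/
lemma colorable_of_K4 {V : Type*} [Fintype V] (G : SimpleGraph V)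
    (h2 : ∀ a b c d, G.Adj a b → G.Adj c d →
      G.Adj a c ∨ G.Adj a d ∨ G.Adj b c ∨ G.Adj b d)
    (hD : ∀ v (s : Finset V), (∀ x ∈ s, G.Adj v x) → s.card ≤ 5)
    (hd : ∀ v, 4 ≤ (Finset.univ.filter (G.Adj v)).card)
    (hK : G.CliqueFree 5) (A : Finset V) (hA : G.IsNClique 4 A) : G.Colorable 4 := by
  have hs := G.adj_comm
  have hA4 : A.card = 4 := hA.card_eq
  have hAc : ∀ a ∈ A, ∀ b ∈ A, a ≠ b → G.Adj a b := fun a ha b hb h => hA.isClique ha hb h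
  obtain ⟨O, hO⟩ : ∃ O : Finset V, ∀ x, x ∈ O ↔ x ∉ A := ⟨Aᶜ, by simp⟩
  obtain ⟨d, hdef⟩ : ∃ d : V → ℕ, ∀ u, d u = (A.filter (G.Adj u)).card := ⟨_, fun _ => rfl⟩
  have F1 : ∀ a ∈ A, (O.filter (G.Adj a)).card ≤ 2 := by
    intro a ha
    have := hD a (A.erase a ∪ O.filter (G.Adj a)) (by
      intro x hx; simp at hx; grind)
    rw [Finset.card_union_of_disjoint, Finset.card_erase_of_mem ha, hA4] at this
    · omega
    · rw [Finset.disjoint_left]; intro x hx; simp at hx; grind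
  have F2 : ∑ u ∈ O, d u ≤ 8 := by
    have : ∑ u ∈ O, d u = ∑ a ∈ A, (O.filter (G.Adj a)).card := by
      simp only [hdef, Finset.card_filter]
      rw [Finset.sum_comm]
      simp only [G.adj_comm]
    rw [this]
    calc _ ≤ ∑ a ∈ A, 2 := Finset.sum_le_sum F1
      _ = 8 := by simp [hA4]
  have F3 : ∀ u ∈ O, ∃ a ∈ A, ¬ G.Adj u a := by
    intro u hu
    by_contra hcon
    push Not at hcon
    exact hK (insert u A) (hA.insert hcon)
  have F4 : ∀ u ∈ O, ∀ w ∈ O, G.Adj u w → ∀ a ∈ A, ∀ b ∈ A, ¬ G.Adj u a → ¬ G.Adj w a →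
      ¬ G.Adj u b → ¬ G.Adj w b → a = b := by
    intro u hu w hw huw a ha b hb h1 h3 h4 h5
    by_contra hab
    have := h2 u w a b huw (hAc a ha b hb hab)
    tauto
  have F4' : ∀ u ∈ O, ∀ w ∈ O, G.Adj u w → 3 ≤ d u + d w := by
    intro u hu w hw huw
    have h1 : (A.filter (fun a => ¬ G.Adj u a ∧ ¬ G.Adj w a)).card ≤ 1 := by
      rw [Finset.card_le_one]
      intro a ha b hb
      simp at ha hb
      exact F4 u hu w hw huw a ha.1 b hb.1 ha.2.1 ha.2.2 hb.2.1 hb.2.2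
    have h3 : A ⊆ A.filter (fun a => ¬ G.Adj u a ∧ ¬ G.Adj w a) ∪
        (A.filter (G.Adj u) ∪ A.filter (G.Adj w)) := by
      intro a ha; simp; tauto
    have h4 := Finset.card_le_card h3
    have h5 := Finset.card_union_le (A.filter (fun a => ¬ G.Adj u a ∧ ¬ G.Adj w a))
      (A.filter (G.Adj u) ∪ A.filter (G.Adj w))
    have h6 := Finset.card_union_le (A.filter (G.Adj u)) (A.filter (G.Adj w))
    rw [hdef, hdef]
    omega
  have F5 : ∀ u, 4 ≤ d u + (O.filter (G.Adj u)).card := by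
    intro u
    have h3 : Finset.univ.filter (G.Adj u) ⊆ A.filter (G.Adj u) ∪ O.filter (G.Adj u) := by
      intro a ha; simp at ha ⊢; have := hO a; tauto
    have h4 := Finset.card_le_card h3
    have h6 := Finset.card_union_le (A.filter (G.Adj u)) (O.filter (G.Adj u))
    have := hd u
    rw [hdef]
    omega
  have hNsum : ∀ u ∈ O, ∀ m, (∀ w ∈ O, G.Adj u w → m ≤ d w) →
      (O.filter (G.Adj u)).card * m ≤ 8 := by
    intro u hu m hm
    calc _ ≤ ∑ w ∈ O.filter (G.Adj u), d w := by
          rw [← smul_eq_mul]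
          apply Finset.card_nsmul_le_sum
          intro w hw; simp at hw; exact hm w hw.1 hw.2
      _ ≤ ∑ w ∈ O, d w := Finset.sum_le_sum_of_subset (Finset.filter_subset _ _)
      _ ≤ 8 := F2
  have F6 : ∀ u ∈ O, 1 ≤ d u := by
    intro u hu
    by_contra hcon
    have := hNsum u hu 3 (fun w hw huw => by have := F4' u hu w hw huw; omega)
    have := F5 u
    omega
  by_cases ho : O.card ≤ 4
  · -- Hall
    have key : ∃ f : O → V, Function.Injective f ∧ ∀ u : O, f u ∈ A.filter (fun a => ¬ G.Adj u a) := by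
      rw [← Finset.all_card_le_biUnion_card_iff_exists_injective]
      intro s
      by_cases h3 : 3 ≤ s.card
      · have : A ⊆ s.biUnion (fun u : O => A.filter (fun a => ¬ G.Adj u a)) := by
          intro a ha
          by_contra hcon
          simp only [Finset.mem_biUnion, Finset.mem_filter, not_exists, not_and, not_not] at hcon
          have h1 : s.map (Function.Embedding.subtype _) ⊆ O.filter (G.Adj a) := by
            intro x hx
            simp at hx ⊢
            obtain ⟨hx, hxs⟩ := hx
            exact ⟨hx, (hcon _ hxs ha).symm⟩
          have := Finset.card_le_card h1
          have := F1 a ha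
          rw [Finset.card_map] at *
          omega
        have h4 := Finset.card_le_card this
        have h5 : s.card ≤ O.card := by
          simpa using Finset.card_le_univ s
        omega
      · by_contra hlt
        push Not at hlt h3
        have hne : ∀ u ∈ s, 1 ≤ (s.biUnion (fun u : O => A.filter (fun a => ¬ G.Adj u a))).card := by
          intro u hu
          rw [Nat.succ_le_iff, Finset.card_pos]
          obtain ⟨a, ha, hua⟩ := F3 u u.2
          exact ⟨a, by simp only [Finset.mem_biUnion, Finset.mem_filter]; exact ⟨u, hu, ha, hua⟩⟩
        have hs2 : s.card = 2 := by
          rcases s.eq_empty_or_nonempty with rfl | ⟨u, hu⟩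
          · simp at hlt
          · have := hne u hu; omega
        obtain ⟨u, w, huw, rfl⟩ := Finset.card_eq_two.1 hs2
        have hone : (Finset.biUnion {u, w} (fun u : O => A.filter (fun a => ¬ G.Adj u a))).card ≤ 1 := by
          omega
        rw [Finset.card_le_one] at hone
        simp only [Finset.mem_biUnion, Finset.mem_filter, Finset.mem_insert, Finset.mem_singleton,
          exists_eq_or_imp, exists_eq_left] at hone
        obtain ⟨a, ha, hua⟩ := F3 u u.2
        have hu' : ∀ b ∈ A, b ≠ a → G.Adj u b := by
          intro b hb hba
          by_contra h
          exact hba (hone b (Or.inl ⟨hb, h⟩) a (Or.inl ⟨ha, hua⟩))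
        have hw' : ∀ b ∈ A, b ≠ a → G.Adj w b := by
          intro b hb hba
          by_contra h
          exact hba (hone b (Or.inr ⟨hb, h⟩) a (Or.inl ⟨ha, hua⟩))
        have huw' : (u : V) ≠ w := fun h => huw (Subtype.ext h)
        -- `u` and `w` are not adjacent
        have hnadj : ¬ G.Adj u w := by
          intro hadj
          refine hK (insert (u : V) (insert (w : V) (A.erase a))) ?_
          have : G.IsNClique 3 (A.erase a) := by
            refine ⟨?_, by rw [Finset.card_erase_of_mem ha, hA4]⟩
            exact hA.isClique.subset (by simp)
          have := this.insert (a := (w : V)) (by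
            intro b hb; simp at hb; exact hw' b hb.2 hb.1)
          refine this.insert (a := (u : V)) ?_
          intro b hb; simp at hb
          rcases hb with rfl | hb
          · exact hadj
          · exact hu' b hb.2 hb.1
        have hother : ∀ x ∈ O, x ≠ u → x ≠ w → ∀ b ∈ A, b ≠ a → ¬ G.Adj x b := by
          intro x hx hxu hxw b hb hba hxb
          have h1 : ({x, (u : V), (w : V)} : Finset V) ⊆ O.filter (G.Adj b) := by
            intro z hz
            simp at hz ⊢
            have := hu' b hb hba
            have := hw' b hb hba
            have := u.2
            have := w.2
            grind
          have h3 := Finset.card_le_card h1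
          rw [Finset.card_insert_of_notMem (by simp; grind), Finset.card_pair huw'] at h3
          have := F1 b hb
          omega
        have hd1 : ∀ x ∈ O, x ≠ u → x ≠ w → d x ≤ 1 := by
          intro x hx hxu hxw
          rw [hdef, Finset.card_le_one]
          intro b hb b' hb'
          simp at hb hb'
          have h1 := hother x hx hxu hxw b hb.1
          have h3 := hother x hx hxu hxw b' hb'.1
          grind
        have hu3 : d u ≤ 3 := by
          rw [hdef]
          have : A.filter (G.Adj u) ⊆ A.erase a := by
            intro b hb; simp at hb ⊢; refine ⟨?_, hb.1⟩; rintro rfl; exact hua hb.2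
          have := Finset.card_le_card this
          rw [Finset.card_erase_of_mem ha] at this
          omega
        have h5 := F5 u
        have : 0 < (O.filter (G.Adj u)).card := by omega
        obtain ⟨x, hx⟩ := Finset.card_pos.1 this
        simp at hx
        have hxu : x ≠ u := hx.2.ne'
        have hxw : x ≠ w := by rintro rfl; exact hnadj hx.2
        have h6 := hd1 x hx.1 hxu hxw
        have h7 := F5 x
        have h8 : O.filter (G.Adj x) ⊆ {(u : V), (w : V)} := by
          intro y hy
          simp at hy ⊢
          by_contra hcon
          push Not at hcon
          have := hd1 y hy.1 hcon.1 hcon.2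
          have := F4' x hx.1 y hy.1 hy.2
          omega
        have := Finset.card_le_card h8
        rw [Finset.card_pair huw'] at this
        omega
    obtain ⟨f, hf, hfA⟩ := key
    simp only [Finset.mem_filter] at hfA
    have hO' : ∀ x, x ∉ A → x ∈ O := fun x hx => (hO x).2 hx
    let C : G.Coloring A := SimpleGraph.Coloring.mk
      (fun x => if h : x ∈ A then ⟨x, h⟩ else ⟨f ⟨x, hO' x h⟩, (hfA _).1⟩) (by
        intro x y hxy
        by_cases hx : x ∈ A <;> by_cases hy : y ∈ A
        · simpa [hx, hy] using hxy.ne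
        · simp only [hx, hy, dif_pos, not_false_eq_true, dif_neg, ne_eq, Subtype.mk.injEq]
          intro h
          apply (hfA ⟨y, hO' y hy⟩).2
          rw [← h]; exact hxy.symm
        · simp only [hx, hy, dif_pos, not_false_eq_true, dif_neg, ne_eq, Subtype.mk.injEq]
          intro h
          apply (hfA ⟨x, hO' x hx⟩).2
          rw [h]; exact hxy
        · simp only [hx, hy, not_false_eq_true, dif_neg, ne_eq, Subtype.mk.injEq]
          intro h
          have := hf h
          simp only [Subtype.mk.injEq] at this
          exact hxy.ne this)
    have := C.colorable
    simpa [hA4] using this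
  · -- five vertices outside
    push Not at ho
    have hone : ∀ u ∈ O, d u = 1 → 3 ≤ (O.filter (G.Adj u)).card ∧ ∀ w ∈ O, G.Adj u w → 2 ≤ d w := by
      intro u hu h1
      have := F5 u
      refine ⟨by omega, fun w hw huw => ?_⟩
      have := F4' u hu w hw huw
      omega
    have hcount : 2 * O.card ≤ (O.filter (fun u => d u = 1)).card + ∑ u ∈ O, d u := by
      rw [Finset.card_filter, ← Finset.sum_add_distrib, mul_comm, ← smul_eq_mul]
      apply Finset.card_nsmul_le_sum
      intro u hu
      have := F6 u hu
      split_ifs <;> omega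
    have h1lt : 1 < (O.filter (fun u => d u = 1)).card := by omega
    obtain ⟨u, hu, w, hw, huw⟩ := Finset.one_lt_card.1 h1lt
    simp only [Finset.mem_filter] at hu hw
    obtain ⟨hu3, hu2⟩ := hone u hu.1 hu.2
    obtain ⟨hw3, hw2⟩ := hone w hw.1 hw.2
    obtain ⟨Y, hY⟩ : ∃ Y : Finset V, Y = O.filter (fun x => 2 ≤ d x) := ⟨_, rfl⟩
    have hYu : O.filter (G.Adj u) ⊆ Y := by
      intro x hx; simp [hY] at hx ⊢; exact ⟨hx.1, hu2 x hx.1 hx.2⟩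
    have hYw : O.filter (G.Adj w) ⊆ Y := by
      intro x hx; simp [hY] at hx ⊢; exact ⟨hx.1, hw2 x hx.1 hx.2⟩
    have hcount2 : O.card + Y.card ≤ ∑ u ∈ O, d u := by
      rw [hY, Finset.card_filter, Finset.card_eq_sum_ones, ← Finset.sum_add_distrib]
      apply Finset.sum_le_sum
      intro x hx
      have := F6 x hx
      split_ifs <;> omega
    have hYc := Finset.card_le_card hYu
    have hYc' := Finset.card_le_card hYw
    have hO5 : O.card = 5 := by omega
    have hY3 : Y.card = 3 := by omega
    have eYu : O.filter (G.Adj u) = Y := Finset.eq_of_subset_of_card_le hYu (by omega)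
    have eYw : O.filter (G.Adj w) = Y := Finset.eq_of_subset_of_card_le hYw (by omega)
    have hYO : ∀ y ∈ Y, y ∈ O := by intro y hy; simp [hY] at hy; exact hy.1
    have hyu : ∀ y ∈ Y, G.Adj u y := by intro y hy; rw [← eYu] at hy; simp at hy; exact hy.2
    have hyw : ∀ y ∈ Y, G.Adj w y := by intro y hy; rw [← eYw] at hy; simp at hy; exact hy.2
    have huY : u ∉ Y := by intro h; exact (hyu u h).ne rfl
    have hwY : w ∉ Y := by intro h; exact (hyw w h).ne rfl
    have hOeq : insert u (insert w Y) = O := by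
      apply Finset.eq_of_subset_of_card_le
      · intro x hx; simp at hx; rcases hx with rfl | rfl | hx
        · exact hu.1
        · exact hw.1
        · exact hYO x hx
      · rw [Finset.card_insert_of_notMem (by simp; tauto), Finset.card_insert_of_notMem hwY]
        omega
    have hd2 : ∀ y ∈ Y, d y = 2 := by
      have hsplit : ∑ x ∈ O, d x = d u + (d w + ∑ y ∈ Y, d y) := by
        rw [← hOeq, Finset.sum_insert (by simp; tauto), Finset.sum_insert hwY]
      intro y hy
      have h1 : 2 ≤ d y := by simp [hY] at hy; exact hy.2
      have h3 : ∑ y ∈ Y, d y = d y + ∑ z ∈ Y.erase y, d z := (Finset.add_sum_erase _ _ hy).symm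
      have h4 : (Y.erase y).card * 2 ≤ ∑ z ∈ Y.erase y, d z := by
        rw [← smul_eq_mul]
        apply Finset.card_nsmul_le_sum
        intro z hz; simp [hY] at hz; exact hz.2.2
      rw [Finset.card_erase_of_mem hy] at h4
      omega
    obtain ⟨a, ha⟩ := Finset.card_eq_one.1 (hdef u ▸ hu.2)
    obtain ⟨a', ha'⟩ := Finset.card_eq_one.1 (hdef w ▸ hw.2)
    have haA : a ∈ A ∧ G.Adj u a := by
      have : a ∈ A.filter (G.Adj u) := by rw [ha]; simp
      simpa using this
    have ha1 : ∀ b ∈ A, G.Adj u b → b = a := by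
      intro b hb hub
      have : b ∈ A.filter (G.Adj u) := by simp [hb, hub]
      rw [ha] at this; simpa using this
    have ha2 : ∀ b ∈ A, G.Adj w b → b = a' := by
      intro b hb hub
      have : b ∈ A.filter (G.Adj w) := by simp [hb, hub]
      rw [ha'] at this; simpa using this
    have hAcompl : ∀ y ∈ Y, (A.filter (fun b => ¬ G.Adj y b)).card = 2 := by
      intro y hy
      have h1 := Finset.card_filter_add_card_filter_not (s := A) (fun b => G.Adj y b)
      have h3 := hd2 y hy
      rw [hdef] at h3
      have h4 : (A.filter (fun b => G.Adj y b)).card = 2 := h3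
      omega
    have hya : ∀ y ∈ Y, ¬ G.Adj y a := by
      intro y hy hadj
      obtain ⟨b, c, hbc, hbc'⟩ := Finset.card_eq_two.1 (hAcompl y hy)
      have hb : b ∈ A.filter (fun b => ¬ G.Adj y b) := by rw [hbc']; simp
      have hc : c ∈ A.filter (fun b => ¬ G.Adj y b) := by rw [hbc']; simp
      simp only [Finset.mem_filter] at hb hc
      apply hbc
      refine F4 u hu.1 y (hYO y hy) (hyu y hy) b hb.1 c hc.1 ?_ hb.2 ?_ hc.2
      · intro h; have := ha1 b hb.1 h; subst this; exact hb.2 hadj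
      · intro h; have := ha1 c hc.1 h; subst this; exact hc.2 hadj
    have hdegY : ∀ y ∈ Y, ∀ z ∈ Y, ∀ z' ∈ Y, G.Adj y z → G.Adj y z' → z = z' := by
      intro y hy z hz z' hz' hyz hyz'
      by_contra hne
      have hcard := hD y (insert u (insert w (insert z (insert z' (A.filter (G.Adj y)))))) (by
        have := hyu y hy
        have := hyw y hy
        intro x hx; simp at hx; grind)
      have o1 := (hO u).1 hu.1
      have o2 := (hO w).1 hw.1
      have o3 := (hO z).1 (hYO z hz)
      have o4 := (hO z').1 (hYO z' hz')
      rw [Finset.card_insert_of_notMem (by simp; grind), Finset.card_insert_of_notMem (by simp; grind),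
        Finset.card_insert_of_notMem (by simp; grind), Finset.card_insert_of_notMem (by simp; grind),
        ← hdef, hd2 y hy] at hcard
      omega
    have hnuw : ¬ G.Adj u w := by
      intro h; have := F4' u hu.1 w hw.1 h; omega
    have hfin : ∀ y1 y2 y3, Y = {y1, y2, y3} → ¬ G.Adj y1 y2 → G.Colorable 4 := by
      intro y1 y2 y3 hYe h12
      have m1 : y1 ∈ Y := by rw [hYe]; simp
      have m2 : y2 ∈ Y := by rw [hYe]; simp
      have m3 : y3 ∈ Y := by rw [hYe]; simp
      obtain ⟨c, hc, hca⟩ : ∃ c ∈ A.filter (fun b => ¬ G.Adj y3 b), c ≠ a := by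
        apply Finset.exists_mem_ne
        rw [hAcompl y3 m3]; norm_num
      simp only [Finset.mem_filter] at hc
      obtain ⟨b, hb, hbn⟩ : ∃ b ∈ A, b ∉ ({a, a', c} : Finset V) := by
        apply Finset.exists_mem_notMem_of_card_lt_card
        have := Finset.card_le_three (a := a) (b := a') (c := c)
        omega
      simp at hbn
      have hba : ¬ G.Adj u b := fun h => hbn.1 (ha1 b hb h)
      have hbw : ¬ G.Adj w b := fun h => hbn.2.1 (ha2 b hb h)
      have hrest : ∀ x ∈ A, ∀ y ∈ A, x ≠ a → x ≠ b → x ≠ c → y ≠ a → y ≠ b → y ≠ c → x = y := by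
        intro x hx y hy h1 h3 h4 h5 h6 h7
        by_contra hxy
        have hsub : ({x, y, a, b, c} : Finset V) ⊆ A := by
          intro z hz; simp at hz; have := haA.1; have := hc.1; grind
        have := Finset.card_le_card hsub
        rw [Finset.card_insert_of_notMem (by simp; grind), Finset.card_insert_of_notMem (by simp; grind),
          Finset.card_insert_of_notMem (by simp; grind), Finset.card_pair (by grind)] at this
        omega
      refine colorable_four_of_cover G {a, y1, y2} {c, y3} {u, w, b}
        {x | x ∈ A ∧ x ≠ a ∧ x ≠ b ∧ x ≠ c} ?_ ?_ ?_ ?_ ?_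
      · have e1 := hya y1 m1
        have e2 := hya y2 m2
        rintro x (rfl | rfl | rfl) y (rfl | rfl | rfl) <;>
          first | exact G.irrefl | assumption | (rw [G.adj_comm]; assumption)
      · have e1 := hc.2
        rintro x (rfl | rfl) y (rfl | rfl) <;>
          first | exact G.irrefl | assumption | (rw [G.adj_comm]; assumption)
      · rintro x (rfl | rfl | rfl) y (rfl | rfl | rfl) <;>
          first | exact G.irrefl | assumption | (rw [G.adj_comm]; assumption)
      · rintro x ⟨hx, x1, x2, x3⟩ y ⟨hy, y1, y2, y3⟩ hxy
        exact hxy.ne (hrest x hx y hy x1 x2 x3 y1 y2 y3)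
      · intro x
        by_cases hx : x ∈ A
        · simp only [Set.mem_insert_iff, Set.mem_singleton_iff, Set.mem_ofPred_eq]
          tauto
        · have := (hO x).2 hx
          rw [← hOeq, hYe] at this
          simp only [Finset.mem_insert, Finset.mem_singleton] at this
          simp only [Set.mem_insert_iff, Set.mem_singleton_iff, Set.mem_ofPred_eq]
          tauto
    obtain ⟨y1, y2, y3, n12, n13, n23, hYe⟩ := Finset.card_eq_three.1 hY3
    by_cases h12 : G.Adj y1 y2
    · have m1 : y1 ∈ Y := by rw [hYe]; simp
      have m2 : y2 ∈ Y := by rw [hYe]; simp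
      have m3 : y3 ∈ Y := by rw [hYe]; simp
      apply hfin y1 y3 y2
      · rw [hYe]; ext; simp; tauto
      · intro h13
        exact n23 (hdegY y1 m1 y2 m2 y3 m3 h12 h13)
    · exact hfin y1 y2 y3 hYe h12

/-! ### Reductions -/

open Classical in
/-- An independent set costs only one colour. -/
lemma colorable_succ_of_indep {V : Type*} (G : SimpleGraph V) (M : Set V) (n : ℕ)
    (hM : ∀ x ∈ M, ∀ y ∈ M, ¬ G.Adj x y)
    (hc : (G.induce {v | v ∉ M}).Colorable n) : G.Colorable (n + 1) := by
  obtain ⟨c⟩ := hc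
  have C : G.Coloring (Option (Fin n)) :=
    SimpleGraph.Coloring.mk (fun v => if h : v ∈ M then none else some (c ⟨v, h⟩)) (by
      intro v w hvw
      by_cases hv : v ∈ M <;> by_cases hw : w ∈ M
      · exact (hM v hv w hw hvw).elim
      · simp [hv, hw]
      · simp [hv, hw]
      · simp only [hv, hw, dite_false]
        intro h
        have h' := Option.some.inj h
        exact c.valid (v := ⟨v, hv⟩) (w := ⟨w, hw⟩) (by simpa using hvw) h')
  simpa using C.colorable

open Classical in
/-- A vertex with few neighbours does not matter for colourability. -/
lemma colorable_of_delete {V : Type*} [Fintype V] (G : SimpleGraph V) (u : V) (n : ℕ)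
    (hu : (Finset.univ.filter (G.Adj u)).card < n)
    (hc : (G.induce {v | v ≠ u}).Colorable n) : G.Colorable n := by
  obtain ⟨c⟩ := hc
  obtain ⟨i, hi⟩ : ∃ i : Fin n, ∀ v (h : v ≠ u), G.Adj u v → c ⟨v, h⟩ ≠ i := by
    by_contra hcon
    push Not at hcon
    choose f hf1 hf2 hf3 using hcon
    have : Fintype.card (Fin n) ≤ (Finset.univ.filter (G.Adj u)).card := by
      rw [← Finset.card_univ]
      apply Finset.card_le_card_of_injOn f
      · intro i _
        simpa using hf2 i
      · intro i _ j _ hij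
        rw [← hf3 i, ← hf3 j]
        congr 1
        exact Subtype.ext hij
    simp at this
    omega
  refine ⟨SimpleGraph.Coloring.mk (fun v => if h : v ≠ u then c ⟨v, h⟩ else i) ?_⟩
  intro v w hvw
  by_cases hv : v = u <;> by_cases hw : w = u
  · subst hv; subst hw; exact (G.loopless.irrefl _ hvw).elim
  · subst hv
    simp only [ne_eq, not_true_eq_false, dite_false, hw, not_false_eq_true, dite_true]
    exact (hi w hw hvw).symm
  · subst hw
    simp only [ne_eq, not_true_eq_false, dite_false, hv, not_false_eq_true, dite_true]
    exact hi v hv hvw.symm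
  · simp only [ne_eq, hv, hw, not_false_eq_true, dite_true]
    exact c.valid (by simpa using hvw)

/-- The three hypotheses carried through the induction. -/
def GoodGraph {V : Type*} (k : ℕ) (G : SimpleGraph V) : Prop :=
  (∀ a b c d, G.Adj a b → G.Adj c d → G.Adj a c ∨ G.Adj a d ∨ G.Adj b c ∨ G.Adj b d) ∧
  (∀ v (s : Finset V), (∀ x ∈ s, G.Adj v x) → s.card ≤ k) ∧ G.CliqueFree k

lemma GoodGraph.induce {V : Type*} {k : ℕ} {G : SimpleGraph V} (h : GoodGraph k G) (s : Set V) :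
    GoodGraph k (G.induce s) := by
  refine ⟨fun a b c d hab hcd => h.1 a b c d hab hcd, ?_,
    h.2.2.comap ⟨(SimpleGraph.Embedding.induce s).toCopy⟩⟩
  intro v t ht
  have := h.2.1 v (t.map (Function.Embedding.subtype _)) (by
    intro x hx
    obtain ⟨y, hy, rfl⟩ := Finset.mem_map.1 hx
    exact ht y hy)
  simpa using this

open Classical in
lemma good_five.{u} (n : ℕ) : ∀ (V : Type u) [Fintype V] (G : SimpleGraph V),
    Fintype.card V = n → GoodGraph 5 G → G.Colorable 4 := by
  induction n using Nat.strong_induction_on with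
  | _ n ih =>
    intro V _ G hn hG
    by_cases hd : ∀ v, 4 ≤ (Finset.univ.filter (G.Adj v)).card
    · by_cases hA : ∃ A, G.IsNClique 4 A
      · obtain ⟨A, hA⟩ := hA
        exact colorable_of_K4 G hG.1 hG.2.1 hd hG.2.2 A hA
      · refine colorable_of_K4_free G hG.1 hG.2.1 hd ?_
        intro a b c d hab hac had hbc hbd hcd
        apply hA
        refine ⟨{a, b, c, d}, ?_, ?_⟩
        · simp [SimpleGraph.isClique_insert, hab, hac, had, hbc, hbd, hcd]
        · have h1 := hab.ne
          have h2 := hac.ne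
          have h3 := had.ne
          have h4 := hbc.ne
          have h5 := hbd.ne
          have h6 := hcd.ne
          rw [Finset.card_insert_of_notMem (by simp [h1, h2, h3]),
            Finset.card_insert_of_notMem (by simp [h4, h5]), Finset.card_pair h6]
    · push Not at hd
      obtain ⟨u, hu⟩ := hd
      refine colorable_of_delete G u 4 hu (ih _ ?_ _ _ rfl (hG.induce _))
      rw [← hn]
      exact Fintype.card_subtype_lt (x := u) (by simp)

open Classical in
lemma no_disjoint_cliques {V : Type*} (G : SimpleGraph V) (K : ℕ) (hK : 5 ≤ K)
    (h2 : ∀ a b c d, G.Adj a b → G.Adj c d → G.Adj a c ∨ G.Adj a d ∨ G.Adj b c ∨ G.Adj b d)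
    (hD : ∀ v (s : Finset V), (∀ x ∈ s, G.Adj v x) → s.card ≤ K + 1)
    (A B : Finset V) (hA : G.IsNClique K A) (hB : G.IsNClique K B) : (A ∩ B).Nonempty := by
  rw [Finset.nonempty_iff_ne_empty]
  intro hAB
  have hdis : Disjoint A B := Finset.disjoint_iff_inter_eq_empty.2 hAB
  have hle : ∀ a ∈ A, (B.filter (G.Adj a)).card ≤ 2 := by
    intro a ha
    have := hD a (A.erase a ∪ B.filter (G.Adj a)) (by
      intro x hx
      rcases Finset.mem_union.1 hx with hx | hx
      · exact hA.1 ha (Finset.mem_of_mem_erase hx) (Finset.ne_of_mem_erase hx).symm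
      · exact (Finset.mem_filter.1 hx).2)
    rw [Finset.card_union_of_disjoint
      (hdis.mono (Finset.erase_subset _ _) (Finset.filter_subset _ _)),
      Finset.card_erase_of_mem ha, hA.2] at this
    omega
  have hge : ∀ a ∈ A, ∀ a' ∈ A, a ≠ a' →
      K - 1 ≤ (B.filter (G.Adj a) ∪ B.filter (G.Adj a')).card := by
    intro a ha a' ha' hne
    have h1 : (B \ (B.filter (G.Adj a) ∪ B.filter (G.Adj a'))).card ≤ 1 := by
      rw [Finset.card_le_one]
      intro x hx y hy
      by_contra hxy
      simp only [Finset.mem_sdiff, Finset.mem_union, Finset.mem_filter] at hx hy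
      have := h2 a a' x y (hA.1 ha ha' hne) (hB.1 hx.1 hy.1 hxy)
      tauto
    have h3 := Finset.le_card_sdiff (B.filter (G.Adj a) ∪ B.filter (G.Adj a')) B
    rw [hB.2] at h3
    omega
  obtain ⟨a, b, c, ha, hb, hc, hab, hac, hbc⟩ :=
    (Finset.two_lt_card_iff (s := A)).1 (by rw [hA.2]; omega)
  have e1 := hge a ha b hb hab
  have e2 := hge a ha c hc hac
  have e3 := hge b hb c hc hbc
  have l1 := hle a ha
  have l2 := hle b hb
  have l3 := hle c hc
  have u1 := Finset.card_union_add_card_inter (B.filter (G.Adj a)) (B.filter (G.Adj b))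
  have u2 := Finset.card_union_add_card_inter (B.filter (G.Adj a)) (B.filter (G.Adj c))
  have u3 := Finset.card_union_add_card_inter (B.filter (G.Adj b)) (B.filter (G.Adj c))
  have i2 : (B.filter (G.Adj a) ∩ B.filter (G.Adj c)) = ∅ :=
    Finset.card_eq_zero.1 (by omega)
  have i3 : (B.filter (G.Adj b) ∩ B.filter (G.Adj c)) = ∅ :=
    Finset.card_eq_zero.1 (by omega)
  have u4 := Finset.card_union_add_card_inter
    (B.filter (G.Adj a) ∪ B.filter (G.Adj b)) (B.filter (G.Adj c))
  rw [Finset.union_inter_distrib_right, i2, i3] at u4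
  have hs : ((B.filter (G.Adj a) ∪ B.filter (G.Adj b)) ∪ B.filter (G.Adj c)).card ≤ B.card :=
    Finset.card_le_card (Finset.union_subset (Finset.union_subset (Finset.filter_subset _ _)
      (Finset.filter_subset _ _)) (Finset.filter_subset _ _))
  rw [hB.2] at hs
  simp only [Finset.union_empty, Finset.card_empty] at u4
  omega

open Classical in
lemma exists_common_vertex {V : Type*} (G : SimpleGraph V) (K : ℕ) (hK : 5 ≤ K)
    (h2 : ∀ a b c d, G.Adj a b → G.Adj c d → G.Adj a c ∨ G.Adj a d ∨ G.Adj b c ∨ G.Adj b d)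
    (hD : ∀ v (s : Finset V), (∀ x ∈ s, G.Adj v x) → s.card ≤ K + 1)
    (hF : G.CliqueFree (K + 1)) (A : Finset V) (hA : G.IsNClique K A) :
    ∃ x, ∀ C, G.IsNClique K C → x ∈ C := by
  have hext : ∀ C, G.IsNClique K C → ∀ q, q ∉ C → ∃ c ∈ C, ¬ G.Adj q c := by
    intro C hC q hq
    by_contra hcon
    push Not at hcon
    exact hF _ (hC.insert hcon)
  -- closed neighbourhoods
  have hcl : ∀ x (s : Finset V), x ∈ s → (∀ y ∈ s, y ≠ x → G.Adj x y) → s.card ≤ K + 2 := by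
    intro x s hx hs
    have := hD x (s.erase x) (fun y hy =>
      hs y (Finset.mem_of_mem_erase hy) (Finset.ne_of_mem_erase hy))
    rw [Finset.card_erase_of_mem hx] at this
    omega
  have hadj : ∀ C, G.IsNClique K C → ∀ x ∈ C, ∀ y ∈ C, y ≠ x → G.Adj x y :=
    fun C hC x hx y hy hne => hC.1 hx hy hne.symm
  have hinter : ∀ B C, G.IsNClique K B → G.IsNClique K C → K - 2 ≤ (B ∩ C).card := by
    intro B C hB hC
    obtain ⟨x, hx⟩ := no_disjoint_cliques G K hK h2 hD B C hB hC
    obtain ⟨hxB, hxC⟩ := Finset.mem_inter.1 hx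
    have h1 := hcl x (B ∪ C) (Finset.mem_union_left _ hxB) (by
      intro y hy hne
      rcases Finset.mem_union.1 hy with hy | hy
      · exact hadj B hB x hxB y hy hne
      · exact hadj C hC x hxC y hy hne)
    have h3 := Finset.card_union_add_card_inter B C
    rw [hB.2, hC.2] at h3
    omega
  by_cases hcase : ∃ B C, G.IsNClique K B ∧ G.IsNClique K C ∧ (B ∩ C).card ≤ K - 2
  · obtain ⟨B, C, hB, hC, hBC⟩ := hcase
    obtain ⟨q, hq⟩ := no_disjoint_cliques G K hK h2 hD B C hB hC
    have hun : (B ∪ C).card = K + 2 := by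
      have h3 := Finset.card_union_add_card_inter B C
      have := hinter B C hB hC
      rw [hB.2, hC.2] at h3
      omega
    refine ⟨q, fun E hE => ?_⟩
    by_contra hqE
    -- E meets B ∩ C
    have hmeet : ∃ x ∈ E, x ∈ B ∩ C := by
      by_contra hcon
      push Not at hcon
      have h1 := hinter E B hE hB
      have h3 : E ∩ B ⊆ B \ C := by
        intro y hy
        obtain ⟨h4, h5⟩ := Finset.mem_inter.1 hy
        refine Finset.mem_sdiff.2 ⟨h5, fun h6 => hcon y h4 (Finset.mem_inter.2 ⟨h5, h6⟩)⟩
      have h4 := Finset.card_le_card h3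
      have h5 := Finset.card_sdiff_add_card_inter B C
      have := hinter B C hB hC
      rw [hB.2] at h5
      omega
    obtain ⟨x, hxE, hx⟩ := hmeet
    obtain ⟨hxB, hxC⟩ := Finset.mem_inter.1 hx
    obtain ⟨hqB, hqC⟩ := Finset.mem_inter.1 hq
    have hsub : ∀ y ∈ E, y ∈ B ∪ C := by
      intro y hyE
      by_contra hy
      have h1 := hcl x (insert y (B ∪ C)) (by simp [hxB]) (by
        intro z hz hne
        rcases Finset.mem_insert.1 hz with rfl | hz
        · exact hadj E hE x hxE _ hyE hne
        rcases Finset.mem_union.1 hz with hz | hz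
        · exact hadj B hB x hxB z hz hne
        · exact hadj C hC x hxC z hz hne)
      rw [Finset.card_insert_of_notMem hy] at h1
      omega
    obtain ⟨c, hc, hqc⟩ := hext E hE q hqE
    have hne : c ≠ q := by rintro rfl; exact hqE hc
    rcases Finset.mem_union.1 (hsub c hc) with h | h
    · exact hqc (hadj B hB q hqB c h hne)
    · exact hqc (hadj C hC q hqC c h hne)
  · push Not at hcase
    by_cases hB : ∃ B, G.IsNClique K B ∧ B ≠ A
    · obtain ⟨B, hB, hBA⟩ := hB
      -- the unique vertices a of A - B and b of B - A
      have hAB := hcase A B hA hB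
      have hnsub : ∃ b ∈ B, b ∉ A := by
        by_contra hcon
        push Not at hcon
        exact hBA (Finset.eq_of_subset_of_card_le hcon (by rw [hA.2, hB.2]))
      have hnsub' : ∃ a ∈ A, a ∉ B := by
        by_contra hcon
        push Not at hcon
        exact hBA (Finset.eq_of_subset_of_card_le hcon (by rw [hA.2, hB.2])).symm
      obtain ⟨b, hbB, hbA⟩ := hnsub
      obtain ⟨a, haA, haB⟩ := hnsub'
      have hdA : (A \ B).card ≤ 1 := by
        have h5 := Finset.card_sdiff_add_card_inter A B
        rw [hA.2] at h5
        omega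
      have hA1 : ∀ y ∈ A, y ∉ B → y = a := fun y hy hyB =>
        Finset.card_le_one.1 hdA y (Finset.mem_sdiff.2 ⟨hy, hyB⟩) a (Finset.mem_sdiff.2 ⟨haA, haB⟩)
      have hnab : ¬ G.Adj b a := by
        intro hba
        obtain ⟨c, hc, hbc⟩ := hext A hA b hbA
        by_cases hcB : c ∈ B
        · exact hbc (hadj B hB b hbB c hcB (by rintro rfl; exact hbA hc))
        · exact hbc (hA1 c hc hcB ▸ hba)
      obtain ⟨q, hq⟩ := no_disjoint_cliques G K hK h2 hD A B hA hB
      obtain ⟨hqA, hqB⟩ := Finset.mem_inter.1 hq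
      refine ⟨q, fun E hE => ?_⟩
      by_contra hqE
      have key : ∀ D, G.IsNClique K D → q ∈ D → ∀ y ∈ D, y ≠ q → y ∈ E := by
        intro D hDc hqD y hy hyq
        by_contra hyE
        have h1 := hcase D E hDc hE
        have h5 := Finset.card_sdiff_add_card_inter D E
        rw [hDc.2] at h5
        exact hyq (Finset.card_le_one.1 (by omega) y (Finset.mem_sdiff.2 ⟨hy, hyE⟩) q
          (Finset.mem_sdiff.2 ⟨hqD, hqE⟩))
      have haE := key A hA hqA a haA (by rintro rfl; exact haB hqB)
      have hbE := key B hB hqB b hbB (by rintro rfl; exact hbA hqA)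
      exact hnab (hadj E hE b hbE a haE (by rintro rfl; exact haB hbB))
    · push Not at hB
      obtain ⟨q, hq⟩ := no_disjoint_cliques G K hK h2 hD A A hA hA
      refine ⟨q, fun E hE => ?_⟩
      rw [hB E hE]
      exact (Finset.mem_inter.1 hq).1

open Classical in
lemma good_all.{u} (k : ℕ) (hk : 5 ≤ k) : ∀ (V : Type u) [Fintype V] (G : SimpleGraph V),
    GoodGraph k G → G.Colorable (k - 1) := by
  induction k, hk using Nat.le_induction with
  | base => exact fun V _ G hG => good_five _ V G rfl hG
  | succ k hk ih =>
    intro V _ G hG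
    -- a starting independent set which meets all `k`-cliques
    obtain ⟨S, hS, hSC⟩ : ∃ S : Set V, (∀ x ∈ S, ∀ y ∈ S, ¬ G.Adj x y) ∧
        ∀ C, G.IsNClique k C → ∃ x ∈ C, x ∈ S := by
      by_cases hA : ∃ A, G.IsNClique k A
      · obtain ⟨A, hA⟩ := hA
        obtain ⟨x, hx⟩ := exists_common_vertex G k hk hG.1 hG.2.1 hG.2.2 A hA
        exact ⟨{x}, by simp, fun C hC => ⟨x, hx C hC, rfl⟩⟩
      · push Not at hA
        exact ⟨∅, by simp, fun C hC => (hA C hC).elim⟩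
    obtain ⟨M, hSM, hM⟩ := Set.Finite.exists_le_maximal
      (Set.toFinite {T : Set V | ∀ x ∈ T, ∀ y ∈ T, ¬ G.Adj x y}) hS
    have hMi : ∀ x ∈ M, ∀ y ∈ M, ¬ G.Adj x y := hM.1
    have hdom : ∀ v, v ∉ M → ∃ m ∈ M, G.Adj v m := by
      intro v hv
      by_contra hcon
      push Not at hcon
      refine hv (hM.2 (y := insert v M) ?_ (Set.subset_insert v M) (Set.mem_insert v M))
      rintro x (rfl | hx) y (rfl | hy)
      · exact G.loopless.irrefl _
      · exact hcon y hy
      · exact fun h => hcon x hx h.symm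
      · exact hMi x hx y hy
    have hgood : GoodGraph k (G.induce {v | v ∉ M}) := by
      have hI := hG.induce {v | v ∉ M}
      refine ⟨hI.1, ?_, ?_⟩
      · intro v s hs
        obtain ⟨m, hm, hvm⟩ := hdom v v.2
        have hmn : m ∉ s.map (Function.Embedding.subtype _) := by
          intro h
          obtain ⟨y, hy, rfl⟩ := Finset.mem_map.1 h
          exact y.2 hm
        have := hG.2.1 v (insert m (s.map (Function.Embedding.subtype _))) (by
          intro x hx
          rcases Finset.mem_insert.1 hx with rfl | hx
          · exact hvm
          · obtain ⟨y, hy, rfl⟩ := Finset.mem_map.1 hx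
            exact hs y hy)
        rw [Finset.card_insert_of_notMem hmn, Finset.card_map] at this
        omega
      · intro C hC
        have hC' : G.IsNClique k (C.map (Function.Embedding.subtype _)) := by
          refine ⟨?_, by rw [Finset.card_map, hC.2]⟩
          intro x hx y hy hne
          obtain ⟨x', hx', rfl⟩ := Finset.mem_map.1 (Finset.mem_coe.1 hx)
          obtain ⟨y', hy', rfl⟩ := Finset.mem_map.1 (Finset.mem_coe.1 hy)
          exact hC.1 hx' hy' (fun h => hne (by rw [h]))
        obtain ⟨x, hx, hxS⟩ := hSC _ hC'
        obtain ⟨x', hx', rfl⟩ := Finset.mem_map.1 hx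
        exact x'.2 (hSM hxS)
    have hcol := colorable_succ_of_indep G M (k - 1) hMi (ih _ _ hgood)
    have : k - 1 + 1 = k + 1 - 1 := by omega
    rwa [this] at hcol

theorem twoK2Free_chromatic_le_max_of_five_le_maxDegree
    {V : Type*} [Fintype V] (G : SimpleGraph V) [DecidableRel G.Adj]
    (hfree : TwoK2Free G) (hΔ : 5 ≤ G.maxDegree) :
    G.chromaticNumber ≤ (max (G.maxDegree - 1) G.cliqueNum : ℕ) := by
  have h2 : ∀ a b c d, G.Adj a b → G.Adj c d →
      G.Adj a c ∨ G.Adj a d ∨ G.Adj b c ∨ G.Adj b d := by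
    intro a b c d hab hcd
    by_contra hcon
    push Not at hcon
    obtain ⟨h1, h3, h4, h5⟩ := hcon
    refine hfree ⟨a, b, c, d, hab.ne, ?_, ?_, ?_, ?_, hcd.ne, hab, hcd, h1, h3, h4, h5⟩
    · rintro rfl; exact h3 hcd
    · rintro rfl; exact h1 hcd.symm
    · rintro rfl; exact h5 hcd
    · rintro rfl; exact h4 hcd.symm
  have hD : ∀ v (s : Finset V), (∀ x ∈ s, G.Adj v x) → s.card ≤ G.maxDegree := by
    intro v s hs
    refine le_trans ?_ (G.degree_le_maxDegree v)
    rw [← SimpleGraph.card_neighborFinset_eq_degree]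
    exact Finset.card_le_card (fun x hx => (G.mem_neighborFinset v x).2 (hs x hx))
  have hcf : ∀ n, G.cliqueNum < n → G.CliqueFree n := by
    intro n hn s hs
    have := hs.1.card_le_cliqueNum
    rw [hs.2] at this
    omega
  have hmax : G.cliqueNum ≤ G.maxDegree + 1 := by
    obtain ⟨s, hs⟩ := G.exists_isNClique_cliqueNum
    classical
    rcases s.eq_empty_or_nonempty with rfl | ⟨v, hv⟩
    · rw [← hs.2]; simp
    · have := hD v (s.erase v) (fun x hx =>
        hs.1 hv (Finset.mem_of_mem_erase hx) (Finset.ne_of_mem_erase hx).symm)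
      rw [Finset.card_erase_of_mem hv, hs.2] at this
      omega
  have key : ∀ k, G.maxDegree ≤ k → G.cliqueNum < k → k - 1 ≤ max (G.maxDegree - 1) G.cliqueNum →
      G.chromaticNumber ≤ (max (G.maxDegree - 1) G.cliqueNum : ℕ) := by
    intro k hk hck hle
    have hc := good_all k (by omega) V G ⟨h2, fun v s hs => (hD v s hs).trans hk, hcf k hck⟩
    exact SimpleGraph.Colorable.chromaticNumber_le (hc.mono hle)
  rcases lt_or_ge G.cliqueNum G.maxDegree with h | h
  · exact key _ le_rfl h (le_max_left _ _)
  · exact key (G.cliqueNum + 1) (by omega) (by omega) (by simp)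
end

section
/- The Borodin–Kostochka conjecture holds for 2K2-free graphs: if G is a finite simple 2K2-free graph with maximum degree Δ(G) ≥ 9, then χ(G) ≤ max{ω(G), Δ(G) − 1}. -/
/-- Data of a critical counterexample (with `n` colours and maximum degree at most `n+1`). -/
structure BKCrit {V : Type*} (G : SimpleGraph V) (n : ℕ) : Prop where
  hn : 8 ≤ n
  free : ∀ a b c d, G.Adj a b → G.Adj c d →
    G.Adj a c ∨ G.Adj a d ∨ G.Adj b c ∨ G.Adj b d
  deg : ∀ (v : V) (S : Finset V), (∀ x ∈ S, G.Adj v x) → S.card ≤ n + 1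
  cliq : ∀ S : Finset V, (∀ x ∈ S, ∀ y ∈ S, x ≠ y → G.Adj x y) → S.card ≤ n
  nocol : ∀ (T : Finset ℕ) (f : V → ℕ), T.card ≤ n → (∀ x, f x ∈ T) →
    (∀ x y, G.Adj x y → f x ≠ f y) → False

/-- A proper colouring with colours `0..n` in which `v` is the only vertex of colour `n`. -/
structure BKSt {V : Type*} (G : SimpleGraph V) (n : ℕ) (v : V) (φ : V → ℕ) : Prop where
  prop : ∀ x y, G.Adj x y → φ x ≠ φ y
  le : ∀ x, φ x ≤ n
  top : φ v = n
  uniq : ∀ x, φ x = n → x = v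

/-- `x` is the only neighbour of `v` of its colour. -/
def BKUq {V : Type*} (G : SimpleGraph V) (v : V) (φ : V → ℕ) (x : V) : Prop :=
  G.Adj v x ∧ ∀ y, G.Adj v y → φ y = φ x → y = x

/-- `x` has two neighbours of colour `c`. -/
def BKDbl {V : Type*} (G : SimpleGraph V) (φ : V → ℕ) (x : V) (c : ℕ) : Prop :=
  ∃ y z, y ≠ z ∧ G.Adj x y ∧ G.Adj x z ∧ φ y = c ∧ φ z = c

section
variable {V : Type*} {G : SimpleGraph V} {n : ℕ} {v : V} {φ : V → ℕ}

open Classical in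
theorem BKSt.see (H : BKCrit G n) (S : BKSt G n v φ) {c : ℕ} (hc : c < n) :
    ∃ x, G.Adj v x ∧ φ x = c := by
  by_contra hno
  push Not at hno
  refine H.nocol (Finset.range n) (fun x => if x = v then c else φ x) (by simp) ?_ ?_
  · intro x
    by_cases hx : x = v
    · simp [hx, hc]
    · have h1 := S.le x
      have h2 : φ x ≠ n := fun h => hx (S.uniq x h)
      simp only [hx, if_false, Finset.mem_range]
      omega
  · intro x y hxy
    by_cases hx : x = v
    · subst hx
      have hy : y ≠ x := fun h => G.ne_of_adj hxy h.symm
      simp only [hy, if_true, if_false]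
      exact fun h => hno y hxy h.symm
    · by_cases hy : y = v
      · subst hy
        simp only [hx, if_true, if_false]
        exact hno x hxy.symm
      · simp only [hx, hy, if_false]
        exact S.prop x y hxy

theorem BKSt.lt (S : BKSt G n v φ) {x : V} (hx : x ≠ v) : φ x < n := by
  have h1 := S.le x
  have h2 : φ x ≠ n := fun h => hx (S.uniq x h)
  omega

open Classical in
theorem BKSt.degc (H : BKCrit G n) (S : BKSt G n v φ) (A : Finset V)
    (hA : ∀ x ∈ A, G.Adj v x) : A.card ≤ (A.image φ).card + 1 := by
  have hs : ∀ c : ℕ, ∃ x, c < n → (G.Adj v x ∧ φ x = c) := by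
    intro c
    by_cases hc : c < n
    · obtain ⟨x, hx⟩ := S.see H hc
      exact ⟨x, fun _ => hx⟩
    · exact ⟨v, fun h => absurd h hc⟩
  choose g hg using hs
  set B := (Finset.range n \ A.image φ).image g with hB
  have hcB : B.card = (Finset.range n \ A.image φ).card := by
    apply Finset.card_image_of_injOn
    intro c hc d hd hcd
    simp only [Finset.coe_sdiff, Set.mem_sdiff, Finset.mem_coe, Finset.mem_range] at hc hd
    rw [← (hg c hc.1).2, ← (hg d hd.1).2, hcd]
  have himg : A.image φ ⊆ Finset.range n := by
    intro c hc
    obtain ⟨x, hx, rfl⟩ := Finset.mem_image.1 hc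
    exact Finset.mem_range.2 (S.lt (G.ne_of_adj (hA x hx)).symm)
  have hdis : Disjoint A B := by
    rw [Finset.disjoint_left]
    intro x hxA hxB
    obtain ⟨c, hc, rfl⟩ := Finset.mem_image.1 hxB
    rw [Finset.mem_sdiff, Finset.mem_range] at hc
    exact hc.2 (Finset.mem_image.2 ⟨_, hxA, (hg c hc.1).2⟩)
  have h1 : (A ∪ B).card ≤ n + 1 := by
    apply H.deg v
    intro x hx
    rcases Finset.mem_union.1 hx with hx | hx
    · exact hA x hx
    · obtain ⟨c, hc, rfl⟩ := Finset.mem_image.1 hx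
      rw [Finset.mem_sdiff, Finset.mem_range] at hc
      exact (hg c hc.1).1
  rw [Finset.card_union_of_disjoint hdis, hcB, Finset.card_sdiff_of_subset himg,
    Finset.card_range] at h1
  have h2 := Finset.card_le_card himg
  rw [Finset.card_range] at h2
  omega

theorem BKSt.dbl_unique (H : BKCrit G n) (S : BKSt G n v φ) {c d : ℕ}
    (hc : BKDbl G φ v c) (hd : BKDbl G φ v d) : c = d := by
  classical
  by_contra hne
  obtain ⟨a, b, hab, ha, hb, rfl, hbc⟩ := hc
  obtain ⟨e, f, hef, he, hf, rfl, hfd⟩ := hd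
  have h := S.degc H {a, b, e, f} (by
    intro x hx
    simp only [Finset.mem_insert, Finset.mem_singleton] at hx
    rcases hx with rfl | rfl | rfl | rfl <;> assumption)
  have h4 : ({a, b, e, f} : Finset V).card = 4 := by
    rw [Finset.card_eq_of_equiv_fin]
    exact Finset.equivFinOfCardEq (by
      rw [Finset.card_insert_of_notMem, Finset.card_insert_of_notMem, Finset.card_insert_of_notMem,
        Finset.card_singleton]
      all_goals simp
      all_goals grind)
  have h2 : (({a, b, e, f} : Finset V).image φ).card ≤ 2 := by
    have : ({a, b, e, f} : Finset V).image φ ⊆ {φ a, φ e} := by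
      intro x hx
      simp only [Finset.mem_image, Finset.mem_insert, Finset.mem_singleton] at hx ⊢
      grind
    exact (Finset.card_le_card this).trans Finset.card_le_two
  omega

theorem BKSt.no_triple (H : BKCrit G n) (S : BKSt G n v φ) {a b c : V}
    (ha : G.Adj v a) (hb : G.Adj v b) (hc : G.Adj v c) (hab : a ≠ b) (hac : a ≠ c) (hbc : b ≠ c)
    (h1 : φ b = φ a) (h2 : φ c = φ a) : False := by
  classical
  have h := S.degc H {a, b, c} (by
    intro x hx
    simp only [Finset.mem_insert, Finset.mem_singleton] at hx
    rcases hx with rfl | rfl | rfl <;> assumption)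
  have h3 : ({a, b, c} : Finset V).card = 3 := Finset.card_eq_three.2 ⟨a, b, c, hab, hac, hbc, rfl⟩
  have h4 : (({a, b, c} : Finset V).image φ).card ≤ 1 := by
    have : ({a, b, c} : Finset V).image φ ⊆ {φ a} := by
      intro x hx
      simp only [Finset.mem_image, Finset.mem_insert, Finset.mem_singleton] at hx ⊢
      grind
    exact (Finset.card_le_card this).trans (by simp)
  omega

open Classical in
theorem BKSt.shift (S : BKSt G n v φ) {x : V} (hx : BKUq G v φ x) :
    BKSt G n x (fun z => if z = x then n else if z = v then φ x else φ z) := by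
  have hvx : v ≠ x := G.ne_of_adj hx.1
  refine ⟨?_, ?_, ?_, ?_⟩
  · intro y z hyz
    have h1 := S.prop y z hyz
    have h2 := hx.2
    have h3 := S.uniq
    have h4 := S.top
    have h5 := G.ne_of_adj hyz
    have h6 := hyz.symm
    split_ifs <;> grind
  · intro z
    have := S.le z
    have := S.le x
    split_ifs <;> omega
  · simp
  · intro z hz
    have := S.lt hvx.symm
    split_ifs at hz with h1 h2
    · exact h1
    · omega
    · exact absurd (S.uniq z hz) h2

theorem BKSt.see' (H : BKCrit G n) (S : BKSt G n v φ) {x : V} (hx : BKUq G v φ x)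
    {c : ℕ} (hc : c < n) (hcx : c ≠ φ x) : ∃ y, G.Adj x y ∧ φ y = c := by
  classical
  obtain ⟨y, hy, hyc⟩ := (S.shift hx).see H hc
  refine ⟨y, hy, ?_⟩
  have := G.ne_of_adj hy
  split_ifs at hyc with h1 h2
  · omega
  · omega
  · exact hyc

theorem BKSt.dbl_shift (S : BKSt G n v φ) {x : V} {c : ℕ} (ψ : V → ℕ)
    (hψ : ∀ z, z ≠ x → z ≠ v → ψ z = φ z)
    (hc : BKDbl G φ x c) : BKDbl G ψ x c := by
  obtain ⟨y, z, hyz, hy, hz, rfl, h⟩ := hc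
  have h1 : y ≠ v := by
    rintro rfl
    exact hyz (S.uniq z (h.trans S.top)).symm
  have h2 : z ≠ v := by
    rintro rfl
    exact hyz (S.uniq y (h.symm.trans S.top))
  exact ⟨y, z, hyz, hy, hz, hψ y (G.ne_of_adj hy).symm h1,
    (hψ z (G.ne_of_adj hz).symm h2).trans h⟩

theorem BKSt.dbl_unique' (H : BKCrit G n) (S : BKSt G n v φ) {x : V} (hx : BKUq G v φ x)
    {c d : ℕ} (hc : BKDbl G φ x c) (hd : BKDbl G φ x d) : c = d := by
  classical
  exact (S.shift hx).dbl_unique H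
    (S.dbl_shift _ (by intro z h1 h2; simp [h1, h2]) hc)
    (S.dbl_shift _ (by intro z h1 h2; simp [h1, h2]) hd)

theorem BKSt.no_triple' (H : BKCrit G n) (S : BKSt G n v φ) {x : V} (hx : BKUq G v φ x) {a b c : V}
    (ha : G.Adj x a) (hb : G.Adj x b) (hc : G.Adj x c) (hab : a ≠ b) (hac : a ≠ c) (hbc : b ≠ c)
    (h1 : φ b = φ a) (h2 : φ c = φ a) : False := by
  classical
  have hne : ∀ z, (z = a ∨ z = b ∨ z = c) → z ≠ v := by
    intro z hz h
    have := S.uniq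
    have := S.top
    grind
  have e1 := hne a (by simp)
  have e2 := hne b (by simp)
  have e3 := hne c (by simp)
  refine (S.shift hx).no_triple H ha hb hc hab hac hbc ?_ ?_
  · simp [(G.ne_of_adj ha).symm, (G.ne_of_adj hb).symm, e1, e2, h1]
  · simp [(G.ne_of_adj ha).symm, (G.ne_of_adj hc).symm, e1, e3, h2]

theorem BKSt.card_uq [Fintype V] (H : BKCrit G n) (S : BKSt G n v φ) :
    ∃ X : Finset V, (∀ x, x ∈ X ↔ BKUq G v φ x) ∧ n ≤ X.card + 1 := by
  classical
  refine ⟨Finset.univ.filter (BKUq G v φ), by simp, ?_⟩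
  set X := Finset.univ.filter (BKUq G v φ) with hX
  have hbad : (Finset.range n \ X.image φ).card ≤ 1 := by
    rw [Finset.card_le_one]
    have key : ∀ c ∈ Finset.range n \ X.image φ, BKDbl G φ v c := by
      intro c hc
      rw [Finset.mem_sdiff, Finset.mem_range] at hc
      obtain ⟨x, hx, hxc⟩ := S.see H hc.1
      by_contra hno
      apply hc.2
      refine Finset.mem_image.2 ⟨x, ?_, hxc⟩
      rw [hX, Finset.mem_filter]
      refine ⟨Finset.mem_univ _, hx, fun y hy hyx => ?_⟩
      by_contra hne
      exact hno ⟨y, x, hne, hy, hx, hyx.trans hxc, hxc⟩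
    intro a ha b hb
    exact S.dbl_unique H (key a ha) (key b hb)
  have h1 := Finset.card_le_card_sdiff_add_card (t := X.image φ) (s := Finset.range n)
  have h2 := Finset.card_image_le (s := X) (f := φ)
  rw [Finset.card_range] at h1
  omega

theorem BKSt.uq_inj {x y : V} (hx : BKUq G v φ x) (hy : BKUq G v φ y)
    (h : φ x = φ y) : x = y := hy.2 x hx.1 h

end

section
variable {V : Type*} {G : SimpleGraph V} {n : ℕ} {v : V} {φ : V → ℕ}

/-- every non-adjacent pair of unique neighbours is bad -/
def BKBad (G : SimpleGraph V) (v : V) (φ : V → ℕ) : Prop :=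
  ∀ x y, BKUq G v φ x → BKUq G v φ y → x ≠ y → ¬ G.Adj x y →
    BKDbl G φ x (φ y) ∨ BKDbl G φ y (φ x)

theorem BKSt.uq_lt (S : BKSt G n v φ) {x : V} (hx : BKUq G v φ x) : φ x < n :=
  S.lt (G.ne_of_adj hx.1).symm

theorem BKUq.color_ne {x y : V} (hx : BKUq G v φ x) (hy : BKUq G v φ y) (h : x ≠ y) :
    φ x ≠ φ y := fun e => h (hy.2 x hx.1 e)

theorem BKSt.setupB (H : BKCrit G n) (S : BKSt G n v φ) (hbad : BKBad G v φ) {x y : V}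
    (hx : BKUq G v φ x) (hy : BKUq G v φ y) (hxy : x ≠ y) (hna : ¬ G.Adj x y)
    (hd : BKDbl G φ x (φ y)) :
    ∃ a b b', b ≠ b' ∧ G.Adj x b ∧ G.Adj x b' ∧ φ b = φ y ∧ φ b' = φ y ∧ G.Adj y a ∧ φ a = φ x ∧
      G.Adj a b ∧ G.Adj a b' ∧ ¬ G.Adj v b ∧ ¬ G.Adj v b' ∧ ¬ G.Adj v a ∧ a ≠ x ∧
      (∀ w, BKUq G v φ w → w ≠ x → w ≠ y → (G.Adj w b ∧ G.Adj w b') →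
        G.Adj w x ∧ ¬ G.Adj w y ∧ BKDbl G φ w (φ y)) ∧
      (∀ w, BKUq G v φ w → w ≠ x → w ≠ y → ¬ (G.Adj w b ∧ G.Adj w b') →
        G.Adj w a ∧ BKDbl G φ w (φ x)) := by
  obtain ⟨b, b', hbb, hxb, hxb', hb, hb'⟩ := hd
  obtain ⟨a, hya, ha⟩ := S.see' H hy (S.uq_lt hx) (hx.color_ne hy hxy)
  have same : ∀ {p q : V}, φ p = φ q → ¬ G.Adj p q := fun h h' => S.prop _ _ h' h
  have hbny : b ≠ y := by rintro rfl; exact hna hxb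
  have hbny' : b' ≠ y := by rintro rfl; exact hna hxb'
  have hanx : a ≠ x := by rintro rfl; exact hna hya.symm
  have hab : ∀ b, G.Adj x b → φ b = φ y → G.Adj a b := by
    intro b hxb hb
    rcases H.free x b y a hxb hya with h | h | h | h
    · exact absurd h hna
    · exact absurd h (same ha.symm)
    · exact absurd h (same hb)
    · exact h.symm
  have hvb : ¬ G.Adj v b := fun h => hbny (hy.2 b h hb)
  have hvb' : ¬ G.Adj v b' := fun h => hbny' (hy.2 b' h hb')
  have hva : ¬ G.Adj v a := fun h => hanx (hx.2 a h ha)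
  refine ⟨a, b, b', hbb, hxb, hxb', hb, hb', hya, ha, hab b hxb hb, hab b' hxb' hb', hvb, hvb',
    hva, hanx, ?_, ?_⟩
  · rintro w hw hwx hwy ⟨h1, h2⟩
    have hdw : BKDbl G φ w (φ y) := ⟨b, b', hbb, h1, h2, hb, hb'⟩
    refine ⟨?_, ?_, hdw⟩
    · by_contra hno
      rcases hbad w x hw hx hwx hno with h | h
      · exact hx.color_ne hy hxy (S.dbl_unique' H hw h hdw)
      · exact hw.color_ne hy hwy (S.dbl_unique' H hx h ⟨b, b', hbb, hxb, hxb', hb, hb'⟩)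
    · intro h
      exact S.no_triple' H hw h1 h2 h hbb hbny hbny' (hb'.trans hb.symm) hb.symm
  · intro w hw hwx hwy hn
    have hwa : G.Adj w a := by
      by_contra hwa
      apply hn
      have key : ∀ b, G.Adj a b → ¬ G.Adj v b → G.Adj w b := by
        intro b hab hvb
        rcases H.free v w a b hw.1 hab with h | h | h | h
        · exact absurd h hva
        · exact absurd h hvb
        · exact absurd h hwa
        · exact h
      exact ⟨key b (hab b hxb hb) hvb, key b' (hab b' hxb' hb') hvb'⟩
    refine ⟨hwa, ?_⟩
    by_cases hwx' : G.Adj w x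
    · exact ⟨a, x, hanx, hwa, hwx', ha, rfl⟩
    · rcases hbad w x hw hx hwx hwx' with h | h
      · exact h
      · exact absurd (S.dbl_unique' H hx h ⟨b, b', hbb, hxb, hxb', hb, hb'⟩)
          (hw.color_ne hy hwy)

open Classical in
theorem BKSt.B1a [Fintype V] (H : BKCrit G n) (S : BKSt G n v φ) (hbad : BKBad G v φ) {x y : V}
    (hx : BKUq G v φ x) (hy : BKUq G v φ y) (hxy : x ≠ y) (hna : ¬ G.Adj x y)
    (hd : BKDbl G φ x (φ y)) {m : V} (hm : BKUq G v φ m) (hmx : m ≠ x) (hmy : m ≠ y)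
    (hym : ¬ BKDbl G φ y (φ m)) (hmd : ¬ BKDbl G φ m (φ x)) : False := by
  obtain ⟨a, b, b', hbb, hxb, hxb', hb, hb', hya, ha, hab, hab', hvb, hvb', hva, hanx, hβ, hα⟩ :=
    S.setupB H hbad hx hy hxy hna hd
  have same : ∀ {p q : V}, φ p = φ q → ¬ G.Adj p q := fun h h' => S.prop _ _ h' h
  have hmb : G.Adj m b ∧ G.Adj m b' := by
    by_contra h
    exact hmd (hα m hm hmx hmy h).2
  -- the second neighbour
  have second : ∀ w, BKUq G v φ w → w ≠ y → ¬ G.Adj w y → G.Adj w b →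
      ∃ aw, G.Adj y aw ∧ φ aw = φ w ∧ G.Adj b aw ∧ ¬ G.Adj v aw ∧ aw ≠ w := by
    intro w hw hwy hnwy hwb
    obtain ⟨aw, h1, h2⟩ := S.see' H hy (S.uq_lt hw) (hw.color_ne hy hwy)
    have hne : aw ≠ w := by rintro rfl; exact hnwy h1.symm
    refine ⟨aw, h1, h2, ?_, fun h => hne (hw.2 aw h h2), hne⟩
    rcases H.free w b y aw hwb h1 with h | h | h | h
    · exact absurd h hnwy
    · exact absurd h (same h2.symm)
    · exact absurd h (same hb)
    · exact h
  have hmβ := hβ m hm hmx hmy hmb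
  obtain ⟨am, hyam, ham, hbam, hvam, hamm⟩ := second m hm hmy hmβ.2.1 hmb.1
  -- everybody is of type β
  have all : ∀ w, BKUq G v φ w → w ≠ x → w ≠ y → ¬ BKDbl G φ y (φ w) →
      (G.Adj w b ∧ G.Adj w b') := by
    intro w hw hwx hwy hyw
    by_contra hn
    obtain ⟨hwa, hwd⟩ := hα w hw hwx hwy hn
    have hwy' : G.Adj w y := by
      by_contra h
      rcases hbad w y hw hy hwy h with h | h
      · exact hx.color_ne hy hxy (S.dbl_unique' H hw hwd h)
      · exact hyw h
    have hby : b ≠ y := by rintro rfl; exact hna hxb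
    have hwb : ¬ G.Adj w b := fun h =>
      hx.color_ne hy hxy (S.dbl_unique' H hw hwd ⟨b, y, hby, h, hwy', hb, rfl⟩)
    have hwm : w ≠ m := by rintro rfl; exact hwb hmb.1
    have hwam : G.Adj w am := by
      rcases H.free v w b am hw.1 hbam with h | h | h | h
      · exact absurd h hvb
      · exact absurd h hvam
      · exact absurd h hwb
      · exact h
    have hwmadj : G.Adj w m := by
      by_contra h
      rcases hbad w m hw hm hwm h with h | h
      · exact hx.color_ne hm hmx.symm (S.dbl_unique' H hw hwd h)
      · exact hw.color_ne hy hwy (S.dbl_unique' H hm h hmβ.2.2)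
    exact hx.color_ne hm hmx.symm
      (S.dbl_unique' H hw hwd ⟨am, m, hamm, hwam, hwmadj, ham, rfl⟩)
  obtain ⟨X, hX, hXc⟩ := S.card_uq H
  -- the set of relevant vertices
  set Y := X.filter (fun w => w ≠ y ∧ (w = x ∨ ¬ BKDbl G φ y (φ w))) with hY
  have hYc : X.card ≤ Y.card + 2 := by
    have h1 : (X \ Y).card ≤ 2 := by
      have hone : ((X \ Y).erase y).card ≤ 1 := by
        rw [Finset.card_le_one]
        intro p hp q hq
        simp only [hY, Finset.mem_erase, Finset.mem_sdiff, Finset.mem_filter, not_and, not_or,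
          not_not] at hp hq
        have h1 := (hp.2.2 hp.2.1 hp.1).2
        have h2 := (hq.2.2 hq.2.1 hq.1).2
        exact BKSt.uq_inj ((hX p).1 hp.2.1) ((hX q).1 hq.2.1) (S.dbl_unique' H hy h1 h2)
      have := Finset.card_le_card_sdiff_add_card (s := X \ Y) (t := {y})
      rw [Finset.card_singleton, Finset.sdiff_singleton_eq_erase] at this
      omega
    have := Finset.card_le_card_sdiff_add_card (s := X) (t := Y)
    omega
  have hYp : ∀ w ∈ Y, BKUq G v φ w ∧ G.Adj b w ∧ ∃ aw, φ aw = φ w ∧ G.Adj b aw ∧ ¬ G.Adj v aw := by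
    intro w hw
    simp only [hY, Finset.mem_filter, hX] at hw
    obtain ⟨hwu, hwy, h⟩ := hw
    by_cases hwx : w = x
    · subst hwx
      exact ⟨hwu, hxb.symm, a, ha, hab.symm, hva⟩
    · have h' := h.resolve_left hwx
      have h1 := all w hwu hwx hwy h'
      have h2 := hβ w hwu hwx hwy h1
      obtain ⟨aw, _, h3, h4, h5, _⟩ := second w hwu hwy h2.2.1 h1.1
      exact ⟨hwu, h1.1.symm, aw, h3, h4, h5⟩
  have hg : ∀ w, ∃ aw, w ∈ Y → (φ aw = φ w ∧ G.Adj b aw ∧ ¬ G.Adj v aw) := by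
    intro w
    by_cases hw : w ∈ Y
    · obtain ⟨_, _, aw, h⟩ := hYp w hw
      exact ⟨aw, fun _ => h⟩
    · exact ⟨w, fun h => absurd h hw⟩
  choose g hg using hg
  have hgc : (Y.image g).card = Y.card := by
    apply Finset.card_image_of_injOn
    intro p hp q hq hpq
    apply BKSt.uq_inj (hYp p hp).1 (hYp q hq).1
    rw [← (hg p hp).1, ← (hg q hq).1, hpq]
  have hdis : Disjoint Y (Y.image g) := by
    rw [Finset.disjoint_left]
    intro p hp hpg
    obtain ⟨q, hq, rfl⟩ := Finset.mem_image.1 hpg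
    exact (hg q hq).2.2 (hYp _ hp).1.1
  have hdeg := H.deg b (Y ∪ Y.image g) (by
    intro p hp
    rcases Finset.mem_union.1 hp with hp | hp
    · exact (hYp p hp).2.1
    · obtain ⟨q, hq, rfl⟩ := Finset.mem_image.1 hp
      exact (hg q hq).2.1)
  rw [Finset.card_union_of_disjoint hdis, hgc] at hdeg
  have := H.hn
  omega

open Classical in
theorem BKSt.B1 [Fintype V] (H : BKCrit G n) (hcrit : ∀ w, ∃ ψ, BKSt G n w ψ)
    (S : BKSt G n v φ) (hbad : BKBad G v φ) {x y : V}
    (hx : BKUq G v φ x) (hy : BKUq G v φ y) (hxy : x ≠ y) (hna : ¬ G.Adj x y)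
    (hd : BKDbl G φ x (φ y)) : False := by
  have same : ∀ {p q : V}, φ p = φ q → ¬ G.Adj p q := fun h h' => S.prop _ _ h' h
  obtain ⟨X, hX, hXc⟩ := S.card_uq H
  set Y := X.filter (fun w => w ≠ x ∧ w ≠ y ∧ ¬ BKDbl G φ y (φ w)) with hY
  have hYc : X.card ≤ Y.card + 3 := by
    have h1 : (X \ Y).card ≤ 3 := by
      have hone : ((X \ Y) \ {x, y}).card ≤ 1 := by
        rw [Finset.card_le_one]
        intro p hp q hq
        simp only [hY, Finset.mem_sdiff, Finset.mem_filter, not_and, not_or,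
          not_not, Finset.mem_insert, Finset.mem_singleton] at hp hq
        have h1 := (hp.1.2 hp.1.1 hp.2.1 hp.2.2)
        have h2 := (hq.1.2 hq.1.1 hq.2.1 hq.2.2)
        exact BKSt.uq_inj ((hX p).1 hp.1.1) ((hX q).1 hq.1.1) (S.dbl_unique' H hy h1 h2)
      have h2 := Finset.card_le_card_sdiff_add_card (s := X \ Y) (t := {x, y})
      have h3 : ({x, y} : Finset V).card ≤ 2 := Finset.card_le_two
      omega
    have := Finset.card_le_card_sdiff_add_card (s := X) (t := Y)
    omega
  have hn := H.hn
  have hYu : ∀ w ∈ Y, BKUq G v φ w ∧ w ≠ x ∧ w ≠ y ∧ ¬ BKDbl G φ y (φ w) := by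
    intro w hw
    simpa only [hY, Finset.mem_filter, hX] using hw
  have hYd : ∀ w ∈ Y, BKDbl G φ w (φ x) := by
    intro w hw
    obtain ⟨h1, h2, h3, h4⟩ := hYu w hw
    by_contra h5
    exact S.B1a H hbad hx hy hxy hna hd h1 h2 h3 h4 h5
  have hYx : ∀ w ∈ Y, G.Adj w x := by
    intro w hw
    by_contra hno
    obtain ⟨h1, h2, h3, h4⟩ := hYu w hw
    obtain ⟨m, hm, hmw⟩ := Finset.exists_mem_ne (s := Y) (by omega) w
    obtain ⟨k1, k2, k3, k4⟩ := hYu m hm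
    refine S.B1a H hbad h1 hx h2 hno (hYd w hw) k1 hmw k2 ?_ ?_
    · intro h
      exact k1.color_ne hy k3 (S.dbl_unique' H hx h hd)
    · intro h
      exact h1.color_ne hx h2 (S.dbl_unique' H k1 h (hYd m hm))
  obtain ⟨a, b, b', hbb, hxb, hxb', hb, hb', hya, ha, hab, hab', hvb, hvb', hva, hanx, hβ, hα⟩ :=
    S.setupB H hbad hx hy hxy hna hd
  have hby : b ≠ y := by rintro rfl; exact hna hxb
  have hYna : ∀ w ∈ Y, ¬ (G.Adj w b ∧ G.Adj w b') := by
    intro w hw h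
    obtain ⟨h1, h2, h3, h4⟩ := hYu w hw
    exact hx.color_ne hy hxy (S.dbl_unique' H h1 (hYd w hw) (hβ w h1 h2 h3 h).2.2)
  have hYy : ∀ w ∈ Y, G.Adj w y := by
    intro w hw
    obtain ⟨h1, h2, h3, h4⟩ := hYu w hw
    by_contra h
    rcases hbad w y h1 hy h3 h with h | h
    · exact hx.color_ne hy hxy (S.dbl_unique' H h1 (hYd w hw) h)
    · exact h4 h
  have hYb : ∀ w ∈ Y, ¬ G.Adj w b := by
    intro w hw h
    obtain ⟨h1, h2, h3, h4⟩ := hYu w hw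
    exact hx.color_ne hy hxy
      (S.dbl_unique' H h1 (hYd w hw) ⟨b, y, hby, h, hYy w hw, hb, rfl⟩)
  have hYY : ∀ w ∈ Y, ∀ m ∈ Y, w ≠ m → G.Adj w m := by
    intro w hw m hm hwm
    obtain ⟨h1, h2, h3, h4⟩ := hYu w hw
    obtain ⟨k1, k2, k3, k4⟩ := hYu m hm
    by_contra h
    rcases hbad w m h1 k1 hwm h with h | h
    · exact k1.color_ne hx k2 (S.dbl_unique' H h1 h (hYd w hw))
    · exact h1.color_ne hx h2 (S.dbl_unique' H k1 h (hYd m hm))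
  -- neighbours of `b`
  have hz : ∀ z, G.Adj b z → ∀ w ∈ Y, ∀ m ∈ Y, w ≠ m → G.Adj z w ∨ G.Adj z m := by
    intro z hbz w hw m hm hwm
    rcases H.free b z w m hbz (hYY w hw m hm hwm) with h | h | h | h
    · exact absurd h.symm (hYb w hw)
    · exact absurd h.symm (hYb m hm)
    · exact Or.inl h
    · exact Or.inr h
  -- a doubled colour of a member of `Y` is the colour of `x`
  have hdY : ∀ w ∈ Y, ∀ c, BKDbl G φ w c → c = φ x := fun w hw c h =>
    S.dbl_unique' H (hYu w hw).1 h (hYd w hw)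
  have hzc : ∀ z, G.Adj b z → z ≠ a → z ≠ x →
      φ z ∉ Y.image φ ∧ φ z ≠ φ x ∧ φ z ≠ φ y ∧ φ z < n := by
    intro z hbz hza hzx
    refine ⟨?_, ?_, ?_, ?_⟩
    · intro h
      obtain ⟨m, hm, hmz⟩ := Finset.mem_image.1 h
      obtain ⟨w, hw, hwm⟩ := Finset.exists_mem_ne (s := Y) (by omega) m
      rcases hz z hbz w hw m hm hwm with h | h
      · have hzm : z ≠ m := by rintro rfl; exact hYb z hm hbz.symm
        have := hdY w hw (φ m) ⟨z, m, hzm, h.symm, hYY w hw m hm hwm, hmz.symm, rfl⟩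
        exact (hYu m hm).1.color_ne hx (hYu m hm).2.1 this
      · exact same hmz h.symm
    · intro h
      obtain ⟨w, hw⟩ := Finset.card_pos.1 (show 0 < Y.card by omega)
      obtain ⟨m, hm, hmw⟩ := Finset.exists_mem_ne (s := Y) (by omega) w
      have key : ∀ w ∈ Y, ¬ G.Adj z w := by
        intro w hw hzw
        obtain ⟨h1, h2, h3, h4⟩ := hYu w hw
        exact S.no_triple' H h1 (hYx w hw) (hα w h1 h2 h3 (hYna w hw)).1 hzw.symm hanx.symm
          hzx.symm hza.symm ha h
      rcases hz z hbz w hw m hm hmw.symm with h | h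
      · exact key w hw h
      · exact key m hm h
    · intro h
      exact same (hb.trans h.symm) hbz
    · apply S.lt
      rintro rfl
      exact hvb hbz.symm
  obtain ⟨ψ, T⟩ := hcrit b
  -- the neighbours of `b`
  set N := Finset.univ.filter (fun z => G.Adj b z) with hN
  have hNc : n ≤ N.card := by
    have : Finset.range n ⊆ N.image ψ := by
      intro c hc
      obtain ⟨z, hz, hzc⟩ := T.see H (Finset.mem_range.1 hc)
      exact Finset.mem_image.2 ⟨z, by simp [hN, hz], hzc⟩
    have h1 := Finset.card_le_card this
    have h2 := Finset.card_image_le (s := N) (f := ψ)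
    rw [Finset.card_range] at h1
    omega
  set N' := N \ {a, x} with hN'
  have hN'p : ∀ z ∈ N', G.Adj b z ∧ z ≠ a ∧ z ≠ x := by
    intro z hz
    simpa [hN', hN] using hz
  have hinj : (N'.image φ).card = N'.card := by
    apply Finset.card_image_of_injOn
    intro p hp q hq hpq
    obtain ⟨p1, p2, p3⟩ := hN'p p hp
    obtain ⟨q1, q2, q3⟩ := hN'p q hq
    by_contra hne
    have hex : ∃ w ∈ Y, G.Adj p w ∧ G.Adj q w := by
      by_contra hno
      push Not at hno
      have c1 : (Y.filter (fun w => ¬ G.Adj p w)).card ≤ 1 := by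
        rw [Finset.card_le_one]
        intro s hs t ht
        rw [Finset.mem_filter] at hs ht
        by_contra hst
        rcases hz p p1 s hs.1 t ht.1 hst with h | h
        · exact hs.2 h
        · exact ht.2 h
      have c2 : (Y.filter (fun w => ¬ G.Adj q w)).card ≤ 1 := by
        rw [Finset.card_le_one]
        intro s hs t ht
        rw [Finset.mem_filter] at hs ht
        by_contra hst
        rcases hz q q1 s hs.1 t ht.1 hst with h | h
        · exact hs.2 h
        · exact ht.2 h
      have c3 : Y ⊆ Y.filter (fun w => ¬ G.Adj p w) ∪ Y.filter (fun w => ¬ G.Adj q w) := by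
        intro w hw
        by_cases h : G.Adj p w
        · exact Finset.mem_union_right _ (Finset.mem_filter.2 ⟨hw, hno w hw h⟩)
        · exact Finset.mem_union_left _ (Finset.mem_filter.2 ⟨hw, h⟩)
      have c4 := Finset.card_le_card c3
      have c5 := Finset.card_union_le (Y.filter (fun w => ¬ G.Adj p w))
        (Y.filter (fun w => ¬ G.Adj q w))
      omega
    obtain ⟨w, hw, h1, h2⟩ := hex
    have := hdY w hw (φ p) ⟨p, q, hne, h1.symm, h2.symm, rfl, hpq.symm⟩
    exact (hzc p p1 p2 p3).2.1 this
  have hYinj : (Y.image φ).card = Y.card := by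
    apply Finset.card_image_of_injOn
    intro p hp q hq hpq
    exact BKSt.uq_inj (hYu p hp).1 (hYu q hq).1 hpq
  have hsub : insert (φ x) (insert (φ y) (N'.image φ ∪ Y.image φ)) ⊆ Finset.range n := by
    intro c hc
    simp only [Finset.mem_insert, Finset.mem_union, Finset.mem_image] at hc
    rw [Finset.mem_range]
    rcases hc with rfl | rfl | ⟨z, hz, rfl⟩ | ⟨z, hz, rfl⟩
    · exact S.uq_lt hx
    · exact S.uq_lt hy
    · obtain ⟨p1, p2, p3⟩ := hN'p z hz
      exact (hzc z p1 p2 p3).2.2.2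
    · exact S.uq_lt (hYu z hz).1
  have hcard : (insert (φ x) (insert (φ y) (N'.image φ ∪ Y.image φ))).card
      = N'.card + Y.card + 2 := by
    rw [Finset.card_insert_of_notMem, Finset.card_insert_of_notMem,
      Finset.card_union_of_disjoint, hinj, hYinj]
    · rw [Finset.disjoint_left]
      intro c hc hc'
      obtain ⟨z, hz, rfl⟩ := Finset.mem_image.1 hc
      obtain ⟨p1, p2, p3⟩ := hN'p z hz
      exact (hzc z p1 p2 p3).1 hc'
    · simp only [Finset.mem_union, Finset.mem_image, not_or, not_exists, not_and]
      refine ⟨fun z hz h => ?_, fun z hz h => ?_⟩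
      · obtain ⟨p1, p2, p3⟩ := hN'p z hz
        exact (hzc z p1 p2 p3).2.2.1 h
      · exact (hYu z hz).1.color_ne hy (hYu z hz).2.2.1 h
    · simp only [Finset.mem_insert, Finset.mem_union, Finset.mem_image, not_or, not_exists, not_and]
      refine ⟨hx.color_ne hy hxy, fun z hz h => ?_, fun z hz h => ?_⟩
      · obtain ⟨p1, p2, p3⟩ := hN'p z hz
        exact (hzc z p1 p2 p3).2.1 h
      · exact (hYu z hz).1.color_ne hx (hYu z hz).2.1 h
  have h5 := Finset.card_le_card hsub
  rw [hcard, Finset.card_range] at h5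
  have h6 := Finset.card_le_card_sdiff_add_card (s := N) (t := {a, x})
  have h7 : ({a, x} : Finset V).card ≤ 2 := Finset.card_le_two
  rw [← hN'] at h6
  omega

theorem BKSt.caseB [Fintype V] (H : BKCrit G n) (hcrit : ∀ w, ∃ ψ, BKSt G n w ψ)
    (S : BKSt G n v φ) (hbad : BKBad G v φ) {x y : V}
    (hx : BKUq G v φ x) (hy : BKUq G v φ y) (hxy : x ≠ y) : G.Adj x y := by
  by_contra hna
  rcases hbad x y hx hy hxy hna with h | h
  · exact S.B1 H hcrit hbad hx hy hxy hna h
  · exact S.B1 H hcrit hbad hy hx hxy.symm (fun h => hna h.symm) h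

end

section
variable {V : Type*} {G : SimpleGraph V} {n : ℕ} {v : V} {φ : V → ℕ}

open Classical in
/-- Recolouring of the three classes `i`, `j`, `n` so that `t` becomes the special vertex. -/
noncomputable def bkRecol (n : ℕ) (φ : V → ℕ) (i j : ℕ) (t : V) (J : V → Prop) (z : V) : ℕ :=
  if z = t then n else if (φ z = i ∨ φ z = j ∨ φ z = n) then (if J z then j else i) else φ z

/-- `J` gives a proper 2-colouring of the three classes minus `t`. -/
def BKGood (G : SimpleGraph V) (n : ℕ) (φ : V → ℕ) (i j : ℕ) (t : V) (J : V → Prop) : Prop :=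
  ∀ p q, G.Adj p q → (φ p = i ∨ φ p = j ∨ φ p = n) → (φ q = i ∨ φ q = j ∨ φ q = n) →
    p ≠ t → q ≠ t → (J p ↔ ¬ J q)

theorem BKSt.recol (S : BKSt G n v φ) {i j : ℕ} (hi : i < n) (hj : j < n) (hij : i ≠ j) {t : V}
    (ht : φ t = i ∨ φ t = j ∨ φ t = n) {J : V → Prop} (hJ : BKGood G n φ i j t J) :
    BKSt G n t (bkRecol n φ i j t J) := by
  refine ⟨?_, ?_, ?_, ?_⟩
  · intro p q hpq
    have h1 := S.prop p q hpq
    have h2 := hJ p q hpq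
    have h3 := G.ne_of_adj hpq
    have h4 := S.le p
    have h5 := S.le q
    by_cases hp : p = t
    · have hq : q ≠ t := fun h => h3 (hp.trans h.symm)
      simp only [bkRecol, hp, hq, if_true, if_false]
      split_ifs <;> omega
    · by_cases hq : q = t
      · simp only [bkRecol, hp, hq, if_true, if_false]
        split_ifs <;> omega
      · by_cases mp : φ p = i ∨ φ p = j ∨ φ p = n
        · by_cases mq : φ q = i ∨ φ q = j ∨ φ q = n
          · have h6 := h2 mp mq hp hq
            by_cases jq : J q
            · have jp : ¬ J p := fun h => h6.1 h jq
              simp only [bkRecol, hp, hq, mp, mq, jp, jq, if_true, if_false]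
              exact hij
            · have jp : J p := h6.2 jq
              simp only [bkRecol, hp, hq, mp, mq, jp, jq, if_true, if_false]
              exact hij.symm
          · simp only [bkRecol, hp, hq, mp, mq, if_true, if_false]
            split_ifs <;> omega
        · by_cases mq : φ q = i ∨ φ q = j ∨ φ q = n
          · simp only [bkRecol, hp, hq, mp, mq, if_true, if_false]
            split_ifs <;> omega
          · simp only [bkRecol, hp, hq, mp, mq, if_false]
            exact h1
  · intro z
    have := S.le z
    unfold bkRecol
    split_ifs <;> omega
  · simp [bkRecol]
  · intro z hz
    unfold bkRecol at hz
    split_ifs at hz with h1 h2 h3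
    · exact h1
    · omega
    · omega
    · exact absurd (Or.inr (Or.inr hz)) h2

theorem bkRecol_other {i j : ℕ} {t : V} {J : V → Prop} {z : V}
    (ht : φ t = i ∨ φ t = j ∨ φ t = n)
    (h : ¬ (φ z = i ∨ φ z = j ∨ φ z = n)) : bkRecol n φ i j t J z = φ z := by
  have : z ≠ t := by rintro rfl; exact h ht
  simp [bkRecol, this, h]

theorem bkRecol_inv {i j : ℕ} {t : V} {J : V → Prop} {z : V} {l : ℕ} (hi : l ≠ i) (hj : l ≠ j)
    (hn : l ≠ n) (h : bkRecol n φ i j t J z = l) : φ z = l := by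
  unfold bkRecol at h
  split_ifs at h <;> first | omega | exact h

theorem BKSt.recol_see (H : BKCrit G n) (S : BKSt G n v φ) {i j : ℕ} (hi : i < n) (hj : j < n)
    (hij : i ≠ j) {t : V}
    (ht : φ t = i ∨ φ t = j ∨ φ t = n) {J : V → Prop} (hJ : BKGood G n φ i j t J)
    {l : ℕ} (hl : l < n) (hli : l ≠ i) (hlj : l ≠ j) : ∃ p, G.Adj t p ∧ φ p = l := by
  obtain ⟨p, h1, h2⟩ := (S.recol hi hj hij ht hJ).see H hl
  exact ⟨p, h1, bkRecol_inv hli hlj (by omega) h2⟩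

theorem BKSt.recol_dbl (H : BKCrit G n) (S : BKSt G n v φ) {i j : ℕ} (hi : i < n) (hj : j < n)
    (hij : i ≠ j) {t : V}
    (ht : φ t = i ∨ φ t = j ∨ φ t = n) {J : V → Prop} (hJ : BKGood G n φ i j t J)
    {l l' : ℕ} (hl : l < n) (hli : l ≠ i) (hlj : l ≠ j) (hl' : l' < n) (hli' : l' ≠ i)
    (hlj' : l' ≠ j) (hd : BKDbl G φ t l) (hd' : BKDbl G φ t l') : l = l' := by
  have key : ∀ l, l < n → l ≠ i → l ≠ j → BKDbl G φ t l →
      BKDbl G (bkRecol n φ i j t J) t l := by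
    rintro l hl hli hlj ⟨y, z, hyz, hy, hz, hyl, hzl⟩
    refine ⟨y, z, hyz, hy, hz, ?_, ?_⟩
    · rw [bkRecol_other ht (by omega), hyl]
    · rw [bkRecol_other ht (by omega), hzl]
  exact (S.recol hi hj hij ht hJ).dbl_unique H (key l hl hli hlj hd) (key l' hl' hli' hlj' hd')

theorem BKSt.recol_uq (S : BKSt G n v φ) {i j : ℕ} {t : V}
    (ht : φ t = i ∨ φ t = j ∨ φ t = n) {J : V → Prop} {p : V} (hp : φ p < n) (hpi : φ p ≠ i)
    (hpj : φ p ≠ j) (htp : G.Adj t p) (hu : ∀ q, G.Adj t q → φ q = φ p → q = p) :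
    BKUq G t (bkRecol n φ i j t J) p := by
  refine ⟨htp, fun q hq h => hu q hq ?_⟩
  rw [bkRecol_other ht (z := p) (by omega)] at h
  exact bkRecol_inv hpi hpj (by omega) h

theorem BKSt.recol_J (H : BKCrit G n) (S : BKSt G n v φ) {i j : ℕ} (hi : i < n) (hj : j < n)
    (hij : i ≠ j) {t : V}
    (ht : φ t = i ∨ φ t = j ∨ φ t = n) {J : V → Prop} (hJ : BKGood G n φ i j t J)
    {p : V} (hp : φ p < n) (hpi : φ p ≠ i)
    (hpj : φ p ≠ j) (htp : G.Adj t p) (hu : ∀ q, G.Adj t q → φ q = φ p → q = p) :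
    ∃ z, G.Adj p z ∧ z ≠ t ∧ J z := by
  have hU := S.recol_uq (J := J) ht hp hpi hpj htp hu
  obtain ⟨z, h1, h2⟩ := (S.recol hi hj hij ht hJ).see' H hU hj (by
    rw [bkRecol_other ht (by omega)]; omega)
  refine ⟨z, h1, ?_⟩
  unfold bkRecol at h2
  split_ifs at h2 with h3 h4 h5
  · omega
  · exact ⟨h3, h5⟩
  · omega
  · omega

open Classical in
theorem BKSt.recol_four (H : BKCrit G n) (S : BKSt G n v φ) {i j : ℕ} (hi : i < n) (hj : j < n)
    (hij : i ≠ j) {t : V}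
    (ht : φ t = i ∨ φ t = j ∨ φ t = n) {J : V → Prop} (hJ : BKGood G n φ i j t J)
    {p : V} (hp : φ p < n) (hpi : φ p ≠ i)
    (hpj : φ p ≠ j) (htp : G.Adj t p) (hu : ∀ q, G.Adj t q → φ q = φ p → q = p)
    (A : Finset V) (hA : ∀ z ∈ A, G.Adj p z ∧ (φ z = i ∨ φ z = j ∨ φ z = n)) : A.card ≤ 4 := by
  have hU := S.recol_uq (J := J) ht hp hpi hpj htp hu
  have h := ((S.recol hi hj hij ht hJ).shift hU).degc H A (fun z hz => (hA z hz).1)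
  refine h.trans ?_
  have : (A.image (fun z => if z = p then n else if z = t then bkRecol n φ i j t J p
      else bkRecol n φ i j t J z)) ⊆ {i, j, φ p} := by
    intro c hc
    obtain ⟨z, hz, rfl⟩ := Finset.mem_image.1 hc
    obtain ⟨h1, h2⟩ := hA z hz
    have h3 : z ≠ p := (G.ne_of_adj h1).symm
    rw [bkRecol_other ht (z := p) (by omega)]
    simp only [h3, if_false, Finset.mem_insert, Finset.mem_singleton]
    split_ifs with h4
    · simp
    · unfold bkRecol
      simp only [h4, h2, if_false, if_true]
      split_ifs <;> simp
  have h2 := (Finset.card_le_card this).trans Finset.card_le_three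
  omega

end

section
variable {V : Type*} {G : SimpleGraph V} {n : ℕ} {v : V} {φ : V → ℕ}

/-- Possible adjacencies between the types of vertices in the three special classes. -/
def bkE (s t : Fin 8) : Bool :=
  (s, t) ∈ ([(0, 1), (1, 2), (2, 3), (3, 4), (4, 0), (5, 2), (6, 3), (5, 6)] : List (Fin 8 × Fin 8))
  || (t, s) ∈ ([(0, 1), (1, 2), (2, 3), (3, 4), (4, 0), (5, 2), (6, 3), (5, 6)] :
    List (Fin 8 × Fin 8))

/-- Types of the vertices of the 5-cycle. -/
def bkI (k : Fin 5) : Fin 8 := k.castLE (by decide)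

theorem bkI_inj : Function.Injective bkI := Fin.castLE_injective (by decide)

theorem bkI_far (k : Fin 5) :
    bkE (bkI k) (bkI (k + 2)) = false ∧ bkE (bkI k) (bkI (k + 2 + 1)) = false := by
  revert k
  decide

theorem bkI_five (s1 s2 s3 : Fin 5) (h12 : s1 ≠ s2) (h13 : s1 ≠ s3) (h23 : s2 ≠ s3) :
    Function.Injective ![bkI s1, bkI s2, bkI s3, 5, 6] := by
  revert s1 s2 s3
  decide

theorem bkE_symm : ∀ s t, bkE s t = true → bkE t s = true := by decide

/-- The 5-cycle through `v` in the three classes `i`, `j`, `n`. -/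
structure BKCyc (G : SimpleGraph V) (n : ℕ) (φ : V → ℕ) (i j : ℕ) (v x b a y : V)
    (τ : V → Fin 8) : Prop where
  hi : i < n
  hj : j < n
  hij : i ≠ j
  tv : ∀ z, τ z = 0 ↔ z = v
  tx : ∀ z, τ z = 1 ↔ z = x
  tb : ∀ z, τ z = 2 ↔ z = b
  ta : ∀ z, τ z = 3 ↔ z = a
  ty : ∀ z, τ z = 4 ↔ z = y
  t5 : ∀ z, τ z = 5 → φ z = i
  t6 : ∀ z, τ z = 6 → φ z = j
  fv : φ v = n
  fx : φ x = i
  fb : φ b = j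
  fa : φ a = i
  fy : φ y = j
  vx : G.Adj v x
  xb : G.Adj x b
  ba : G.Adj b a
  ay : G.Adj a y
  yv : G.Adj y v
  ed : ∀ p q, G.Adj p q → (φ p = i ∨ φ p = j ∨ φ p = n) → (φ q = i ∨ φ q = j ∨ φ q = n) →
    bkE (τ p) (τ q) = true

set_option maxHeartbeats 1000000 in
theorem BKSt.setupA (H : BKCrit G n) (S : BKSt G n v φ) {x y : V}
    (hx : BKUq G v φ x) (hy : BKUq G v φ y) (hxy : x ≠ y) (hna : ¬ G.Adj x y)
    (hd : ¬ BKDbl G φ x (φ y)) (hd' : ¬ BKDbl G φ y (φ x)) :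
    ∃ a b τ, BKCyc G n φ (φ x) (φ y) v x b a y τ := by
  classical
  have same : ∀ {p q : V}, φ p = φ q → ¬ G.Adj p q := fun h h' => S.prop _ _ h' h
  have hij := hx.color_ne hy hxy
  obtain ⟨b, hxb, hb⟩ := S.see' H hx (S.uq_lt hy) hij.symm
  obtain ⟨a, hya, ha⟩ := S.see' H hy (S.uq_lt hx) hij
  have hbu : ∀ z, G.Adj x z → φ z = φ y → z = b := by
    intro z h1 h2
    by_contra hne
    exact hd ⟨z, b, hne, h1, hxb, h2, hb⟩
  have hau : ∀ z, G.Adj y z → φ z = φ x → z = a := by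
    intro z h1 h2
    by_contra hne
    exact hd' ⟨z, a, hne, h1, hya, h2, ha⟩
  have hby : b ≠ y := by rintro rfl; exact hna hxb
  have hax : a ≠ x := by rintro rfl; exact hna hya.symm
  have hvb : ¬ G.Adj v b := fun h => hby (hy.2 b h hb)
  have hva : ¬ G.Adj v a := fun h => hax (hx.2 a h ha)
  have hba : G.Adj b a := by
    rcases H.free x b y a hxb hya with h | h | h | h
    · exact absurd h hna
    · exact absurd h (same ha.symm)
    · exact absurd h (same hb)
    · exact h
  have ltx := S.uq_lt hx
  have lty := S.uq_lt hy
  have hvn := S.top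
  have hvx := G.ne_of_adj hx.1
  have hvy := G.ne_of_adj hy.1
  have hbv : b ≠ v := by rintro rfl; omega
  have hav : a ≠ v := by rintro rfl; omega
  have hbx : b ≠ x := by rintro rfl; omega
  have hay : a ≠ y := by rintro rfl; omega
  have hab : a ≠ b := by rintro rfl; omega
  -- edges between the two classes
  have ed1 : ∀ p q, G.Adj p q → φ p = φ x → φ q = φ y → G.Adj p b ∧ G.Adj q a := by
    intro p q hpq hp hq
    constructor
    · by_cases h : p = x
      · rw [h]; exact hxb
      · rcases H.free x b p q hxb hpq with h1 | h1 | h1 | h1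
        · exact absurd h1 (same hp.symm)
        · rw [← hbu q h1 hq]; exact hpq
        · exact h1.symm
        · exact absurd h1 (same (hb.trans hq.symm))
    · by_cases h : q = y
      · rw [h]; exact hya
      · rcases H.free y a q p hya hpq.symm with h1 | h1 | h1 | h1
        · exact absurd h1 (same hq.symm)
        · rw [← hau p h1 hp]; exact hpq.symm
        · exact h1.symm
        · exact absurd h1 (same (ha.trans hp.symm))
  obtain ⟨τ, hτ⟩ : ∃ τ : V → Fin 8, τ = fun z => if z = v then 0 else if z = x then 1 else
    if z = b then 2 else if z = a then 3 else if z = y then 4 else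
    if φ z = φ x ∧ G.Adj z b then 5 else if φ z = φ y ∧ G.Adj z a then 6 else 7 := ⟨_, rfl⟩
  have tv : τ v = 0 := by simp [hτ]
  have tx : τ x = 1 := by simp [hτ, hvx.symm]
  have tb : τ b = 2 := by simp [hτ, hbv, hbx]
  have ta : τ a = 3 := by simp [hτ, hav, hax, hab]
  have ty : τ y = 4 := by simp [hτ, hvy.symm, hxy.symm, hby.symm, hay.symm]
  have t5 : ∀ z, z ≠ x → z ≠ a → φ z = φ x → G.Adj z b → τ z = 5 := by
    intro z h1 h2 h3 h4
    have h5 : z ≠ v := by rintro rfl; omega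
    have h6 : z ≠ b := by rintro rfl; omega
    have h7 : z ≠ y := by rintro rfl; omega
    simp [hτ, h1, h2, h5, h6, h7, h3, h4]
  have t6 : ∀ z, z ≠ y → z ≠ b → φ z = φ y → G.Adj z a → τ z = 6 := by
    intro z h1 h2 h3 h4
    have h5 : z ≠ v := by rintro rfl; omega
    have h6 : z ≠ a := by rintro rfl; omega
    have h7 : z ≠ x := by rintro rfl; omega
    simp [hτ, h1, h2, h5, h6, h7, h3, h4, hij.symm]
  have cl : ∀ z, z = v ∨ z = x ∨ z = b ∨ z = a ∨ z = y ∨ (τ z = 5 ∧ φ z = φ x) ∨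
      (τ z = 6 ∧ φ z = φ y) ∨ τ z = 7 := by
    intro z
    by_cases z1 : z = v
    · exact Or.inl z1
    by_cases z2 : z = x
    · exact Or.inr (Or.inl z2)
    by_cases z3 : z = b
    · exact Or.inr (Or.inr (Or.inl z3))
    by_cases z4 : z = a
    · exact Or.inr (Or.inr (Or.inr (Or.inl z4)))
    by_cases z5 : z = y
    · exact Or.inr (Or.inr (Or.inr (Or.inr (Or.inl z5))))
    by_cases z6 : φ z = φ x ∧ G.Adj z b
    · exact Or.inr (Or.inr (Or.inr (Or.inr (Or.inr (Or.inl ⟨t5 z z2 z4 z6.1 z6.2, z6.1⟩)))))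
    by_cases z7 : φ z = φ y ∧ G.Adj z a
    · exact Or.inr (Or.inr (Or.inr (Or.inr (Or.inr (Or.inr (Or.inl
        ⟨t6 z z5 z3 z7.1 z7.2, z7.1⟩))))))
    have : τ z = 7 := by
      rw [hτ]
      dsimp only
      rw [if_neg z1, if_neg z2, if_neg z3, if_neg z4, if_neg z5, if_neg z6, if_neg z7]
    exact Or.inr (Or.inr (Or.inr (Or.inr (Or.inr (Or.inr (Or.inr this))))))
  have edv : ∀ q, G.Adj v q → (φ q = φ x ∨ φ q = φ y ∨ φ q = n) → bkE (τ v) (τ q) = true := by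
    intro q hq h
    rcases h with h | h | h
    · rw [hx.2 q hq h, tv, tx]; decide
    · rw [hy.2 q hq h, tv, ty]; decide
    · exact absurd (S.uniq q h).symm (G.ne_of_adj hq)
  have edij : ∀ p q, G.Adj p q → φ p = φ x → φ q = φ y → bkE (τ p) (τ q) = true := by
    intro p q hpq hp hq
    obtain ⟨h1, h2⟩ := ed1 p q hpq hp hq
    by_cases px : p = x
    · subst px
      rw [hbu q hpq hq, tx, tb]; decide
    by_cases qy : q = y
    · subst qy
      rw [hau p hpq.symm hp, ta, ty]; decide
    have e1 : τ p = 3 ∨ τ p = 5 := by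
      by_cases pa : p = a
      · left; rw [pa, ta]
      · right; exact t5 p px pa hp h1
    have e2 : τ q = 2 ∨ τ q = 6 := by
      by_cases pa : q = b
      · left; rw [pa, tb]
      · right; exact t6 q qy pa hq h2
    rcases e1 with e1 | e1 <;> rcases e2 with e2 | e2 <;> rw [e1, e2] <;> decide
  refine ⟨a, b, τ, ltx, lty, hij, ?_, ?_, ?_, ?_, ?_, ?_, ?_, hvn, rfl, hb, ha, rfl, hx.1, hxb, hba,
    hya.symm, hy.1.symm, ?_⟩
  · intro z
    refine ⟨fun h => ?_, fun h => h ▸ tv⟩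
    rcases cl z with hz | hz | hz | hz | hz | hz | hz | hz
    · rw [hz, tv] at h; first | exact hz | exact absurd h (by decide)
    · rw [hz, tx] at h; first | exact hz | exact absurd h (by decide)
    · rw [hz, tb] at h; first | exact hz | exact absurd h (by decide)
    · rw [hz, ta] at h; first | exact hz | exact absurd h (by decide)
    · rw [hz, ty] at h; first | exact hz | exact absurd h (by decide)
    · rw [hz.1] at h; exact absurd h (by decide)
    · rw [hz.1] at h; exact absurd h (by decide)
    · rw [hz] at h; exact absurd h (by decide)
  · intro z
    refine ⟨fun h => ?_, fun h => h ▸ tx⟩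
    rcases cl z with hz | hz | hz | hz | hz | hz | hz | hz
    · rw [hz, tv] at h; first | exact hz | exact absurd h (by decide)
    · rw [hz, tx] at h; first | exact hz | exact absurd h (by decide)
    · rw [hz, tb] at h; first | exact hz | exact absurd h (by decide)
    · rw [hz, ta] at h; first | exact hz | exact absurd h (by decide)
    · rw [hz, ty] at h; first | exact hz | exact absurd h (by decide)
    · rw [hz.1] at h; exact absurd h (by decide)
    · rw [hz.1] at h; exact absurd h (by decide)
    · rw [hz] at h; exact absurd h (by decide)
  · intro z
    refine ⟨fun h => ?_, fun h => h ▸ tb⟩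
    rcases cl z with hz | hz | hz | hz | hz | hz | hz | hz
    · rw [hz, tv] at h; first | exact hz | exact absurd h (by decide)
    · rw [hz, tx] at h; first | exact hz | exact absurd h (by decide)
    · rw [hz, tb] at h; first | exact hz | exact absurd h (by decide)
    · rw [hz, ta] at h; first | exact hz | exact absurd h (by decide)
    · rw [hz, ty] at h; first | exact hz | exact absurd h (by decide)
    · rw [hz.1] at h; exact absurd h (by decide)
    · rw [hz.1] at h; exact absurd h (by decide)
    · rw [hz] at h; exact absurd h (by decide)
  · intro z
    refine ⟨fun h => ?_, fun h => h ▸ ta⟩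
    rcases cl z with hz | hz | hz | hz | hz | hz | hz | hz
    · rw [hz, tv] at h; first | exact hz | exact absurd h (by decide)
    · rw [hz, tx] at h; first | exact hz | exact absurd h (by decide)
    · rw [hz, tb] at h; first | exact hz | exact absurd h (by decide)
    · rw [hz, ta] at h; first | exact hz | exact absurd h (by decide)
    · rw [hz, ty] at h; first | exact hz | exact absurd h (by decide)
    · rw [hz.1] at h; exact absurd h (by decide)
    · rw [hz.1] at h; exact absurd h (by decide)
    · rw [hz] at h; exact absurd h (by decide)
  · intro z
    refine ⟨fun h => ?_, fun h => h ▸ ty⟩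
    rcases cl z with hz | hz | hz | hz | hz | hz | hz | hz
    · rw [hz, tv] at h; first | exact hz | exact absurd h (by decide)
    · rw [hz, tx] at h; first | exact hz | exact absurd h (by decide)
    · rw [hz, tb] at h; first | exact hz | exact absurd h (by decide)
    · rw [hz, ta] at h; first | exact hz | exact absurd h (by decide)
    · rw [hz, ty] at h; first | exact hz | exact absurd h (by decide)
    · rw [hz.1] at h; exact absurd h (by decide)
    · rw [hz.1] at h; exact absurd h (by decide)
    · rw [hz] at h; exact absurd h (by decide)
  · intro z h
    rcases cl z with hz | hz | hz | hz | hz | hz | hz | hz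
    · rw [hz, tv] at h; exact absurd h (by decide)
    · rw [hz, tx] at h; exact absurd h (by decide)
    · rw [hz, tb] at h; exact absurd h (by decide)
    · rw [hz, ta] at h; exact absurd h (by decide)
    · rw [hz, ty] at h; exact absurd h (by decide)
    · first | exact hz.2 | (rw [hz.1] at h; exact absurd h (by decide))
    · first | exact hz.2 | (rw [hz.1] at h; exact absurd h (by decide))
    · rw [hz] at h; exact absurd h (by decide)
  · intro z h
    rcases cl z with hz | hz | hz | hz | hz | hz | hz | hz
    · rw [hz, tv] at h; exact absurd h (by decide)
    · rw [hz, tx] at h; exact absurd h (by decide)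
    · rw [hz, tb] at h; exact absurd h (by decide)
    · rw [hz, ta] at h; exact absurd h (by decide)
    · rw [hz, ty] at h; exact absurd h (by decide)
    · first | exact hz.2 | (rw [hz.1] at h; exact absurd h (by decide))
    · first | exact hz.2 | (rw [hz.1] at h; exact absurd h (by decide))
    · rw [hz] at h; exact absurd h (by decide)
  · intro p q hpq hp hq
    have h0 := S.prop p q hpq
    by_cases pv : φ p = n
    · have := S.uniq p pv
      subst this
      exact edv q hpq hq
    by_cases qv : φ q = n
    · have := S.uniq q qv
      subst this
      exact bkE_symm _ _ (edv p hpq.symm hp)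
    rcases hp with hp | hp | hp
    · exact edij p q hpq hp (by omega)
    · exact bkE_symm _ _ (edij q p hpq.symm (by omega) hp)
    · exact absurd hp pv

set_option maxHeartbeats 1000000 in
theorem BKSt.caseA (H : BKCrit G n) (S : BKSt G n v φ) {x y : V}
    (hx : BKUq G v φ x) (hy : BKUq G v φ y) (hxy : x ≠ y) (hna : ¬ G.Adj x y)
    (hd : ¬ BKDbl G φ x (φ y)) (hd' : ¬ BKDbl G φ y (φ x)) : False := by
  classical
  obtain ⟨a, b, τ, C⟩ := S.setupA H hx hy hxy hna hd hd'
  set i := φ x with hi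
  set j := φ y with hj
  obtain ⟨c, hc⟩ : ∃ c : Fin 5 → V, c = ![v, x, b, a, y] := ⟨_, rfl⟩
  have c0 : c 0 = v := by rw [hc]; rfl
  have c1 : c 1 = x := by rw [hc]; rfl
  have c2 : c 2 = b := by rw [hc]; rfl
  have c3 : c 3 = a := by rw [hc]; rfl
  have c4 : c 4 = y := by rw [hc]; rfl
  have tc : ∀ k : Fin 5, ∀ z, τ z = bkI k ↔ z = c k := by
    intro k z
    fin_cases k
    · exact (C.tv z).trans (by rw [← c0]; rfl)
    · exact (C.tx z).trans (by rw [← c1]; rfl)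
    · exact (C.tb z).trans (by rw [← c2]; rfl)
    · exact (C.ta z).trans (by rw [← c3]; rfl)
    · exact (C.ty z).trans (by rw [← c4]; rfl)
  have tcc : ∀ k : Fin 5, τ (c k) = bkI k := fun k => (tc k _).2 rfl
  have mc : ∀ k : Fin 5, φ (c k) = i ∨ φ (c k) = j ∨ φ (c k) = n := by
    intro k
    fin_cases k
    · right; right; exact (congrArg φ c0).trans C.fv
    · left; exact (congrArg φ c1).trans C.fx
    · right; left; exact (congrArg φ c2).trans C.fb
    · left; exact (congrArg φ c3).trans C.fa
    · right; left; exact (congrArg φ c4).trans C.fy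
  have adjc : ∀ k : Fin 5, G.Adj (c k) (c (k + 1)) := by
    intro k
    fin_cases k
    · have := C.vx; rw [← c0, ← c1] at this; exact this
    · have := C.xb; rw [← c1, ← c2] at this; exact this
    · have := C.ba; rw [← c2, ← c3] at this; exact this
    · have := C.ay; rw [← c3, ← c4] at this; exact this
    · have := C.yv; rw [← c4, ← c0] at this; exact this
  have nadj : ∀ p q, (φ p = i ∨ φ p = j ∨ φ p = n) → (φ q = i ∨ φ q = j ∨ φ q = n) →
      bkE (τ p) (τ q) = false → ¬ G.Adj p q := by
    intro p q hp hq h h'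
    rw [C.ed p q h' hp hq] at h
    exact absurd h (by decide)
  have good : ∀ (k : Fin 5) (L : List (Fin 8)),
      (∀ s t, bkE s t = true → s ≠ bkI k → t ≠ bkI k →
        (s ∈ L ↔ ¬ t ∈ L)) → BKGood G n φ i j (c k) (fun z => τ z ∈ L) := by
    intro k L hL p q hpq hp hq hpt hqt
    exact hL _ _ (C.ed p q hpq hp hq) (fun h => hpt ((tc k p).1 h)) (fun h => hqt ((tc k q).1 h))
  have good0 : ∀ k : Fin 5, ∃ J, BKGood G n φ i j (c k) J := by
    intro k
    fin_cases k
    · exact ⟨_, good 0 [1, 3, 5] (by decide)⟩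
    · exact ⟨_, good 1 [2, 4, 6] (by decide)⟩
    · exact ⟨_, good 2 [3, 0, 5] (by decide)⟩
    · exact ⟨_, good 3 [4, 1, 5] (by decide)⟩
    · exact ⟨_, good 4 [0, 2, 6] (by decide)⟩
  -- choice of `l`
  obtain ⟨l, hl, hli, hlj, hld⟩ : ∃ l, l < n ∧ l ≠ i ∧ l ≠ j ∧ ∀ k : Fin 5, ¬ BKDbl G φ (c k) l := by
    by_contra hno
    push Not at hno
    have hch : ∀ l : ℕ, ∃ k : Fin 5, l ∈ (Finset.range n \ {i, j}) → BKDbl G φ (c k) l := by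
      intro l
      by_cases h : l ∈ Finset.range n \ {i, j}
      · simp only [Finset.mem_sdiff, Finset.mem_range, Finset.mem_insert, Finset.mem_singleton,
          not_or] at h
        obtain ⟨k, hk⟩ := hno l h.1 h.2.1 h.2.2
        exact ⟨k, fun _ => hk⟩
      · exact ⟨0, fun h' => absurd h' h⟩
    choose g hg using hch
    have hcard : 6 ≤ (Finset.range n \ {i, j}).card := by
      have h1 := Finset.le_card_sdiff {i, j} (Finset.range n)
      have h2 : ({i, j} : Finset ℕ).card ≤ 2 := Finset.card_le_two
      have h3 := H.hn
      rw [Finset.card_range] at h1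
      omega
    obtain ⟨l, hl, l', hl', hne, he⟩ := Finset.exists_ne_map_eq_of_card_lt_of_maps_to
      (s := Finset.range n \ {i, j}) (t := (Finset.univ : Finset (Fin 5))) (f := g)
      (by simp only [Finset.card_univ, Fintype.card_fin]; omega) (fun _ _ => Finset.mem_coe.2 (Finset.mem_univ _))
    have d1 := hg l hl
    have d2 := hg l' hl'
    rw [← he] at d2
    simp only [Finset.mem_sdiff, Finset.mem_range, Finset.mem_insert, Finset.mem_singleton,
          not_or] at hl hl'
    obtain ⟨J, hJ⟩ := good0 (g l)
    exact hne (S.recol_dbl H C.hi C.hj C.hij (mc _) hJ hl.1 hl.2.1 hl.2.2 hl'.1 hl'.2.1 hl'.2.2 d1 d2)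
  have hP : ∀ k : Fin 5, ∃ p, G.Adj (c k) p ∧ φ p = l := by
    intro k
    obtain ⟨J, hJ⟩ := good0 k
    exact S.recol_see H C.hi C.hj C.hij (mc _) hJ hl hli hlj
  choose P hPa hPl using hP
  have hu : ∀ k q, G.Adj (c k) q → φ q = l → q = P k := by
    intro k q h1 h2
    by_contra hne
    exact hld k ⟨q, P k, hne, h1, hPa k, h2, hPl k⟩
  have e : ∀ k s, G.Adj (P k) (c s) → P k = P s := fun k s h => hu s _ h.symm (hPl k)
  have e' : ∀ k s, P k = P s → G.Adj (P k) (c s) := fun k s h => h ▸ (hPa s).symm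
  have rule : ∀ k, P k = P (k + 2) ∨ P k = P (k + 2 + 1) := by
    intro k
    rcases H.free (c k) (P k) (c (k + 2)) (c (k + 2 + 1)) (hPa k) (adjc (k + 2)) with h | h | h | h
    · exact absurd h (nadj _ _ (mc _) (mc _) (by rw [tcc, tcc]; exact (bkI_far k).1))
    · exact absurd h (nadj _ _ (mc _) (mc _) (by rw [tcc, tcc]; exact (bkI_far k).2))
    · exact Or.inl (e _ _ h)
    · exact Or.inr (e _ _ h)
  have key : ∀ (k : Fin 5) (L : List (Fin 8)),
      (∀ s t, bkE s t = true → s ≠ bkI k → t ≠ bkI k →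
        (s ∈ L ↔ ¬ t ∈ L)) → ∃ z, G.Adj (P k) z ∧ z ≠ c k ∧ τ z ∈ L := by
    intro k L hL
    exact S.recol_J H C.hi C.hj C.hij (mc k) (good k L hL) (by rw [hPl]; exact hl)
      (by rw [hPl]; exact hli) (by rw [hPl]; exact hlj) (hPa k) (fun q h1 h2 => hu k q h1 (h2.trans (hPl k)))
  have four : ∀ (k : Fin 5) (A : Finset V), (∀ z ∈ A, G.Adj (P k) z ∧
      (φ z = i ∨ φ z = j ∨ φ z = n)) → A.card ≤ 4 := by
    intro k A hA
    obtain ⟨J, hJ⟩ := good0 k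
    exact S.recol_four H C.hi C.hj C.hij (mc k) hJ (by rw [hPl]; exact hl)
      (by rw [hPl]; exact hli) (by rw [hPl]; exact hlj) (hPa k)
      (fun q h1 h2 => hu k q h1 (h2.trans (hPl k))) A hA
  have m5 : ∀ z, τ z = 5 → (φ z = i ∨ φ z = j ∨ φ z = n) := fun z h => Or.inl (C.t5 z h)
  have m6 : ∀ z, τ z = 6 → (φ z = i ∨ φ z = j ∨ φ z = n) := fun z h => Or.inr (Or.inl (C.t6 z h))
  -- five neighbours with distinct types
  have five : ∀ (k : Fin 5) (z : Fin 5 → V), (∀ s, G.Adj (P k) (z s)) →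
      (∀ s, φ (z s) = i ∨ φ (z s) = j ∨ φ (z s) = n) → Function.Injective z → False := by
    intro k z h1 h2 h3
    have := four k (Finset.univ.image z) (by
      intro w hw
      obtain ⟨s, _, rfl⟩ := Finset.mem_image.1 hw
      exact ⟨h1 s, h2 s⟩)
    rw [Finset.card_image_of_injective _ h3] at this
    simp at this
  -- three cycle vertices and one vertex of each of the two other types
  have fiv : ∀ (k s1 s2 s3 : Fin 5) (a' b' : V), s1 ≠ s2 → s1 ≠ s3 → s2 ≠ s3 → P k = P s1 →
      P k = P s2 → P k = P s3 → τ a' = 5 → τ b' = 6 → G.Adj (P k) a' → G.Adj (P k) b' → False := by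
    intro k s1 s2 s3 a' b' h12 h13 h23 h1 h2 h3 ha hb ha' hb'
    have hinj : Function.Injective (fun t => τ (![c s1, c s2, c s3, a', b'] t)) := by
      have : (fun t => τ (![c s1, c s2, c s3, a', b'] t)) =
          ![bkI s1, bkI s2, bkI s3, 5, 6] := by
        funext t
        fin_cases t
        · exact tcc s1
        · exact tcc s2
        · exact tcc s3
        · exact ha
        · exact hb
      rw [this]
      exact bkI_five s1 s2 s3 h12 h13 h23
    refine five k ![c s1, c s2, c s3, a', b'] ?_ ?_ (Function.Injective.of_comp (f := τ) hinj)
    · intro t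
      fin_cases t
      · exact e' _ _ h1
      · exact e' _ _ h2
      · exact e' _ _ h3
      · exact ha'
      · exact hb'
    · intro t
      fin_cases t
      · exact mc _
      · exact mc _
      · exact mc _
      · exact m5 _ ha
      · exact m6 _ hb
  have all5 : ¬ (P 0 = P 1 ∧ P 0 = P 2 ∧ P 0 = P 3 ∧ P 0 = P 4) := by
    rintro ⟨h1, h2, h3, h4⟩
    refine five 0 c ?_ mc ?_
    · intro s
      apply e'
      fin_cases s
      · rfl
      · exact h1
      · exact h2
      · exact h3
      · exact h4
    · intro s t hst
      have := (tcc s).symm.trans ((congrArg τ hst).trans (tcc t))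
      exact bkI_inj this
  have key2 : ∀ (k s1 s2 : Fin 5) (w : Fin 8),
      (∀ s t, bkE s t = true → s ≠ bkI k → t ≠ bkI k →
        (s ∈ [bkI s1, bkI s2, w] ↔
          ¬ t ∈ [bkI s1, bkI s2, w])) →
      P k ≠ P s1 → P k ≠ P s2 → ∃ z, G.Adj (P k) z ∧ τ z = w := by
    intro k s1 s2 w h h1 h2
    obtain ⟨z, hz, _, hL⟩ := key k _ h
    simp only [List.mem_cons, List.not_mem_nil, or_false] at hL
    rcases hL with hL | hL | hL
    · rw [tc] at hL; subst hL; exact absurd (e _ _ hz) h1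
    · rw [tc] at hL; subst hL; exact absurd (e _ _ hz) h2
    · exact ⟨z, hz, hL⟩
  have nP : ∀ k s, ¬ G.Adj (P k) (P s) := fun k s h => S.prop _ _ h ((hPl k).trans (hPl s).symm)
  -- final 2K2: q ~ z, p ~ c s
  have fin2 : ∀ (p q s : Fin 5) (z : V), P p = P s → P q ≠ P s → G.Adj (P q) z → ¬ G.Adj (P p) z →
      (φ z = i ∨ φ z = j ∨ φ z = n) → bkE (bkI s) (τ z) = false → False := by
    intro p q s z h1 h2 h3 h4 h5 h6
    rcases H.free (P p) (c s) (P q) z (e' _ _ h1) h3 with h | h | h | h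
    · exact nP _ _ h
    · exact h4 h
    · exact h2 (e _ _ h.symm)
    · exact nadj _ _ (mc s) h5 (by rw [tcc]; exact h6) h
  have r0 : P 0 = P 2 ∨ P 0 = P 3 := rule 0
  have r1 : P 1 = P 3 ∨ P 1 = P 4 := rule 1
  have r2 : P 2 = P 4 ∨ P 2 = P 0 := rule 2
  have r3 : P 3 = P 0 ∨ P 3 = P 1 := rule 3
  have r4 : P 4 = P 1 ∨ P 4 = P 2 := rule 4
  have cases5 : (P 1 = P 4 ∧ P 0 = P 2 ∧ P 0 = P 3 ∧ P 0 ≠ P 1) ∨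
      (P 2 = P 4 ∧ P 0 = P 1 ∧ P 0 = P 3 ∧ P 0 ≠ P 2) ∨
      (P 2 = P 0 ∧ P 1 = P 3 ∧ P 1 = P 4 ∧ P 1 ≠ P 0) ∨
      (P 3 = P 1 ∧ P 0 = P 2 ∧ P 0 = P 4 ∧ P 0 ≠ P 1) ∨
      (P 3 = P 0 ∧ P 1 = P 2 ∧ P 1 = P 4 ∧ P 1 ≠ P 0) := by
    clear * - r0 r1 r2 r3 r4 all5
    grind
  rcases cases5 with ⟨h1, h2, h3, h4⟩ | ⟨h1, h2, h3, h4⟩ | ⟨h1, h2, h3, h4⟩ | ⟨h1, h2, h3, h4⟩ |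
    ⟨h1, h2, h3, h4⟩
  · obtain ⟨b', hb, tb⟩ := key2 2 4 1 6 (by decide) (by grind) (by grind)
    obtain ⟨a', ha, ta⟩ := key2 3 4 1 5 (by decide) (by grind) (by grind)
    rw [← h2] at hb
    rw [← h3] at ha
    exact fiv 0 0 2 3 a' b' (by decide) (by decide) (by decide) rfl h2 h3 ta tb ha hb
  · obtain ⟨a', ha, ta⟩ := key2 2 3 0 5 (by decide) (by grind) (by grind)
    obtain ⟨b', hb, tb⟩ := key2 0 2 4 6 (by decide) (by grind) (by grind)
    refine fin2 0 2 0 a' rfl h4.symm ha ?_ (m5 _ ta) (by rw [ta]; decide)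
    intro ha'
    exact fiv 0 0 1 3 a' b' (by decide) (by decide) (by decide) rfl h2 h3 ta tb ha' hb
  · obtain ⟨a', ha, ta⟩ := key2 0 1 3 5 (by decide) (by grind) (by grind)
    obtain ⟨b', hb, tb⟩ := key2 3 0 2 6 (by decide) (by grind) (by grind)
    rw [← h2] at hb
    refine fin2 1 0 4 a' h3 (by grind) ha ?_ (m5 _ ta) (by rw [ta]; decide)
    intro ha'
    exact fiv 1 1 3 4 a' b' (by decide) (by decide) (by decide) rfl h2 h3 ta tb ha' hb
  · obtain ⟨b', hb, tb⟩ := key2 3 0 2 6 (by decide) (by grind) (by grind)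
    obtain ⟨a', ha, ta⟩ := key2 0 1 3 5 (by decide) (by grind) (by grind)
    refine fin2 0 3 0 b' rfl (by grind) hb ?_ (m6 _ tb) (by rw [tb]; decide)
    intro hb'
    exact fiv 0 0 2 4 a' b' (by decide) (by decide) (by decide) rfl h2 h3 ta tb ha hb'
  · obtain ⟨b', hb, tb⟩ := key2 0 2 4 6 (by decide) (by grind) (by grind)
    obtain ⟨a', ha, ta⟩ := key2 2 3 0 5 (by decide) (by grind) (by grind)
    rw [← h2] at ha
    refine fin2 1 0 1 b' rfl h4.symm hb ?_ (m6 _ tb) (by rw [tb]; decide)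
    intro hb'
    exact fiv 1 1 2 4 a' b' (by decide) (by decide) (by decide) rfl h2 h3 ta tb ha hb'

theorem BKSt.clique [Fintype V] (H : BKCrit G n) (hcrit : ∀ w, ∃ ψ, BKSt G n w ψ)
    (S : BKSt G n v φ) {x y : V}
    (hx : BKUq G v φ x) (hy : BKUq G v φ y) (hxy : x ≠ y) : G.Adj x y := by
  refine S.caseB H hcrit ?_ hx hy hxy
  intro x y hx hy hxy hna
  by_contra h
  push Not at h
  exact S.caseA H hx hy hxy hna h.1 h.2

end

section
variable {V : Type*} {G : SimpleGraph V} {n : ℕ} {v : V} {φ : V → ℕ}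

/-- The clique formed by `v` and its uniquely coloured neighbours; `d` is the missing colour. -/
structure BKK (G : SimpleGraph V) (n : ℕ) (v : V) (φ : V → ℕ) (d : ℕ) (K : Finset V) : Prop where
  hd : d < n
  vK : v ∈ K
  cl : ∀ x ∈ K, ∀ y ∈ K, x ≠ y → G.Adj x y
  card : K.card = n
  cne : ∀ x ∈ K, φ x ≠ d
  inj : ∀ x ∈ K, ∀ y ∈ K, φ x = φ y → x = y
  uq : ∀ x ∈ K, x ≠ v → BKUq G v φ x
  see : ∀ x ∈ K, ∃ w, G.Adj x w ∧ φ w = d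
  out : ∀ x ∈ K, ∀ a b c, a ∉ K → b ∉ K → c ∉ K → G.Adj x a → G.Adj x b → G.Adj x c →
    a ≠ b → a ≠ c → b ≠ c → False
  vout : ∀ u, u ∉ K → G.Adj v u → φ u = d

theorem BKSt.setupC [Fintype V] (H : BKCrit G n) (S : BKSt G n v φ)
    (hcl : ∀ x y, BKUq G v φ x → BKUq G v φ y → x ≠ y → G.Adj x y) :
    ∃ d K, BKK G n v φ d K := by
  classical
  obtain ⟨X, hX, hXc⟩ := S.card_uq H
  have hvX : v ∉ X := fun h => G.ne_of_adj ((hX v).1 h).1 rfl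
  have cl : ∀ x ∈ insert v X, ∀ y ∈ insert v X, x ≠ y → G.Adj x y := by
    intro x hx y hy hxy
    rcases Finset.mem_insert.1 hx with rfl | hx2
    · rcases Finset.mem_insert.1 hy with rfl | hy
      · exact absurd rfl hxy
      · exact ((hX y).1 hy).1
    · rcases Finset.mem_insert.1 hy with rfl | hy
      · exact ((hX x).1 hx2).1.symm
      · exact hcl x y ((hX x).1 hx2) ((hX y).1 hy) hxy
  have h1 := H.cliq (insert v X) cl
  have hKc : (insert v X).card = n := by
    rw [Finset.card_insert_of_notMem hvX] at h1 ⊢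
    omega
  have inj : ∀ x ∈ insert v X, ∀ y ∈ insert v X, φ x = φ y → x = y := by
    intro x hx y hy h
    by_contra hne
    exact S.prop x y (cl x hx y hy hne) h
  obtain ⟨d, hd, hdX⟩ : ∃ d, d < n ∧ d ∉ X.image φ := by
    by_contra hno
    push Not at hno
    have : Finset.range n ⊆ X.image φ := fun c hc => hno c (Finset.mem_range.1 hc)
    have h2 := Finset.card_le_card this
    have h3 := Finset.card_image_le (s := X) (f := φ)
    rw [Finset.card_range] at h2
    rw [Finset.card_insert_of_notMem hvX] at hKc
    omega
  have cne : ∀ x ∈ insert v X, φ x ≠ d := by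
    intro x hx h
    rcases Finset.mem_insert.1 hx with rfl | hx
    · rw [S.top] at h; omega
    · exact hdX (Finset.mem_image.2 ⟨x, hx, h⟩)
  have uq : ∀ x ∈ insert v X, x ≠ v → BKUq G v φ x := by
    intro x hx hne
    rcases Finset.mem_insert.1 hx with rfl | hx
    · exact absurd rfl hne
    · exact (hX x).1 hx
  have out : ∀ x ∈ insert v X, ∀ a b c, a ∉ insert v X → b ∉ insert v X → c ∉ insert v X →
      G.Adj x a → G.Adj x b → G.Adj x c → a ≠ b → a ≠ c → b ≠ c → False := by
    intro x hx a b c ha hb hc xa xb xc hab hac hbc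
    have h3 : ({a, b, c} : Finset V).card = 3 :=
      Finset.card_eq_three.2 ⟨a, b, c, hab, hac, hbc, rfl⟩
    have hdis : Disjoint ((insert v X).erase x) {a, b, c} := by
      rw [Finset.disjoint_right]
      intro z hz hz'
      have hz' := Finset.mem_of_mem_erase hz'
      simp only [Finset.mem_insert (a := z) (b := a), Finset.mem_insert (a := z) (b := b),
        Finset.mem_singleton] at hz
      rcases hz with rfl | rfl | rfl
      · exact ha hz'
      · exact hb hz'
      · exact hc hz'
    have h4 := H.deg x ((insert v X).erase x ∪ {a, b, c}) (by
      intro z hz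
      rcases Finset.mem_union.1 hz with hz | hz
      · rw [Finset.mem_erase] at hz
        exact cl x hx z hz.2 hz.1.symm
      · simp only [Finset.mem_insert, Finset.mem_singleton] at hz
        rcases hz with rfl | rfl | rfl <;> assumption)
    have h5 := H.hn
    rw [Finset.card_union_of_disjoint hdis, Finset.card_erase_of_mem hx, h3, hKc] at h4
    omega
  refine ⟨d, insert v X, hd, Finset.mem_insert_self _ _, cl, hKc, cne, inj, uq, ?_, out, ?_⟩
  · intro x hx
    by_cases h : x = v
    · rw [h]; exact S.see H hd
    · exact S.see' H (uq x hx h) hd (cne x hx).symm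
  · intro u hu hvu
    obtain ⟨w, hw, hwd⟩ := S.see H hd
    have hwK : w ∉ insert v X := fun h => cne w h hwd
    have : ¬ BKUq G v φ w := fun h => hwK (Finset.mem_insert_of_mem ((hX w).2 h))
    have : ∃ w', G.Adj v w' ∧ φ w' = φ w ∧ w' ≠ w := by
      by_contra hno
      push Not at hno
      exact this ⟨hw, hno⟩
    obtain ⟨w', h1, h2, h3⟩ := this
    have hwK' : w' ∉ insert v X := fun h => cne w' h (h2.trans hwd)
    by_contra hne
    refine out v (Finset.mem_insert_self _ _) u w w' hu hwK hwK' hvu hw h1 ?_ ?_ h3.symm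
    · rintro rfl; exact hne hwd
    · rintro rfl; exact hne (h2.trans hwd)

/-- Analysis of a vertex of the clique with exactly one neighbour of colour `d`. -/
theorem BKSt.mixed (H : BKCrit G n) (S : BKSt G n v φ)
    (hcl : ∀ w ψ, BKSt G n w ψ → ∀ x y, BKUq G w ψ x → BKUq G w ψ y → x ≠ y → G.Adj x y)
    {d : ℕ} {K : Finset V} (hK : BKK G n v φ d K) {κ w : V} (hκ : κ ∈ K) (hκv : κ ≠ v)
    (hw : G.Adj κ w) (hwd : φ w = d) (hu : ∀ z, G.Adj κ z → φ z = d → z = w) :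
    ∃ m ∈ K, m ≠ κ ∧ m ≠ v ∧ ¬ G.Adj m w ∧ ∀ m2 ∈ K, m2 ≠ m → G.Adj m2 w := by
  classical
  have hdn := hK.hd
  have uκ := hK.uq κ hκ hκv
  have hwK : w ∉ K := fun h => hK.cne w h hwd
  have hwκ := (G.ne_of_adj hw).symm
  have hwv : w ≠ v := by rintro rfl; exact hwK hK.vK
  have S' := S.shift uκ
  set ψ : V → ℕ := fun z => if z = κ then n else if z = v then φ κ else φ z with hψ
  have ψo : ∀ z, z ≠ κ → z ≠ v → ψ z = φ z := by intro z h1 h2; simp [hψ, h1, h2]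
  have ψv : ψ v = φ κ := by simp [hψ, hκv.symm]
  have uw : BKUq G κ ψ w := by
    refine ⟨hw, fun z hz h => ?_⟩
    rw [ψo w hwκ hwv, hwd] at h
    have h1 := (G.ne_of_adj hz).symm
    by_cases h2 : z = v
    · rw [h2, ψv] at h; exact absurd h (hK.cne κ hκ)
    · rw [ψo z h1 h2] at h; exact hu z hz h
  have dbl : ∀ m ∈ K, m ≠ κ → ¬ G.Adj m w →
      m ≠ v ∧ ∃ m', m' ∉ K ∧ G.Adj κ m' ∧ φ m' = φ m := by
    intro m hm hmκ hmw
    have h1 : ¬ BKUq G κ ψ m := fun h =>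
      hmw (hcl κ ψ S' m w h uw (by rintro rfl; exact hwK hm))
    have : ∃ m', G.Adj κ m' ∧ ψ m' = ψ m ∧ m' ≠ m := by
      by_contra hno
      push Not at hno
      exact h1 ⟨hK.cl κ hκ m hm hmκ.symm, hno⟩
    obtain ⟨m', h2, h3, h4⟩ := this
    have h5 := (G.ne_of_adj h2).symm
    have hmv : m ≠ v := by
      rintro rfl
      rw [ψv, ψo m' h5 h4] at h3
      exact S.prop _ _ h2 h3.symm
    have hmv' : m' ≠ v := by
      rintro rfl
      rw [ψv, ψo m hmκ hmv] at h3
      exact hmκ (hK.inj κ hκ m hm h3).symm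
    rw [ψo m' h5 hmv', ψo m hmκ hmv] at h3
    exact ⟨hmv, m', fun h => h4 (hK.inj m' h m hm h3), h2, h3⟩
  obtain ⟨m, hm, hmw⟩ : ∃ m ∈ K, ¬ G.Adj m w := by
    by_contra hno
    push Not at hno
    have h := H.cliq (insert w K) (by
      intro x hx y hy hxy
      rcases Finset.mem_insert.1 hx with rfl | hx2
      · rcases Finset.mem_insert.1 hy with rfl | hy
        · exact absurd rfl hxy
        · exact (hno y hy).symm
      · rcases Finset.mem_insert.1 hy with rfl | hy
        · exact hno x hx2
        · exact hK.cl x hx2 y hy hxy)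
    rw [Finset.card_insert_of_notMem hwK, hK.card] at h
    omega
  have hmκ : m ≠ κ := by rintro rfl; exact hmw hw
  obtain ⟨hmv, m', h1, h2, h3⟩ := dbl m hm hmκ hmw
  refine ⟨m, hm, hmκ, hmv, hmw, ?_⟩
  intro m2 hm2 hne
  by_contra hno
  have hmκ2 : m2 ≠ κ := by rintro rfl; exact hno hw
  obtain ⟨_, m2', k1, k2, k3⟩ := dbl m2 hm2 hmκ2 hno
  refine hK.out κ hκ w m' m2' hwK h1 k1 hw h2 k2 ?_ ?_ ?_
  · rintro rfl; exact hK.cne m hm (h3.symm.trans hwd)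
  · rintro rfl; exact hK.cne m2 hm2 (k3.symm.trans hwd)
  · rintro rfl; exact hne (hK.inj m2 hm2 m hm (k3.symm.trans h3))

theorem BKK.pick (H : BKCrit G n) {d : ℕ} {K : Finset V} (hK : BKK G n v φ d K) (T : Finset V)
    (hT : T.card ≤ 6) : ∃ z ∈ K, z ∉ T := by
  classical
  by_contra hno
  push Not at hno
  have h1 := Finset.card_le_card (fun z hz => hno z hz : K ⊆ T)
  have h2 := H.hn
  rw [hK.card] at h1
  omega

theorem BKSt.caseC [Fintype V] (H : BKCrit G n) (S : BKSt G n v φ)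
    (hcl : ∀ w ψ, BKSt G n w ψ → ∀ x y, BKUq G w ψ x → BKUq G w ψ y → x ≠ y → G.Adj x y) :
    False := by
  classical
  obtain ⟨d, K, hK⟩ := S.setupC H (hcl v φ S)
  have hdn := hK.hd
  -- a neighbour outside of colour other than `d` makes the vertex mixed
  have mix : ∀ κ ∈ K, ∀ u, u ∉ K → φ u ≠ d → G.Adj κ u →
      κ ≠ v ∧ ∃ w, G.Adj κ w ∧ φ w = d ∧ ∀ z, G.Adj κ z → φ z = d → z = w := by
    intro κ hκ u hu hud hκu
    refine ⟨by rintro rfl; exact hud (hK.vout u hu hκu), ?_⟩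
    obtain ⟨w, hw, hwd⟩ := hK.see κ hκ
    refine ⟨w, hw, hwd, fun z hz hzd => ?_⟩
    by_contra hne
    refine hK.out κ hκ z w u (fun h => hK.cne z h hzd) (fun h => hK.cne w h hwd) hu hz hw hκu hne ?_ ?_
    · rintro rfl; exact hud hzd
    · rintro rfl; exact hud hwd
  have cov : ∀ p q, G.Adj p q → ∀ κ1 ∈ K, ∀ κ2 ∈ K, κ1 ≠ κ2 →
      (G.Adj κ1 p ∨ G.Adj κ1 q) ∨ (G.Adj κ2 p ∨ G.Adj κ2 q) := by
    intro p q hpq κ1 h1 κ2 h2 hne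
    rcases H.free κ1 κ2 p q (hK.cl κ1 h1 κ2 h2 hne) hpq with h | h | h | h <;> tauto
  have hTcard : ((Finset.range (n + 1)).erase d).card ≤ n := by
    rw [Finset.card_erase_of_mem (Finset.mem_range.2 (by omega)), Finset.card_range]
    omega
  have memT : ∀ x ∈ K, φ x ∈ (Finset.range (n + 1)).erase d := by
    intro x hx
    have := S.le x
    exact Finset.mem_erase.2 ⟨hK.cne x hx, Finset.mem_range.2 (by omega)⟩
  by_cases hmix : ∃ κ ∈ K, κ ≠ v ∧ ∃ w, G.Adj κ w ∧ φ w = d ∧ ∀ z, G.Adj κ z → φ z = d → z = w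
  · obtain ⟨x0, hx0, hx0v, y, hxy, hyd, hyu⟩ := hmix
    obtain ⟨m0, hm0, hmx, hmv, hmy, hmo⟩ := S.mixed H hcl hK hx0 hx0v hxy hyd hyu
    have Qind : ∀ p q, p ∉ K → φ p ≠ d → q ∉ K → φ q ≠ d → ¬ G.Adj p q := by
      intro p q hp hpd hq hqd hpq
      have allmix : ∀ κ ∈ K, κ ≠ v →
          ∃ w, G.Adj κ w ∧ φ w = d ∧ ∀ z, G.Adj κ z → φ z = d → z = w := by
        intro κ hκ hκv
        rcases cov p q hpq κ hκ v hK.vK hκv with (h | h) | (h | h)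
        · exact (mix κ hκ p hp hpd h).2
        · exact (mix κ hκ q hq hqd h).2
        · exact absurd (hK.vout p hp h) hpd
        · exact absurd (hK.vout q hq h) hqd
      obtain ⟨w', hw', hwd', hwu'⟩ := allmix m0 hm0 hmv
      obtain ⟨m1, hm1, _, _, _, hmo1⟩ := S.mixed H hcl hK hm0 hmv hw' hwd' hwu'
      obtain ⟨κ, hκ, hκT⟩ := hK.pick H {v, m0, m1} (Finset.card_le_three.trans (by omega))
      simp only [Finset.mem_insert, Finset.mem_singleton, not_or] at hκT
      obtain ⟨w, hw, hwd, hwu⟩ := allmix κ hκ hκT.1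
      have e1 := hwu y (hmo κ hκ hκT.2.1) hyd
      have e2 := hwu w' (hmo1 κ hκ hκT.2.2) hwd'
      rw [e2, ← e1] at hw'
      exact hmy hw'
    let f : V → ℕ := fun z => if z ∈ K then φ z else if φ z = d then
      (if z = y then φ m0 else φ x0) else n
    have fK : ∀ z, z ∈ K → f z = φ z := fun z h => by simp [f, h]
    have fy : f y = φ m0 := by
      have : y ∉ K := fun h => hK.cne y h hyd
      simp [f, this, hyd]
    have fd : ∀ z, φ z = d → z ≠ y → f z = φ x0 := by
      intro z h1 h2
      have : z ∉ K := fun h => hK.cne z h h1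
      simp [f, this, h1, h2]
    have fQ : ∀ z, z ∉ K → φ z ≠ d → f z = n := by
      intro z h1 h2
      simp [f, h1, h2]
    have hm0n : φ m0 ≠ n := fun h => hmv (S.uniq _ h)
    have hx0n : φ x0 ≠ n := fun h => hx0v (S.uniq _ h)
    -- one-sided check
    have half : ∀ p q, p ∈ K → G.Adj p q → f p ≠ f q := by
      intro p q hp hpq
      rw [fK p hp]
      by_cases hq : q ∈ K
      · rw [fK q hq]; exact S.prop p q hpq
      by_cases hqd : φ q = d
      · by_cases hqy : q = y
        · subst hqy
          rw [fy]
          intro h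
          have := hK.inj p hp m0 hm0 h
          subst this
          exact hmy hpq
        · rw [fd q hqd hqy]
          intro h
          have := hK.inj p hp x0 hx0 h
          subst this
          exact hqy (hyu q hpq hqd)
      · rw [fQ q hq hqd]
        intro h
        have := S.uniq p h
        subst this
        exact hqd (hK.vout q hq hpq)
    have half2 : ∀ p q, φ p = d → q ∉ K → φ q ≠ d → f p ≠ f q := by
      intro p q hp hq hqd
      rw [fQ q hq hqd]
      by_cases h : p = y
      · rw [h, fy]; exact hm0n
      · rw [fd p hp h]; exact hx0n
    refine H.nocol _ f hTcard ?_ ?_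
    · intro z
      by_cases h1 : z ∈ K
      · rw [fK z h1]; exact memT z h1
      by_cases h2 : φ z = d
      · by_cases h3 : z = y
        · rw [h3, fy]; exact memT m0 hm0
        · rw [fd z h2 h3]; exact memT x0 hx0
      · rw [fQ z h1 h2]
        exact Finset.mem_erase.2 ⟨by omega, Finset.mem_range.2 (by omega)⟩
    · intro p q hpq
      by_cases h1 : p ∈ K
      · exact half p q h1 hpq
      by_cases h2 : q ∈ K
      · exact (half q p h2 hpq.symm).symm
      by_cases h3 : φ p = d
      · by_cases h4 : φ q = d
        · exact absurd (h3.trans h4.symm) (S.prop p q hpq)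
        · exact half2 p q h3 h2 h4
      · by_cases h4 : φ q = d
        · exact (half2 q p h4 h1 h3).symm
        · exact absurd hpq (Qind p q h1 h3 h2 h4)
  · have noQ : ∀ κ ∈ K, ∀ u, u ∉ K → φ u ≠ d → ¬ G.Adj κ u := fun κ hκ u hu hud h =>
      hmix ⟨κ, hκ, mix κ hκ u hu hud h⟩
    have Qind : ∀ p q, p ∉ K → φ p ≠ d → q ∉ K → φ q ≠ d → ¬ G.Adj p q := by
      intro p q hp hpd hq hqd hpq
      obtain ⟨κ, hκ, hκv⟩ := hK.pick H {v} (by simp)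
      rw [Finset.mem_singleton] at hκv
      rcases cov p q hpq κ hκ v hK.vK hκv with (h | h) | (h | h)
      · exact noQ κ hκ p hp hpd h
      · exact noQ κ hκ q hq hqd h
      · exact noQ v hK.vK p hp hpd h
      · exact noQ v hK.vK q hq hqd h
    have nonn : ∀ w, φ w = d → ∃ m ∈ K, ¬ G.Adj m w := by
      intro w hwd
      have hwK : w ∉ K := fun h => hK.cne w h hwd
      by_contra hno
      push Not at hno
      have h := H.cliq (insert w K) (by
        intro x hx y hy hxy
        rcases Finset.mem_insert.1 hx with rfl | hx2
        · rcases Finset.mem_insert.1 hy with rfl | hy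
          · exact absurd rfl hxy
          · exact (hno y hy).symm
        · rcases Finset.mem_insert.1 hy with rfl | hy
          · exact hno x hx2
          · exact hK.cl x hx2 y hy hxy)
      rw [Finset.card_insert_of_notMem hwK, hK.card] at h
      omega
    obtain ⟨κ0, hκ0, hsole⟩ : ∃ κ0 ∈ K, ∀ w, φ w = d → ∃ m ∈ K, m ≠ κ0 ∧ ¬ G.Adj m w := by
      by_contra hno
      push Not at hno
      obtain ⟨k1, hk1, n1⟩ := hK.pick H {v} (by simp)
      obtain ⟨k2, hk2, n2⟩ := hK.pick H {v, k1} (Finset.card_le_two.trans (by omega))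
      obtain ⟨k3, hk3, n3⟩ := hK.pick H {v, k1, k2} (Finset.card_le_three.trans (by omega))
      simp only [Finset.mem_insert, Finset.mem_singleton, not_or] at n1 n2 n3
      obtain ⟨w1, d1, a1⟩ := hno k1 hk1
      obtain ⟨w2, d2, a2⟩ := hno k2 hk2
      obtain ⟨w3, d3, a3⟩ := hno k3 hk3
      have nn : ∀ k ∈ K, ∀ w, φ w = d → (∀ m ∈ K, m ≠ k → G.Adj m w) → ¬ G.Adj k w := by
        intro k hk w hw h h'
        obtain ⟨m, hm, hmw⟩ := nonn w hw
        by_cases e : m = k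
        · rw [e] at hmw; exact hmw h'
        · exact hmw (h m hm e)
      refine S.no_triple H (a1 v hK.vK (Ne.symm n1)) (a2 v hK.vK (Ne.symm n2.1))
        (a3 v hK.vK (Ne.symm n3.1)) ?_ ?_ ?_ (d2.trans d1.symm) (d3.trans d1.symm)
      · rintro rfl; exact nn k2 hk2 _ d2 a2 (a1 k2 hk2 n2.2)
      · rintro rfl; exact nn k3 hk3 _ d3 a3 (a1 k3 hk3 n3.2.1)
      · rintro rfl; exact nn k3 hk3 _ d3 a3 (a2 k3 hk3 n3.2.2)
    have : ∀ w, ∃ m, φ w = d → (m ∈ K ∧ m ≠ κ0 ∧ ¬ G.Adj m w) := by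
      intro w
      by_cases h : φ w = d
      · obtain ⟨m, h1, h2, h3⟩ := hsole w h
        exact ⟨m, fun _ => ⟨h1, h2, h3⟩⟩
      · exact ⟨w, fun h' => absurd h' h⟩
    choose g hg using this
    let f : V → ℕ := fun z => if z ∈ K then φ z else if φ z = d then φ (g z) else φ κ0
    have fK : ∀ z, z ∈ K → f z = φ z := fun z h => by simp [f, h]
    have fd : ∀ z, φ z = d → f z = φ (g z) := by
      intro z h1
      have : z ∉ K := fun h => hK.cne z h h1
      simp [f, this, h1]
    have fQ : ∀ z, z ∉ K → φ z ≠ d → f z = φ κ0 := by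
      intro z h1 h2
      simp [f, h1, h2]
    have half : ∀ p q, p ∈ K → G.Adj p q → f p ≠ f q := by
      intro p q hp hpq
      rw [fK p hp]
      by_cases hq : q ∈ K
      · rw [fK q hq]; exact S.prop p q hpq
      by_cases hqd : φ q = d
      · rw [fd q hqd]
        intro h
        have := hK.inj p hp _ (hg q hqd).1 h
        rw [this] at hpq
        exact (hg q hqd).2.2 hpq
      · exact absurd hpq (noQ p hp q hq hqd)
    have half2 : ∀ p q, φ p = d → q ∉ K → φ q ≠ d → f p ≠ f q := by
      intro p q hp hq hqd
      rw [fQ q hq hqd, fd p hp]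
      exact fun h => (hg p hp).2.1 (hK.inj _ (hg p hp).1 _ hκ0 h)
    refine H.nocol _ f hTcard ?_ ?_
    · intro z
      by_cases h1 : z ∈ K
      · rw [fK z h1]; exact memT z h1
      by_cases h2 : φ z = d
      · rw [fd z h2]; exact memT _ (hg z h2).1
      · rw [fQ z h1 h2]; exact memT _ hκ0
    · intro p q hpq
      by_cases h1 : p ∈ K
      · exact half p q h1 hpq
      by_cases h2 : q ∈ K
      · exact (half q p h2 hpq.symm).symm
      by_cases h3 : φ p = d
      · by_cases h4 : φ q = d
        · exact absurd (h3.trans h4.symm) (S.prop p q hpq)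
        · exact half2 p q h3 h2 h4
      · by_cases h4 : φ q = d
        · exact (half2 q p h4 h1 h3).symm
        · exact absurd hpq (Qind p q h1 h3 h2 h4)

end

theorem bk_main (n : ℕ) (hn : 8 ≤ n) : ∀ (k : ℕ) (V : Type*) [Fintype V] (G : SimpleGraph V),
    Fintype.card V = k →
    (∀ a b c d, G.Adj a b → G.Adj c d → G.Adj a c ∨ G.Adj a d ∨ G.Adj b c ∨ G.Adj b d) →
    (∀ (v : V) (S : Finset V), (∀ x ∈ S, G.Adj v x) → S.card ≤ n + 1) →
    (∀ S : Finset V, (∀ x ∈ S, ∀ y ∈ S, x ≠ y → G.Adj x y) → S.card ≤ n) →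
    G.Colorable n := by
  intro k
  induction k using Nat.strong_induction_on with
  | _ k ih =>
    intro V _ G hk free deg cliq
    classical
    by_contra hcol
    have H : BKCrit G n := by
      refine ⟨hn, free, deg, cliq, ?_⟩
      intro T f hT hf hp
      apply hcol
      have : G.Coloring T := SimpleGraph.Coloring.mk (fun x => (⟨f x, hf x⟩ : T)) (by
        intro a b hab h
        exact hp a b hab (congrArg Subtype.val h))
      have h1 := this.colorable
      rw [Fintype.card_coe] at h1
      exact h1.mono hT
    have hcrit : ∀ w, ∃ ψ, BKSt G n w ψ := by
      intro w
      have h1 : (G.induce {z | z ≠ w}).Colorable n := by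
        refine ih (Fintype.card {z // z ≠ w}) ?_ {z // z ≠ w} _ rfl ?_ ?_ ?_
        · rw [← hk]
          exact Fintype.card_subtype_lt (x := w) (by simp)
        · intro a b c d h1 h2
          exact free a b c d h1 h2
        · intro v S hS
          have := deg v (S.map (Function.Embedding.subtype _)) (by
            intro x hx
            obtain ⟨y, hy, rfl⟩ := Finset.mem_map.1 hx
            exact hS y hy)
          rwa [Finset.card_map] at this
        · intro S hS
          have := cliq (S.map (Function.Embedding.subtype _)) (by
            intro x hx x' hx' hne
            obtain ⟨y, hy, rfl⟩ := Finset.mem_map.1 hx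
            obtain ⟨y', hy', rfl⟩ := Finset.mem_map.1 hx'
            exact hS y hy y' hy' (fun h => hne (congrArg _ h)))
          rwa [Finset.card_map] at this
      obtain ⟨C⟩ := h1
      let ψ : V → ℕ := fun z => if h : z ≠ w then (C ⟨z, h⟩ : Fin n).val else n
      have ψw : ψ w = n := by simp [ψ]
      have ψo : ∀ z (h : z ≠ w), ψ z = (C ⟨z, h⟩ : Fin n).val := by
        intro z h; simp [ψ, h]
      have ψlt : ∀ z, z ≠ w → ψ z < n := by
        intro z h; rw [ψo z h]; exact (C ⟨z, h⟩).isLt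
      refine ⟨ψ, ?_, ?_, ψw, ?_⟩
      · intro x y hxy
        by_cases hx : x = w
        · have hy : y ≠ w := fun h => G.ne_of_adj hxy (hx.trans h.symm)
          have := ψlt y hy
          rw [hx, ψw]
          omega
        · by_cases hy : y = w
          · have := ψlt x hx
            rw [hy, ψw]
            omega
          · rw [ψo x hx, ψo y hy]
            intro h
            exact C.valid (v := ⟨x, hx⟩) (w := ⟨y, hy⟩) hxy (Fin.ext h)
      · intro z
        by_cases h : z = w
        · rw [h, ψw]
        · exact (ψlt z h).le
      · intro z hz
        by_contra h
        have := ψlt z h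
        omega
    by_cases hne : Nonempty V
    · obtain ⟨v⟩ := hne
      obtain ⟨φ, S⟩ := hcrit v
      exact S.caseC H (fun w ψ S' x y hx hy hxy => S'.clique H hcrit hx hy hxy)
    · rw [not_nonempty_iff] at hne
      exact hcol (SimpleGraph.Colorable.of_isEmpty n)

theorem borodin_kostochka_of_twoK2Free
    {V : Type*} [Fintype V] (G : SimpleGraph V) [DecidableRel G.Adj]
    (hfree : TwoK2Free G) (hΔ : 9 ≤ G.maxDegree) :
    G.chromaticNumber ≤ (max G.cliqueNum (G.maxDegree - 1) : ℕ) := by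
  refine SimpleGraph.Colorable.chromaticNumber_le ?_
  refine bk_main _ (by omega) _ V G rfl ?_ ?_ ?_
  · intro a b c d hab hcd
    by_contra hno
    push Not at hno
    obtain ⟨h1, h2, h3, h4⟩ := hno
    refine hfree ⟨a, b, c, d, G.ne_of_adj hab, ?_, ?_, ?_, ?_, G.ne_of_adj hcd, hab, hcd, h1, h2,
      h3, h4⟩
    · rintro rfl; exact h2 hcd
    · rintro rfl; exact h1 hcd.symm
    · rintro rfl; exact h4 hcd
    · rintro rfl; exact h3 hcd.symm
  · intro v S hS
    have h1 : S ⊆ G.neighborFinset v := fun x hx => (G.mem_neighborFinset v x).2 (hS x hx)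
    have h2 := Finset.card_le_card h1
    rw [G.card_neighborFinset_eq_degree] at h2
    have h3 := G.degree_le_maxDegree v
    omega
  · intro S hS
    have h1 : G.IsClique S := fun x hx y hy hne => hS x hx y hy hne
    have h2 := h1.card_le_cliqueNum
    omega
end
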